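/- arXiv:1501.05388 — 4 statements merged into one kernel-verified Lean document; each statement's English description precedes it below -/
import Mathlib

section
/- Let p, q ≥ 1, let A_1,…,A_p, B_1,…,B_q be strictly positive and a_1,…,a_p, b_1,…,b_q be nonnegative reals, set W(x) = ∏_{i=1}^p Γ(A_i x + a_i) / ∏_{j=1}^q Γ(B_j x + b_j), P(u) = Σ_{i=1}^p e^{−a_i u/A_i}/(1 − e^{−u/A_i}) − Σ_{j=1}^q e^{−b_j u/B_j}/(1 − e^{−u/B_j}) for u > 0, and ρ = ∏_{i=1}^p A_i^{A_i} · ∏_{j=1}^q B_j^{−B_j}. Then W is logarithmically completely monotonic on (0,∞) if and only if Σ_{j=1}^q B_j = Σ_{i=1}^p A_i, ρ ≤ 1, and P(u) ≥ 0 for all u > 0. In the affirmative case −(log W)′(x) = ∫_0^∞ e^{−xu} P(u) du + log(1/ρ) for all x > 0. -/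
open MeasureTheory

/-- A function `f` is completely monotonic on `(0,∞)` if it is infinitely
differentiable there and `(-1)^n f^(n)(x) ≥ 0` for all `n ≥ 0` and `x > 0`. -/
def CompletelyMonotonicOn (f : ℝ → ℝ) : Prop :=
  (∀ x > (0 : ℝ), ContDiffAt ℝ (⊤ : ℕ∞) f x) ∧
    ∀ (n : ℕ), ∀ x > (0 : ℝ), 0 ≤ (-1 : ℝ) ^ n * iteratedDeriv n f x

/-- A positive function `f` on `(0,∞)` is logarithmically completely monotonic
if `-(log f)'` is completely monotonic on `(0,∞)`. -/
def LogCompletelyMonotonic (f : ℝ → ℝ) : Prop :=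
  (∀ x > (0 : ℝ), 0 < f x) ∧
    CompletelyMonotonicOn (fun x => -deriv (fun y => Real.log (f y)) x)

namespace WLCM
open Set Filter Topology Real

lemma moment (n : ℕ) {x : ℝ} (hx : 0 < x) :
    ∫ u in Ioi (0:ℝ), u ^ n * exp (-x * u) = n.factorial / x ^ (n + 1) := by
  have h := Real.integral_rpow_mul_exp_neg_mul_Ioi (a := n + 1) (r := x) (by positivity) hx
  have e : ∀ u : ℝ, u ^ n * exp (-x * u) = u ^ ((n:ℝ) + 1 - 1) * exp (-(x * u)) := by
    intro u
    rw [add_sub_cancel_right, rpow_natCast, neg_mul]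
  simp_rw [e]
  rw [h, Real.Gamma_nat_eq_factorial, one_div, inv_rpow hx.le]
  rw [show ((n:ℝ) + 1) = ((n + 1 : ℕ) : ℝ) by push_cast; ring, rpow_natCast]
  field_simp

lemma moment_int (n : ℕ) {x : ℝ} (hx : 0 < x) :
    IntegrableOn (fun u => u ^ n * exp (-x * u)) (Ioi (0:ℝ)) := by
  refine Integrable.of_integral_ne_zero ?_
  rw [moment n hx]
  positivity

/-- Measurable and bounded on `(0,∞)`. -/
def Bdd (P : ℝ → ℝ) : Prop :=
  AEStronglyMeasurable P (volume.restrict (Ioi (0:ℝ))) ∧ ∃ M, ∀ u > 0, |P u| ≤ M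

lemma lap_int {P : ℝ → ℝ} (hP : Bdd P) (n : ℕ) {x : ℝ} (hx : 0 < x) :
    IntegrableOn (fun u => u ^ n * (exp (-x * u) * P u)) (Ioi (0:ℝ)) := by
  obtain ⟨hm, M, hM⟩ := hP
  have h := (moment_int n hx).bdd_mul (c := M) hm (by
    rw [ae_restrict_iff' measurableSet_Ioi]
    exact ae_of_all _ fun u hu => hM u hu)
  refine Integrable.congr h (ae_of_all _ fun u => ?_)
  simp only; ring

lemma lap_deriv {P : ℝ → ℝ} (hP : Bdd P) (n : ℕ) {x : ℝ} (hx : 0 < x) :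
    HasDerivAt (fun x => ∫ u in Ioi (0:ℝ), u ^ n * (exp (-x * u) * P u))
      (-∫ u in Ioi (0:ℝ), u ^ (n + 1) * (exp (-x * u) * P u)) x := by
  obtain ⟨hm, M, hM⟩ := id hP
  rw [← integral_neg]
  refine (hasDerivAt_integral_of_dominated_loc_of_deriv_le (μ := volume.restrict (Ioi (0:ℝ)))
    (s := Ioi (x / 2)) (bound := fun u => M * (u ^ (n + 1) * exp (-(x/2) * u)))
    (F := fun x u => u ^ n * (exp (-x * u) * P u))
    (F' := fun x u => -(u ^ (n+1) * (exp (-x * u) * P u)))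
    (Ioi_mem_nhds (by linarith)) ?_ (lap_int hP n hx) ?_ ?_ ?_ ?_).2
  · exact Eventually.of_forall fun y =>
      AEStronglyMeasurable.mul (by fun_prop) (AEStronglyMeasurable.mul (by fun_prop) hm)
  · exact (AEStronglyMeasurable.mul (by fun_prop) (AEStronglyMeasurable.mul (by fun_prop) hm)).neg
  · rw [ae_restrict_iff' measurableSet_Ioi]
    refine ae_of_all _ fun u hu y hy => ?_
    have hu' : (0:ℝ) < u := hu
    have hy' : x / 2 < y := hy
    rw [norm_neg, norm_mul, norm_mul, norm_eq_abs, norm_eq_abs, norm_eq_abs, abs_exp,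
      abs_of_pos (by positivity : 0 < u ^ (n+1))]
    have h1 : exp (-y * u) ≤ exp (-(x/2) * u) := exp_le_exp.2 (by nlinarith)
    have h2 := hM u hu'
    calc u ^ (n+1) * (exp (-y * u) * |P u|) ≤ u ^ (n+1) * (exp (-(x/2) * u) * M) := by gcongr
      _ = _ := by ring
  · exact (moment_int (n+1) (half_pos hx)).const_mul M
  · refine ae_of_all _ fun u y _ => ?_
    have h1 : HasDerivAt (fun y : ℝ => -y * u) (-u) y := by
      simpa using (hasDerivAt_id y).neg.mul_const u
    have := ((h1.exp).mul_const (P u)).const_mul (u ^ n)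
    refine this.congr_deriv ?_
    ring

lemma lap_tendsto {P : ℝ → ℝ} (hP : Bdd P) :
    Tendsto (fun x => ∫ u in Ioi (0:ℝ), exp (-x * u) * P u) atTop (𝓝 0) := by
  obtain ⟨hm, M, hM⟩ := id hP
  refine squeeze_zero_norm' (a := fun x => M * x⁻¹) ?_ (by
    simpa using tendsto_inv_atTop_zero.const_mul M)
  filter_upwards [eventually_gt_atTop 0] with x hx
  have h0 := moment 0 hx
  have h0i := moment_int 0 hx
  simp only [pow_zero, one_mul, Nat.factorial_zero, Nat.cast_one, zero_add, pow_one] at h0 h0i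
  rw [← one_div, ← h0, ← integral_const_mul]
  refine norm_integral_le_of_norm_le (h0i.const_mul M) ?_
  rw [ae_restrict_iff' measurableSet_Ioi]
  refine ae_of_all _ fun u hu => ?_
  rw [norm_mul, norm_eq_abs, abs_exp, norm_eq_abs, mul_comm]
  exact mul_le_mul_of_nonneg_right (hM u hu) (exp_pos _).le

lemma lap_contDiffOn {P : ℝ → ℝ} (hP : Bdd P) (m : ℕ) : ∀ n : ℕ,
    ContDiffOn ℝ m (fun x => ∫ u in Ioi (0:ℝ), u ^ n * (exp (-x * u) * P u)) (Ioi 0) := by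
  induction m with
  | zero =>
    intro n
    simp only [Nat.cast_zero, contDiffOn_zero]
    exact fun x hx => (lap_deriv hP n hx).continuousAt.continuousWithinAt
  | succ m ih =>
    intro n
    push_cast
    rw [contDiffOn_succ_iff_deriv_of_isOpen isOpen_Ioi]
    refine ⟨fun x hx => (lap_deriv hP n hx).differentiableAt.differentiableWithinAt, by simp, ?_⟩
    exact (ih (n+1)).neg.congr fun x hx => (lap_deriv hP n hx).deriv

lemma lap_iter {P : ℝ → ℝ} (hP : Bdd P) (c : ℝ) (g : ℝ → ℝ)
    (hg : ∀ x > 0, g x = (∫ u in Ioi (0:ℝ), exp (-x * u) * P u) + c) (n : ℕ) : ∀ x > 0,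
    iteratedDeriv n g x = (-1) ^ n * (∫ u in Ioi (0:ℝ), u ^ n * (exp (-x * u) * P u))
      + if n = 0 then c else 0 := by
  induction n with
  | zero => intro x hx; simp [hg x hx]
  | succ n ih =>
    intro x hx
    rw [iteratedDeriv_succ]
    have : iteratedDeriv n g =ᶠ[𝓝 x] fun x =>
      (-1) ^ n * (∫ u in Ioi (0:ℝ), u ^ n * (exp (-x * u) * P u)) + if n = 0 then c else 0 := by
      filter_upwards [Ioi_mem_nhds hx] with y hy using ih y hy
    rw [this.deriv_eq, (((lap_deriv hP n hx).const_mul _).add_const _).deriv]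
    simp; ring

lemma lap_smooth {P : ℝ → ℝ} (hP : Bdd P) (c : ℝ) (g : ℝ → ℝ)
    (hg : ∀ x > 0, g x = (∫ u in Ioi (0:ℝ), exp (-x * u) * P u) + c) : ∀ x > 0,
    ContDiffAt ℝ (⊤ : ℕ∞) g x := by
  intro x hx
  rw [contDiffAt_infty]
  intro m
  have h := ((lap_contDiffOn hP m 0).contDiffAt (Ioi_mem_nhds hx)).add
    (contDiffAt_const (c := c))
  refine h.congr_of_eventuallyEq ?_
  filter_upwards [Ioi_mem_nhds hx] with y hy
  simp [hg y hy]

/-- Positivity of the density from complete monotonicity (Post inversion). -/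
lemma post {P : ℝ → ℝ} (hP : Bdd P) (t : ℝ) (ht : 0 < t) (hc : ContinuousAt P t)
    (hpos : ∀ n : ℕ, 1 ≤ n → ∀ x > 0, 0 ≤ ∫ u in Ioi (0:ℝ), u ^ n * (exp (-x * u) * P u)) :
    0 ≤ P t := by
  by_contra! hneg
  obtain ⟨hm, M, hM⟩ := id hP
  set ε := -P t / 2 with hε
  have hε0 : 0 < ε := by linarith
  have hM0 : 0 ≤ M := (abs_nonneg _).trans (hM t ht)
  obtain ⟨δ, hδ, hd⟩ := Metric.continuousAt_iff.1 hc ε hε0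
  set C := (M + ε) / δ ^ 2 with hC
  have hC0 : 0 < C := by positivity
  have hb : ∀ u > 0, P u ≤ -ε + C * (u - t) ^ 2 := by
    intro u hu
    by_cases h : |u - t| < δ
    · have := hd (x := u) (by simpa [Real.dist_eq] using h)
      rw [Real.dist_eq, abs_lt] at this
      have : 0 ≤ C * (u - t) ^ 2 := by positivity
      linarith [this]
    · have h1 : δ ^ 2 ≤ (u - t) ^ 2 := by
        rw [← sq_abs (u - t)]; exact pow_le_pow_left₀ hδ.le (not_lt.1 h) 2
      have h2 : M + ε ≤ C * (u - t) ^ 2 := by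
        rw [hC, div_mul_eq_mul_div, le_div_iff₀ (by positivity)]
        exact mul_le_mul_of_nonneg_left h1 (by linarith)
      linarith [le_abs_self (P u), hM u hu]
  have key : ∀ n : ℕ, 1 ≤ n → 0 ≤ -ε + C * (t ^ 2 * ((n + 2) / n ^ 2)) := by
    intro n hn
    have hn0 : (0:ℝ) < n := by exact_mod_cast hn
    set x := (n:ℝ) / t with hx
    have hx0 : 0 < x := by positivity
    have h1 : ∫ u in Ioi (0:ℝ), u ^ n * (exp (-x * u) * P u) ≤
        ∫ u in Ioi (0:ℝ), ((-ε + C * t ^ 2) * (u ^ n * exp (-x * u))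
          + (-2 * C * t) * (u ^ (n + 1) * exp (-x * u)) + C * (u ^ (n+2) * exp (-x * u))) := by
      refine setIntegral_mono_on (lap_int hP n hx0) ?_ measurableSet_Ioi ?_
      · exact (((moment_int n hx0).const_mul _).add ((moment_int (n+1) hx0).const_mul _)).add
          ((moment_int (n+2) hx0).const_mul _)
      · intro u hu
        have hu' : (0:ℝ) < u := hu
        have h3 := hb u hu
        calc u ^ n * (exp (-x * u) * P u) ≤ u ^ n * (exp (-x * u) * (-ε + C * (u - t) ^ 2)) := by
              gcongr
          _ = _ := by ring
    have h2 := (hpos n hn x hx0).trans h1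
    have I12 : Integrable (fun u => (-ε + C * t ^ 2) * (u ^ n * exp (-x * u))
          + (-2 * C * t) * (u ^ (n + 1) * exp (-x * u))) (volume.restrict (Ioi (0:ℝ))) :=
      ((moment_int n hx0).const_mul _).add ((moment_int (n+1) hx0).const_mul _)
    rw [integral_add I12 ((moment_int (n+2) hx0).const_mul _),
      integral_add ((moment_int n hx0).const_mul _) ((moment_int (n+1) hx0).const_mul _),
      integral_const_mul, integral_const_mul, integral_const_mul, moment n hx0,
      moment (n+1) hx0, moment (n+2) hx0] at h2
    have e : (-ε + C * t ^ 2) * (n.factorial / x ^ (n + 1))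
        + (-2 * C * t) * ((n+1).factorial / x ^ (n + 1 + 1))
        + C * ((n+2).factorial / x ^ (n + 2 + 1))
        = (n.factorial / x ^ (n+1)) * (-ε + C * (t ^ 2 * ((n + 2) / n ^ 2))) := by
      have ht' : t = n / x := by rw [hx]; field_simp
      rw [ht', Nat.factorial_succ (n+1), Nat.factorial_succ n]
      push_cast
      field_simp
      ring
    rw [e] at h2
    exact nonneg_of_mul_nonneg_right h2 (by positivity)
  have hlim : Tendsto (fun n : ℕ => -ε + C * (t ^ 2 * (((n:ℝ) + 2) / n ^ 2))) atTop (𝓝 (-ε)) := by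
    have h1 : Tendsto (fun n : ℕ => (n:ℝ)⁻¹) atTop (𝓝 0) := tendsto_inv_atTop_nhds_zero_nat
    have h2 : Tendsto (fun n : ℕ => -ε + C * (t ^ 2 * ((n:ℝ)⁻¹ + 2 * ((n:ℝ)⁻¹ * (n:ℝ)⁻¹)))) atTop
      (𝓝 (-ε + C * (t ^ 2 * (0 + 2 * (0 * 0))))) :=
      (((h1.add ((h1.mul h1).const_mul 2)).const_mul _).const_mul _).const_add _
    simp only [mul_zero, add_zero] at h2
    refine h2.congr' ?_
    filter_upwards [eventually_gt_atTop 0] with n hn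
    have : (n:ℝ) ≠ 0 := by positivity
    field_simp
  have := ge_of_tendsto hlim (eventually_atTop.2 ⟨1, key⟩)
  linarith

/-- The digamma function on the positive reals. -/
noncomputable def psi (z : ℝ) : ℝ := deriv (fun y => log (Gamma y)) z

lemma psi_hasDerivAt {z : ℝ} (hz : 0 < z) : HasDerivAt (fun y => log (Gamma y)) (psi z) z := by
  have h : DifferentiableAt ℝ Gamma z :=
    differentiableOn_Gamma_Ioi.differentiableAt (Ioi_mem_nhds hz)
  exact (h.log (Gamma_pos_of_pos hz).ne').hasDerivAt

lemma psi_add_one {z : ℝ} (hz : 0 < z) : psi (z + 1) = psi z + 1 / z := by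
  have h1 : HasDerivAt (fun y => log (Gamma (y + 1))) (psi (z + 1)) z :=
    (psi_hasDerivAt (by linarith : 0 < z + 1)).comp_add_const z 1
  have h2 : HasDerivAt (fun y => log (Gamma y) + log y) (psi z + 1 / z) z := by
    rw [one_div]; exact (psi_hasDerivAt hz).add (hasDerivAt_log hz.ne')
  refine h1.unique (h2.congr_of_eventuallyEq ?_)
  filter_upwards [Ioi_mem_nhds hz] with y hy
  have hy' : (0:ℝ) < y := hy
  rw [Gamma_add_one hy'.ne', log_mul hy'.ne' (Gamma_pos_of_pos hy').ne', add_comm]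

lemma log_Gamma_add_one {y : ℝ} (hy' : 0 < y) :
    log (Gamma (y + 1)) = log y + log (Gamma y) := by
  rw [Gamma_add_one hy'.ne', log_mul hy'.ne' (Gamma_pos_of_pos hy').ne']

lemma psi_le {z : ℝ} (hz : 0 < z) : psi z ≤ log z := by
  have h := convexOn_log_Gamma.le_slope_of_hasDerivAt (x := z) (y := z + 1) (f' := psi z) hz
    (show (0:ℝ) < z + 1 by linarith) (by linarith) (psi_hasDerivAt hz)
  rw [slope_def_field] at h
  simp only [Function.comp, log_Gamma_add_one hz] at h
  simpa using h

lemma le_psi {z : ℝ} (hz : 0 < z) : log z - 1 / z ≤ psi z := by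
  have hz1 : (0:ℝ) < z + 1 := by linarith
  have h := convexOn_log_Gamma.slope_le_of_hasDerivAt (x := z) (y := z + 1) (f' := psi (z+1)) hz
    hz1 (by linarith) (psi_hasDerivAt hz1)
  rw [slope_def_field] at h
  simp only [Function.comp, log_Gamma_add_one hz, psi_add_one hz] at h
  simp at h ⊢
  linarith

lemma psi_asymp {A a : ℝ} (hA : 0 < A) (ha : 0 ≤ a) :
    Tendsto (fun x => A * psi (A * x + a) - A * log A - A * log x) atTop (𝓝 0) := by
  have hz : Tendsto (fun x => A * x + a) atTop atTop :=
    tendsto_atTop_add_const_right _ _ (tendsto_id.const_mul_atTop hA)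
  have h1 : Tendsto (fun x => psi (A * x + a) - log (A * x + a)) atTop (𝓝 0) := by
    have : Tendsto (fun z => psi z - log z) atTop (𝓝 0) := by
      refine squeeze_zero_norm' (a := fun z => z⁻¹) ?_ tendsto_inv_atTop_zero
      filter_upwards [eventually_gt_atTop 0] with z hz
      have := psi_le hz
      have h2 := le_psi hz
      rw [one_div] at h2
      have : 0 < z⁻¹ := by positivity
      rw [norm_eq_abs, abs_le]
      constructor <;> linarith
    exact this.comp hz
  have h2 : Tendsto (fun x : ℝ => log (1 + a / A * x⁻¹)) atTop (𝓝 0) := by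
    have h3 : Tendsto (fun x : ℝ => 1 + a / A * x⁻¹) atTop (𝓝 (1 + a / A * 0)) :=
      (tendsto_inv_atTop_zero.const_mul _).const_add _
    simp only [mul_zero, add_zero] at h3
    simpa using h3.log one_ne_zero
  have h4 := (h1.add h2).const_mul A
  simp only [add_zero, mul_zero] at h4
  refine h4.congr' ?_
  filter_upwards [eventually_gt_atTop 0] with x hx
  have e : A * x + a = A * x * (1 + a / A * x⁻¹) := by field_simp
  have e2 : log (A * x + a) = log A + log x + log (1 + a / A * x⁻¹) := by
    rw [e, log_mul (by positivity) (by positivity), log_mul hA.ne' hx.ne']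
  rw [e2]; ring

/-- Regularised kernel. -/
noncomputable def K (A a u : ℝ) : ℝ := exp (-a * u / A) / (1 - exp (-u / A)) - A / u

lemma one_sub_pos {A u : ℝ} (hA : 0 < A) (hu : 0 < u) : 0 < 1 - exp (-u / A) := by
  have : exp (-u / A) < 1 := by
    rw [exp_lt_one_iff, neg_div]; have := div_pos hu hA; linarith
  linarith

lemma kern_cont {A a : ℝ} (hA : 0 < A) :
    ContinuousOn (fun u => exp (-a * u / A) / (1 - exp (-u / A))) (Ioi 0) := by
  refine ContinuousOn.div (by fun_prop) (by fun_prop) ?_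
  intro u hu
  exact (one_sub_pos hA hu).ne'

lemma K_bdd {A a : ℝ} (hA : 0 < A) (ha : 0 ≤ a) : Bdd (K A a) := by
  refine ⟨ContinuousOn.aestronglyMeasurable ((kern_cont hA).sub
    (ContinuousOn.div (by fun_prop) (by fun_prop) fun u hu => (ne_of_gt hu))) measurableSet_Ioi,
    1 + a, ?_⟩
  intro u hu
  set v := u / A with hv
  have hv0 : 0 < v := by positivity
  have h0 := one_sub_pos hA hu
  have e1 : -u / A = -v := by rw [hv]; ring
  have e2 : -a * u / A = -(a * v) := by rw [hv]; ring
  have e3 : A / u = 1 / v := by rw [hv]; field_simp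
  rw [K, e1, e2, e3]
  rw [e1] at h0
  have h1 : 1 - exp (-v) ≤ v := by linarith [add_one_le_exp (-v)]
  have h2 : 1 - a * v ≤ exp (-(a * v)) := by linarith [add_one_le_exp (-(a * v))]
  have h3 : exp (-(a * v)) ≤ 1 := by rw [exp_le_one_iff]; nlinarith
  have h4 : 1 / (1 - exp (-v)) ≤ 1 / v + 1 := by
    rw [div_le_iff₀ h0]
    have h5 : v + 1 ≤ exp v := add_one_le_exp v
    have h6 : exp (-v) * exp v = 1 := by rw [← exp_add]; simp
    have h7 : exp (-v) * (v + 1) ≤ 1 := by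
      calc _ ≤ exp (-v) * exp v := mul_le_mul_of_nonneg_left h5 (exp_pos _).le
        _ = 1 := h6
    have : (1 / v + 1) * (1 - exp (-v)) = 1 + (1 - exp (-v) * (v + 1)) / v := by
      field_simp; ring
    rw [this]
    have : 0 ≤ (1 - exp (-v) * (v + 1)) / v := div_nonneg (by linarith) hv0.le
    linarith
  have h8 : exp (-(a * v)) / (1 - exp (-v)) ≤ 1 / (1 - exp (-v)) := by gcongr
  have h9 : exp (-(a * v)) / v ≤ exp (-(a * v)) / (1 - exp (-v)) := by gcongr
  have h10 : 1 / v - a ≤ exp (-(a * v)) / v := by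
    rw [le_div_iff₀ hv0]
    have : (1 / v - a) * v = 1 - a * v := by field_simp
    linarith
  rw [abs_le]
  constructor <;> linarith

lemma frullani {x y : ℝ} (hx : 0 < x) (hxy : x ≤ y) :
    IntegrableOn (fun u => (exp (-x * u) - exp (-y * u)) / u) (Ioi 0) ∧
    ∫ u in Ioi (0:ℝ), (exp (-x * u) - exp (-y * u)) / u = log (y / x) := by
  have hB : Bdd (fun u => (1 - exp (-(y - x) * u)) / u) := by
    refine ⟨ContinuousOn.aestronglyMeasurable
      (ContinuousOn.div (by fun_prop) (by fun_prop) fun u hu => (ne_of_gt hu)) measurableSet_Ioi,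
      y - x, fun u hu => ?_⟩
    have h1 := add_one_le_exp (-(y - x) * u)
    have h2 : exp (-(y - x) * u) ≤ 1 := by rw [exp_le_one_iff]; nlinarith
    rw [abs_of_nonneg (div_nonneg (by linarith) hu.le), div_le_iff₀ hu]
    linarith
  have hI : IntegrableOn (fun u => (exp (-x * u) - exp (-y * u)) / u) (Ioi 0) := by
    refine Integrable.congr (lap_int hB 0 hx) (ae_of_all _ fun u => ?_)
    have : exp (-y * u) = exp (-x * u) * exp (-(y - x) * u) := by rw [← exp_add]; ring_nf
    simp only [this]; ring
  refine ⟨hI, ?_⟩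
  have h := Frullani.integral_Ioi_eq (f := fun t : ℝ => exp (-t)) (a := x) (b := y) (L := 1) (R := 0)
    ((by fun_prop : Continuous fun t : ℝ => exp (-t)).locallyIntegrable.locallyIntegrableOn _)
    hx (by linarith) ?_ tendsto_exp_neg_atTop_nhds_zero ?_
  · simp only [smul_eq_mul, sub_zero, mul_one] at h
    rw [← h]
    congr 1; ext u; rw [neg_mul, neg_mul]; ring
  · have : Tendsto (fun t : ℝ => exp (-t)) (𝓝 0) (𝓝 (exp (-0))) :=
      (by fun_prop : Continuous fun t : ℝ => exp (-t)).tendsto 0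
    simp only [neg_zero, exp_zero] at this
    exact this.mono_left nhdsWithin_le_nhds
  · refine Integrable.congr hI (ae_of_all _ fun u => ?_)
    simp only [smul_eq_mul, neg_mul]; ring

lemma psi_rep {A a x : ℝ} (hA : 0 < A) (ha : 0 ≤ a) (hx : 0 < x) :
    A * psi (A * x + a) = A * log A + A * log x - ∫ u in Ioi (0:ℝ), exp (-x * u) * K A a u := by
  set h : ℝ → ℝ := fun x => (A * psi (A * x + a) - A * log A - A * log x)
    + ∫ u in Ioi (0:ℝ), exp (-x * u) * K A a u with hh
  have hlim : Tendsto h atTop (𝓝 0) := by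
    have := (psi_asymp hA ha).add (lap_tendsto (K_bdd hA ha))
    rwa [add_zero] at this
  have hper : ∀ x > 0, h (x + 1 / A) = h x := by
    intro x hx
    have hy : 0 < x + 1 / A := by positivity
    have hz : 0 < A * x + a := by positivity
    have e1 : A * (x + 1 / A) + a = (A * x + a) + 1 := by field_simp; ring
    have hI : ∀ y > 0, IntegrableOn (fun u => exp (-y * u) * K A a u) (Ioi 0) := by
      intro y hy
      simpa using lap_int (K_bdd hA ha) 0 hy
    have hd : (∫ u in Ioi (0:ℝ), exp (-(x + 1 / A) * u) * K A a u)
        - (∫ u in Ioi (0:ℝ), exp (-x * u) * K A a u)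
        = A * log ((x + 1 / A) / x) - 1 / (x + a / A) := by
      have hz' : 0 < x + a / A := by positivity
      obtain ⟨hfi, hf⟩ := frullani hx (y := x + 1 / A) (by linarith [one_div_pos.2 hA])
      have hm := moment 0 hz'
      have hmi := moment_int 0 hz'
      simp only [pow_zero, one_mul, Nat.factorial_zero, Nat.cast_one, zero_add, pow_one] at hm hmi
      rw [← hf, ← hm, ← integral_const_mul, ← integral_sub (hI _ hy) (hI _ hx),
        ← integral_sub (hfi.const_mul A) hmi]
      refine setIntegral_congr_fun measurableSet_Ioi fun u hu => ?_
      have hu' : (0:ℝ) < u := hu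
      have h0 := one_sub_pos hA hu'
      have E1 : exp (-(x + 1 / A) * u) = exp (-x * u) * exp (-u / A) := by
        rw [← exp_add]; ring_nf
      have E2 : exp (-(x + a / A) * u) = exp (-x * u) * exp (-a * u / A) := by
        rw [← exp_add]; ring_nf
      simp only [E1, E2, K]
      generalize exp (-u / A) = w at *
      have h0' : 1 - w ≠ 0 := h0.ne'
      field_simp
      ring
    rw [log_div hy.ne' hx.ne'] at hd
    simp only [hh]
    rw [e1, psi_add_one hz]
    have e2 : 1 / (x + a / A) = A * (1 / (A * x + a)) := by field_simp
    rw [e2] at hd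
    linear_combination hd
  have hn : ∀ n : ℕ, h (x + n * (1 / A)) = h x := by
    intro n
    induction n with
    | zero => simp
    | succ n ih =>
      rw [← ih, ← hper (x + n * (1 / A)) (by positivity)]
      congr 1; push_cast; ring
  have ht : Tendsto (fun n : ℕ => x + n * (1 / A)) atTop atTop :=
    tendsto_atTop_add_const_left _ _
      (tendsto_natCast_atTop_atTop.atTop_mul_const (one_div_pos.2 hA))
  have h0 : h x = 0 :=
    tendsto_nhds_unique (tendsto_const_nhds.congr fun n => (hn n).symm) (hlim.comp ht)
  simp only [hh] at h0
  linarith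

section
variable {p q : ℕ} {A a : Fin p → ℝ} {B b : Fin q → ℝ}

lemma W_deriv (hA : ∀ i, 0 < A i) (hB : ∀ j, 0 < B j)
    (ha : ∀ i, 0 ≤ a i) (hb : ∀ j, 0 ≤ b j) (W : ℝ → ℝ)
    (hW : ∀ x, W x = (∏ i, Real.Gamma (A i * x + a i)) / ∏ j, Real.Gamma (B j * x + b j)) :
    ∀ x > 0, -deriv (fun y => Real.log (W y)) x =
      ∑ j, B j * psi (B j * x + b j) - ∑ i, A i * psi (A i * x + a i) := by
  intro x hx
  have hd : ∀ {c d : ℝ}, 0 < c → 0 ≤ d →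
      HasDerivAt (fun y => log (Gamma (c * y + d))) (c * psi (c * x + d)) x := by
    intro c d hc hd
    have h1 : HasDerivAt (fun y : ℝ => c * y + d) c x := by
      simpa using ((hasDerivAt_id x).const_mul c).add_const d
    have h2 := (psi_hasDerivAt (by positivity : 0 < c * x + d)).comp x h1
    rw [mul_comm] at h2
    exact h2
  have h : HasDerivAt (fun y => ∑ i, log (Gamma (A i * y + a i)) - ∑ j, log (Gamma (B j * y + b j)))
      (∑ i, A i * psi (A i * x + a i) - ∑ j, B j * psi (B j * x + b j)) x :=
    (HasDerivAt.fun_sum fun i _ => hd (hA i) (ha i)).sub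
      (HasDerivAt.fun_sum fun j _ => hd (hB j) (hb j))
  have h' : HasDerivAt (fun y => Real.log (W y))
      (∑ i, A i * psi (A i * x + a i) - ∑ j, B j * psi (B j * x + b j)) x := by
    refine h.congr_of_eventuallyEq ?_
    filter_upwards [Ioi_mem_nhds hx] with y hy
    have hy' : (0:ℝ) < y := hy
    have g1 : ∀ i, Gamma (A i * y + a i) ≠ 0 := fun i =>
      (Gamma_pos_of_pos (by have := hA i; have := ha i; positivity)).ne'
    have g2 : ∀ i, Gamma (B i * y + b i) ≠ 0 := fun i =>
      (Gamma_pos_of_pos (by have := hB i; have := hb i; positivity)).ne'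
    rw [hW, log_div (Finset.prod_ne_zero_iff.2 fun i _ => g1 i)
      (Finset.prod_ne_zero_iff.2 fun i _ => g2 i), log_prod fun i _ => g1 i,
      log_prod fun i _ => g2 i]
  rw [h'.deriv]; ring

lemma log_rho (hA : ∀ i, 0 < A i) (hB : ∀ j, 0 < B j) (ρ : ℝ)
    (hρ : ρ = (∏ i, A i ^ A i) * ∏ j, B j ^ (-B j)) :
    0 < ρ ∧ Real.log ρ = ∑ i, A i * log (A i) - ∑ j, B j * log (B j) := by
  have g1 : ∀ i, 0 < A i ^ A i := fun i => rpow_pos_of_pos (hA i) _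
  have g2 : ∀ j, 0 < B j ^ (-B j) := fun j => rpow_pos_of_pos (hB j) _
  have p1 : 0 < ∏ i, A i ^ A i := Finset.prod_pos fun i _ => g1 i
  have p2 : 0 < ∏ j, B j ^ (-B j) := Finset.prod_pos fun i _ => g2 i
  refine ⟨hρ ▸ mul_pos p1 p2, ?_⟩
  rw [hρ, log_mul p1.ne' p2.ne', log_prod fun i _ => (g1 i).ne', log_prod fun i _ => (g2 i).ne',
    sub_eq_add_neg, ← Finset.sum_neg_distrib]
  congr 1
  · exact Finset.sum_congr rfl fun i _ => log_rpow (hA i) _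
  · exact Finset.sum_congr rfl fun i _ => by rw [log_rpow (hB i)]; ring

lemma Bdd.sum {n : ℕ} {f : Fin n → ℝ → ℝ} (h : ∀ i, Bdd (f i)) : Bdd (fun u => ∑ i, f i u) := by
  choose hm M hM using h
  refine ⟨?_, ∑ i, M i, fun u hu => (Finset.abs_sum_le_sum_abs _ _).trans
    (Finset.sum_le_sum fun i _ => hM i u hu)⟩
  exact Finset.aestronglyMeasurable_fun_sum _ fun i _ => hm i

lemma Bdd.sub {f g : ℝ → ℝ} (hf : Bdd f) (hg : Bdd g) : Bdd (fun u => f u - g u) := by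
  obtain ⟨hm, M, hM⟩ := hf
  obtain ⟨hm', M', hM'⟩ := hg
  exact ⟨hm.sub hm', M + M', fun u hu => (abs_sub _ _).trans (add_le_add (hM u hu) (hM' u hu))⟩

lemma Bdd.congr {f g : ℝ → ℝ} (hf : Bdd f) (h : ∀ u > 0, f u = g u) : Bdd g := by
  obtain ⟨hm, M, hM⟩ := hf
  refine ⟨hm.congr ?_, M, fun u hu => h u hu ▸ hM u hu⟩
  rw [Filter.EventuallyEq, ae_restrict_iff' measurableSet_Ioi]
  exact ae_of_all _ h

lemma P_eq (P : ℝ → ℝ)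
    (hP : ∀ u, P u = (∑ i, Real.exp (-a i * u / A i) / (1 - Real.exp (-u / A i))) -
      ∑ j, Real.exp (-b j * u / B j) / (1 - Real.exp (-u / B j)))
    (hs : ∑ j, B j = ∑ i, A i) (u : ℝ) :
    (∑ i, K (A i) (a i) u) - ∑ j, K (B j) (b j) u = P u := by
  rw [hP]
  simp only [K, Finset.sum_sub_distrib, ← Finset.sum_div]
  rw [hs]; ring

lemma P_bdd (hA : ∀ i, 0 < A i) (hB : ∀ j, 0 < B j)
    (ha : ∀ i, 0 ≤ a i) (hb : ∀ j, 0 ≤ b j) (P : ℝ → ℝ)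
    (hP : ∀ u, P u = (∑ i, Real.exp (-a i * u / A i) / (1 - Real.exp (-u / A i))) -
      ∑ j, Real.exp (-b j * u / B j) / (1 - Real.exp (-u / B j)))
    (hs : ∑ j, B j = ∑ i, A i) : Bdd P :=
  ((Bdd.sum fun i => K_bdd (hA i) (ha i)).sub (Bdd.sum fun j => K_bdd (hB j) (hb j))).congr
    fun u _ => P_eq P hP hs u

lemma G_rep (hA : ∀ i, 0 < A i) (hB : ∀ j, 0 < B j)
    (ha : ∀ i, 0 ≤ a i) (hb : ∀ j, 0 ≤ b j) (P : ℝ → ℝ)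
    (hP : ∀ u, P u = (∑ i, Real.exp (-a i * u / A i) / (1 - Real.exp (-u / A i))) -
      ∑ j, Real.exp (-b j * u / B j) / (1 - Real.exp (-u / B j)))
    (hs : ∑ j, B j = ∑ i, A i) (ρ : ℝ)
    (hρ : ρ = (∏ i, A i ^ A i) * ∏ j, B j ^ (-B j)) {x : ℝ} (hx : 0 < x) :
    ∑ j, B j * psi (B j * x + b j) - ∑ i, A i * psi (A i * x + a i) =
      (∫ u in Ioi (0:ℝ), exp (-x * u) * P u) + Real.log (1 / ρ) := by
  have hI : ∀ {c d : ℝ}, 0 < c → 0 ≤ d →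
      Integrable (fun u => exp (-x * u) * K c d u) (volume.restrict (Ioi (0:ℝ))) := by
    intro c d hc hd
    have := lap_int (K_bdd hc hd) 0 hx
    simp only [pow_zero, one_mul] at this
    exact this
  have e : ∫ u in Ioi (0:ℝ), exp (-x * u) * P u =
      ∑ i, (∫ u in Ioi (0:ℝ), exp (-x * u) * K (A i) (a i) u)
        - ∑ j, ∫ u in Ioi (0:ℝ), exp (-x * u) * K (B j) (b j) u := by
    rw [← integral_finsetSum _ fun i _ => hI (hA i) (ha i),
      ← integral_finsetSum _ fun i _ => hI (hB i) (hb i),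
      ← integral_sub (integrable_finsetSum _ fun i _ => hI (hA i) (ha i))
        (integrable_finsetSum _ fun i _ => hI (hB i) (hb i))]
    congr 1; ext u
    rw [← P_eq P hP hs u, mul_sub, Finset.mul_sum, Finset.mul_sum]
  rw [e, one_div, log_inv, (log_rho hA hB ρ hρ).2]
  simp only [psi_rep (hA _) (ha _) hx, psi_rep (hB _) (hb _) hx, Finset.sum_sub_distrib,
    Finset.sum_add_distrib, ← Finset.sum_mul]
  rw [hs]; ring

lemma G_asymp (hA : ∀ i, 0 < A i) (hB : ∀ j, 0 < B j)
    (ha : ∀ i, 0 ≤ a i) (hb : ∀ j, 0 ≤ b j) (ρ : ℝ)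
    (hρ : ρ = (∏ i, A i ^ A i) * ∏ j, B j ^ (-B j)) :
    Tendsto (fun x => (∑ j, B j * psi (B j * x + b j) - ∑ i, A i * psi (A i * x + a i))
      - (∑ j, B j - ∑ i, A i) * log x) atTop (𝓝 (-Real.log ρ)) := by
  have h1 := tendsto_finsetSum (Finset.univ : Finset (Fin p))
    fun i _ => psi_asymp (hA i) (ha i)
  have h2 := tendsto_finsetSum (Finset.univ : Finset (Fin q))
    fun i _ => psi_asymp (hB i) (hb i)
  have h := (h2.sub h1).sub_const (Real.log ρ)
  simp only [Finset.sum_const_zero, sub_zero, zero_sub] at h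
  refine h.congr fun x => ?_
  rw [(log_rho hA hB ρ hρ).2]
  simp only [Finset.sum_sub_distrib, ← Finset.sum_mul]
  ring

end

end WLCM

theorem stmt8 (p q : ℕ) (hp : 1 ≤ p) (hq : 1 ≤ q)
    (A : Fin p → ℝ) (B : Fin q → ℝ) (a : Fin p → ℝ) (b : Fin q → ℝ)
    (hA : ∀ i, 0 < A i) (hB : ∀ j, 0 < B j)
    (ha : ∀ i, 0 ≤ a i) (hb : ∀ j, 0 ≤ b j)
    (W : ℝ → ℝ)
    (hW : ∀ x, W x = (∏ i, Real.Gamma (A i * x + a i)) / ∏ j, Real.Gamma (B j * x + b j))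
    (P : ℝ → ℝ)
    (hP : ∀ u, P u = (∑ i, Real.exp (-a i * u / A i) / (1 - Real.exp (-u / A i))) -
      ∑ j, Real.exp (-b j * u / B j) / (1 - Real.exp (-u / B j)))
    (ρ : ℝ) (hρ : ρ = (∏ i, A i ^ A i) * ∏ j, B j ^ (-B j)) :
    (LogCompletelyMonotonic W ↔
        ((∑ j, B j = ∑ i, A i) ∧ ρ ≤ 1 ∧ ∀ u > (0 : ℝ), 0 ≤ P u)) ∧
      (LogCompletelyMonotonic W → ∀ x > (0 : ℝ),
        -deriv (fun y => Real.log (W y)) x =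
          (∫ u in Set.Ioi (0 : ℝ), Real.exp (-x * u) * P u) + Real.log (1 / ρ)) := by
  have hG := WLCM.W_deriv hA hB ha hb W hW
  obtain ⟨hρ0, -⟩ := WLCM.log_rho hA hB ρ hρ
  have hrep : (∑ j, B j = ∑ i, A i) → ∀ x > (0 : ℝ), -deriv (fun y => Real.log (W y)) x =
      (∫ u in Set.Ioi (0 : ℝ), Real.exp (-x * u) * P u) + Real.log (1 / ρ) := fun hs x hx => by
    rw [hG x hx, WLCM.G_rep hA hB ha hb P hP hs ρ hρ hx]
  have hfwd : LogCompletelyMonotonic W →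
      ((∑ j, B j = ∑ i, A i) ∧ ρ ≤ 1 ∧ ∀ u > (0 : ℝ), 0 ≤ P u) := by
    rintro ⟨-, hsm, hcm⟩
    set G : ℝ → ℝ := fun x => -deriv (fun y => Real.log (W y)) x with hGdef
    have hnn : ∀ x > 0, 0 ≤ G x := fun x hx => by simpa using hcm 0 x hx
    have hdiff : ∀ x > 0, DifferentiableAt ℝ G x := fun x hx =>
      (hsm x hx).differentiableAt (by simp)
    have hanti : AntitoneOn G (Set.Ioi 0) := by
      refine antitoneOn_of_deriv_nonpos (convex_Ioi 0)
        (fun x hx => (hdiff x hx).continuousAt.continuousWithinAt)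
        (fun x hx => (hdiff x (by simpa using hx)).differentiableWithinAt) ?_
      intro x hx
      have := hcm 1 x (by simpa using hx)
      rw [iteratedDeriv_one] at this
      linarith
    have has : Filter.Tendsto (fun x => G x - (∑ j, B j - ∑ i, A i) * Real.log x) Filter.atTop
        (nhds (-Real.log ρ)) := by
      refine (WLCM.G_asymp hA hB ha hb ρ hρ).congr' ?_
      filter_upwards [Filter.eventually_gt_atTop 0] with x hx
      rw [← hG x hx]
    have hs : ∑ j, B j = ∑ i, A i := by
      rcases lt_trichotomy (∑ j, B j - ∑ i, A i) 0 with h | h | h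
      · exfalso
        have h1 : Filter.Tendsto G Filter.atTop Filter.atBot :=
          (has.add_atBot (Real.tendsto_log_atTop.const_mul_atTop_of_neg h)).congr
            fun x => by ring
        obtain ⟨x, hx1, hx2⟩ := ((h1.eventually_lt_atBot 0).and
          (Filter.eventually_gt_atTop 0)).exists
        linarith [hnn x hx2]
      · linarith
      · exfalso
        have h1 : Filter.Tendsto G Filter.atTop Filter.atTop :=
          (has.add_atTop (Real.tendsto_log_atTop.const_mul_atTop h)).congr
            fun x => by ring
        obtain ⟨x, hx1, hx2⟩ := ((h1.eventually_gt_atTop (G 1)).and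
          (Filter.eventually_ge_atTop 1)).exists
        have := hanti (Set.mem_Ioi.2 one_pos) (Set.mem_Ioi.2 (by linarith)) hx2
        linarith
    refine ⟨hs, ?_, ?_⟩
    · simp only [hs, sub_self, zero_mul, sub_zero] at has
      have h1 : 0 ≤ -Real.log ρ := ge_of_tendsto has (by
        filter_upwards [Filter.eventually_gt_atTop 0] with x hx using hnn x hx)
      exact (Real.log_nonpos_iff hρ0.le).1 (by linarith)
    · intro t ht
      have hPb := WLCM.P_bdd hA hB ha hb P hP hs
      refine WLCM.post hPb t ht ?_ ?_
      · have : ContinuousOn P (Set.Ioi 0) := by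
          rw [show P = _ from funext hP]
          exact (continuousOn_finsetSum _ fun i _ => WLCM.kern_cont (hA i)).sub
            (continuousOn_finsetSum _ fun i _ => WLCM.kern_cont (hB i))
        exact this.continuousAt (Ioi_mem_nhds ht)
      · intro n hn x hx
        have h := hcm n x hx
        rw [WLCM.lap_iter hPb _ G (hrep hs) n x hx, if_neg (by omega), add_zero, ← mul_assoc,
          ← mul_pow] at h
        simpa using h
  refine ⟨⟨hfwd, ?_⟩, fun h => hrep (hfwd h).1⟩
  rintro ⟨hs, hρ1, hPpos⟩
  have hPb := WLCM.P_bdd hA hB ha hb P hP hs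
  refine ⟨fun x hx => ?_, WLCM.lap_smooth hPb _ _ (hrep hs), fun n x hx => ?_⟩
  · rw [hW]
    refine div_pos (Finset.prod_pos fun i _ => ?_) (Finset.prod_pos fun j _ => ?_)
    · exact Real.Gamma_pos_of_pos (by have := hA i; have := ha i; positivity)
    · exact Real.Gamma_pos_of_pos (by have := hB j; have := hb j; positivity)
  · rw [WLCM.lap_iter hPb _ _ (hrep hs) n x hx, mul_add, ← mul_assoc, ← mul_pow]
    have h1 : 0 ≤ ∫ u in Set.Ioi (0:ℝ), u ^ n * (Real.exp (-x * u) * P u) := by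
      refine setIntegral_nonneg measurableSet_Ioi fun u hu => ?_
      have hu' : (0:ℝ) < u := hu
      have := hPpos u hu'
      positivity
    have h2 : 0 ≤ (-1:ℝ) ^ n * (if n = 0 then Real.log (1 / ρ) else 0) := by
      split_ifs with h
      · subst h
        rw [pow_zero, one_mul]
        exact Real.log_nonneg (by rw [le_div_iff₀ hρ0]; linarith)
      · simp
    have h3 : ((-1:ℝ) * -1) ^ n = 1 := by norm_num
    rw [h3, one_mul]
    exact add_nonneg h1 h2
end

section
/- Let p, q ≥ 1, let A_1,…,A_p, B_1,…,B_q be strictly positive and a_1,…,a_p, b_1,…,b_q be nonnegative reals, and set W(x) = ∏_{i=1}^p Γ(A_i x + a_i) / ∏_{j=1}^q Γ(B_j x + b_j). If W is logarithmically completely monotonic on (0,∞), then: (a) Σ_{j=1}^q B_j = Σ_{i=1}^p A_i; (b) ρ = ∏_{i=1}^p A_i^{A_i} · ∏_{j=1}^q B_j^{−B_j} ≤ 1; (c) Σ_{j=1}^q b_j − Σ_{i=1}^p a_i + (p − q)/2 ≥ 0; and (d) min_{1≤i≤p}(a_i/A_i) ≤ min_{1≤j≤q}(b_j/B_j). -/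
open MeasureTheory

open Filter Topology

/-- The real digamma function. -/
noncomputable def psiR (y : ℝ) : ℝ := deriv (Real.log ∘ Real.Gamma) y

lemma gamma_diff {y : ℝ} (hy : 0 < y) : DifferentiableAt ℝ Real.Gamma y := by
  apply Real.differentiableAt_Gamma
  intro m h
  have : (0:ℝ) ≤ m := m.cast_nonneg
  linarith

lemma logGamma_hasDerivAt {y : ℝ} (hy : 0 < y) :
    HasDerivAt (Real.log ∘ Real.Gamma) (psiR y) y := by
  have h : DifferentiableAt ℝ (Real.log ∘ Real.Gamma) y :=
    (gamma_diff hy).log (Real.Gamma_pos_of_pos hy).ne'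
  exact h.hasDerivAt

lemma digamma_ofReal {y : ℝ} (hy : 0 < y) : Complex.digamma (y : ℂ) = (psiR y : ℂ) := by
  have h1 : HasDerivAt (Real.log ∘ Real.Gamma) (deriv Real.Gamma y / Real.Gamma y) y :=
    (gamma_diff hy).hasDerivAt.log (Real.Gamma_pos_of_pos hy).ne'
  have h2 : psiR y = deriv Real.Gamma y / Real.Gamma y := h1.deriv
  have hd : DifferentiableAt ℂ Complex.Gamma (y : ℂ) := by
    apply Complex.differentiableAt_Gamma
    intro m h
    have h3 : y = -(m : ℝ) := by exact_mod_cast h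
    have : (0:ℝ) ≤ m := m.cast_nonneg
    linarith
  have h4 := hd.hasDerivAt.comp_ofReal
  have h5 := (gamma_diff hy).hasDerivAt.ofReal_comp
  have h6 : deriv Complex.Gamma (y : ℂ) = ((deriv Real.Gamma y : ℝ) : ℂ) := by
    have h7 : (fun t : ℝ => Complex.Gamma (t : ℂ)) = fun t : ℝ => ((Real.Gamma t : ℝ) : ℂ) :=
      funext fun t => Complex.Gamma_ofReal t
    rw [h7] at h4
    exact h4.unique h5
  rw [h2, Complex.digamma_def, logDeriv_apply, h6, Complex.Gamma_ofReal]
  push_cast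
  rfl

lemma psiR_add_one {y : ℝ} (hy : 0 < y) : psiR (y + 1) = psiR y + 1 / y := by
  have h := Complex.digamma_apply_add_one (y : ℂ) (by
    intro m h
    have h3 : y = -(m : ℝ) := by exact_mod_cast h
    have : (0:ℝ) ≤ m := m.cast_nonneg
    linarith)
  have h1 := digamma_ofReal (y := y + 1) (by linarith)
  push_cast at h1
  rw [h1, digamma_ofReal hy] at h
  rw [one_div]
  exact_mod_cast h

lemma slope_logGamma {y : ℝ} (hy : 0 < y) :
    slope (Real.log ∘ Real.Gamma) y (y + 1) = Real.log y := by
  rw [slope_def_field]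
  simp only [Function.comp]
  rw [Real.Gamma_add_one hy.ne', Real.log_mul hy.ne' (Real.Gamma_pos_of_pos hy).ne']
  ring

lemma psiR_le {y : ℝ} (hy : 0 < y) : psiR y ≤ Real.log y := by
  rw [← slope_logGamma hy]
  exact Real.convexOn_log_Gamma.le_slope_of_hasDerivAt (Set.mem_Ioi.2 hy)
    (Set.mem_Ioi.2 (by linarith)) (by linarith) (logGamma_hasDerivAt hy)

lemma le_psiR {y : ℝ} (hy : 0 < y) : Real.log y - 1 / y ≤ psiR y := by
  have h := Real.convexOn_log_Gamma.slope_le_of_hasDerivAt (Set.mem_Ioi.2 hy)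
    (Set.mem_Ioi.2 (by linarith)) (by linarith : y < y + 1) (logGamma_hasDerivAt (by linarith))
  rw [slope_logGamma hy, psiR_add_one hy] at h
  linarith

/-- the remainder -/
noncomputable def remR (y : ℝ) : ℝ := psiR y - Real.log y + 1 / (2 * y)

lemma remR_abs {y : ℝ} (hy : 0 < y) : |remR y| ≤ 1 / y := by
  have h1 := psiR_le hy
  have h2 := le_psiR hy
  have h3 : 1 / (2 * y) = (1 / y) / 2 := by field_simp
  have h4 : 0 < 1 / y := by positivity
  unfold remR
  rw [abs_le]
  constructor <;> linarith

lemma log_step {y : ℝ} (hy : 0 < y) : Real.log (y + 1) - Real.log y = Real.log (1 + 1 / y) := by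
  rw [← Real.log_div (by linarith) hy.ne']
  congr 1
  field_simp

lemma remR_step_nonneg {y : ℝ} (hy : 0 < y) : remR y ≤ remR (y + 1) := by
  have h0 : (0:ℝ) < 1 + 1 / y := by positivity
  have h1 : Real.log (1 + 1 / y) ≤ Real.sinh (Real.log (1 + 1 / y)) := by
    rw [Real.self_le_sinh_iff]
    apply Real.log_nonneg
    have : 0 < 1 / y := by positivity
    linarith
  rw [Real.sinh_log h0] at h1
  have h2 : ((1 + 1 / y) - (1 + 1 / y)⁻¹) / 2 = 1 / y + 1 / (2 * (y + 1)) - 1 / (2 * y) := by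
    have : y + 1 ≠ 0 := by linarith
    field_simp
    ring
  have h3 := log_step hy
  unfold remR
  rw [psiR_add_one hy]
  linarith

lemma remR_step_le {y : ℝ} (hy : 0 < y) :
    remR (y + 1) + 1 / (y + 1) ^ 2 ≤ remR y + 1 / y ^ 2 := by
  have h1 := Real.le_log_one_add_of_nonneg (x := 1 / y) (by positivity)
  have h3 := log_step hy
  have h2 : 1 / y + 1 / (2 * (y + 1)) - 1 / (2 * y) + 1 / (y + 1) ^ 2 - 1 / y ^ 2
      ≤ 2 * (1 / y) / (1 / y + 2) := by
    have h4 : 2 * (1 / y) / (1 / y + 2) - (1 / y + 1 / (2 * (y + 1)) - 1 / (2 * y)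
      + 1 / (y + 1) ^ 2 - 1 / y ^ 2) =
      (2 * (2 * y + 1) ^ 2 - y * (y + 1)) / (2 * y ^ 2 * (y + 1) ^ 2 * (2 * y + 1)) := by
      have : y + 1 ≠ 0 := by linarith
      have : 1 + 2 * y ≠ 0 := by linarith
      have : 2 * y + 1 ≠ 0 := by linarith
      field_simp
      ring
    have h5 : 0 ≤ (2 * (2 * y + 1) ^ 2 - y * (y + 1)) / (2 * y ^ 2 * (y + 1) ^ 2 * (2 * y + 1)) := by
      apply div_nonneg _ (by positivity)
      nlinarith
    linarith
  unfold remR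
  rw [psiR_add_one hy]
  linarith

lemma tendsto_add_nat (y : ℝ) : Tendsto (fun n : ℕ => y + (n : ℝ)) atTop atTop :=
  tendsto_atTop_add_const_left _ _ tendsto_natCast_atTop_atTop

lemma remR_tendsto : Tendsto remR atTop (𝓝 0) := by
  apply squeeze_zero_norm' (a := fun y : ℝ => 1 / y)
  · filter_upwards [eventually_gt_atTop 0] with y hy
    exact remR_abs hy
  · simpa using tendsto_inv_atTop_zero (𝕜 := ℝ)

lemma remR_nonpos {y : ℝ} (hy : 0 < y) : remR y ≤ 0 := by
  have hm : Monotone (fun n : ℕ => remR (y + n)) := by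
    apply monotone_nat_of_le_succ
    intro n
    have := remR_step_nonneg (y := y + n) (by positivity)
    push_cast
    rwa [← add_assoc]
  have := hm.ge_of_tendsto (remR_tendsto.comp (tendsto_add_nat y)) 0
  simpa using this

lemma remR_ge {y : ℝ} (hy : 0 < y) : -(1 / y ^ 2) ≤ remR y := by
  have hm : Antitone (fun n : ℕ => remR (y + n) + 1 / (y + n) ^ 2) := by
    apply antitone_nat_of_succ_le
    intro n
    have := remR_step_le (y := y + n) (by positivity)
    push_cast
    rwa [← add_assoc]
  have h2 : Tendsto (fun t : ℝ => 1 / t ^ 2) atTop (𝓝 0) := by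
    simpa using tendsto_pow_neg_atTop (𝕜 := ℝ) (n := 2) (by norm_num)
  have h3 := hm.le_of_tendsto ((remR_tendsto.add h2).comp (tendsto_add_nat y)) 0
  simp at h3
  rw [one_div]
  linarith

lemma key_asymp {B : ℝ} (b : ℝ) (hB : 0 < B) (hb : 0 ≤ b) :
    Tendsto (fun x : ℝ => x * (B * psiR (B * x + b) - B * Real.log B - B * Real.log x))
      atTop (𝓝 (b - 1 / 2)) := by
  have e1 : Tendsto (fun x : ℝ => B * (x * Real.log (1 + (b / B) / x))) atTop (𝓝 (B * (b / B))) :=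
    (Real.tendsto_mul_log_one_add_div_atTop (b / B)).const_mul B
  have hy : Tendsto (fun x : ℝ => B * x + b) atTop atTop :=
    tendsto_atTop_add_const_right _ _ (tendsto_id.const_mul_atTop hB)
  have hi : Tendsto (fun x : ℝ => (B * x + b)⁻¹) atTop (𝓝 0) := tendsto_inv_atTop_zero.comp hy
  have e2 : Tendsto (fun x : ℝ => (1 - b * (B * x + b)⁻¹) * (-1/2)) atTop
      (𝓝 ((1 - b * 0) * (-1/2))) := ((hi.const_mul b).const_sub 1).mul_const _
  have e3 : Tendsto (fun x : ℝ => B * x * remR (B * x + b)) atTop (𝓝 0) := by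
    apply squeeze_zero_norm' (a := fun x : ℝ => (B * x + b)⁻¹) _ hi
    filter_upwards [eventually_gt_atTop 0] with x hx
    have hp : 0 < B * x + b := by positivity
    have h1 := remR_nonpos hp
    have h2 := remR_ge hp
    rw [Real.norm_eq_abs, abs_of_nonpos (mul_nonpos_of_nonneg_of_nonpos (by positivity) h1)]
    calc -(B * x * remR (B * x + b)) = B * x * (-remR (B * x + b)) := by ring
      _ ≤ (B * x + b) * (1 / (B * x + b) ^ 2) := by
        apply mul_le_mul <;> first | linarith | positivity
      _ = (B * x + b)⁻¹ := by field_simp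
  have e := (e1.add e2).add e3
  have hl : B * (b / B) + (1 - b * 0) * (-1/2) + 0 = b - 1 / 2 := by
    field_simp
    ring
  rw [hl] at e
  refine e.congr' ?_
  filter_upwards [eventually_gt_atTop 0] with x hx
  have hp : 0 < B * x + b := by positivity
  have hlog : Real.log (B * x + b) = Real.log B + Real.log x + Real.log (1 + b / B / x) := by
    rw [← Real.log_mul hB.ne' hx.ne', ← Real.log_mul (by positivity) (by positivity)]
    congr 1
    field_simp
  have hr : B * x * remR (B * x + b) = B * x * (psiR (B * x + b) - Real.log (B * x + b))
      + B * x / (2 * (B * x + b)) := by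
    unfold remR
    ring
  rw [hr, hlog]
  have h9 : (1 - b * (B * x + b)⁻¹) * (-1/2) = - (B * x / (2 * (B * x + b))) := by
    field_simp
    ring
  rw [h9]
  ring

lemma digamma_diff {z : ℂ} (hz : 0 < z.re) : DifferentiableAt ℂ Complex.digamma z := by
  have ho : IsOpen {w : ℂ | 0 < w.re} := isOpen_lt continuous_const Complex.continuous_re
  have hd : DifferentiableOn ℂ Complex.Gamma {w : ℂ | 0 < w.re} := by
    intro w hw
    apply DifferentiableAt.differentiableWithinAt
    apply Complex.differentiableAt_Gamma
    intro m h
    have h0 : (0:ℝ) < w.re := hw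
    rw [h] at h0
    have : (0:ℝ) ≤ m := m.cast_nonneg
    simp at h0
    linarith
  have h1 : DifferentiableAt ℂ (deriv Complex.Gamma) z :=
    (hd.deriv ho).differentiableAt (ho.mem_nhds hz)
  have h2 : DifferentiableAt ℂ Complex.Gamma z := hd.differentiableAt (ho.mem_nhds hz)
  exact h1.div h2 (Complex.Gamma_ne_zero_of_re_pos hz)

/-- Holomorphic extension and iterated derivatives. -/
lemma iteratedDeriv_ofReal (F : ℂ → ℂ) (g : ℝ → ℝ) (U : Set ℂ) (hU : IsOpen U)
    (hF : DifferentiableOn ℂ F U) (hmem : ∀ x : ℝ, 0 < x → (x : ℂ) ∈ U)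
    (hFg : ∀ x : ℝ, 0 < x → F x = (g x : ℂ)) (n : ℕ) :
    DifferentiableOn ℂ (iteratedDeriv n F) U ∧
      ∀ x : ℝ, 0 < x → iteratedDeriv n F x = ((iteratedDeriv n g x : ℝ) : ℂ) := by
  induction n with
  | zero => simpa using ⟨hF, hFg⟩
  | succ n ih =>
    obtain ⟨h1, h2⟩ := ih
    refine ⟨by rw [iteratedDeriv_succ]; exact h1.deriv hU, ?_⟩
    intro x hx
    rw [iteratedDeriv_succ, iteratedDeriv_succ]
    have hd := (h1.differentiableAt (hU.mem_nhds (hmem x hx))).hasDerivAt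
    have hev : ∀ᶠ y : ℝ in 𝓝 x, 0 < y := lt_mem_nhds hx
    have hr : HasDerivAt (iteratedDeriv n g) (deriv (iteratedDeriv n F) x).re x := by
      refine hd.real_of_complex.congr_of_eventuallyEq ?_
      filter_upwards [hev] with y hy
      rw [h2 y hy, Complex.ofReal_re]
    have hc : HasDerivAt (fun y : ℝ => ((iteratedDeriv n g y : ℝ) : ℂ))
        (deriv (iteratedDeriv n F) x) x := by
      refine hd.comp_ofReal.congr_of_eventuallyEq ?_
      filter_upwards [hev] with y hy
      rw [h2 y hy]
    rw [hr.deriv]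
    exact hc.unique hr.ofReal_comp

/-- A completely monotonic function with a holomorphic extension to `re z > -β` stays
nonnegative to the left. -/
lemma extension_nonneg (F : ℂ → ℂ) (g : ℝ → ℝ) (β : ℝ) (hβ : 0 ≤ β)
    (hF : DifferentiableOn ℂ F {z : ℂ | -β < z.re})
    (hFg : ∀ x : ℝ, 0 < x → F x = (g x : ℂ))
    (hg : ∀ (n : ℕ), ∀ x > (0 : ℝ), 0 ≤ (-1 : ℝ) ^ n * iteratedDeriv n g x)
    (x : ℝ) (hx : -β < x) (hx1 : x < 1) : 0 ≤ (F x).re := by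
  have hU : IsOpen {z : ℂ | -β < z.re} := isOpen_lt continuous_const Complex.continuous_re
  have hmem : ∀ x : ℝ, 0 < x → (x : ℂ) ∈ {z : ℂ | -β < z.re} := by
    intro x hx
    simp only [Set.mem_setOf_eq, Complex.ofReal_re]
    linarith
  have hball : Metric.ball ((1 : ℝ) : ℂ) (1 + β) ⊆ {z : ℂ | -β < z.re} := by
    intro z hz
    rw [Metric.mem_ball, Complex.dist_eq] at hz
    have h1 := Complex.abs_re_le_norm (z - ((1 : ℝ) : ℂ))
    simp only [Complex.sub_re, Complex.ofReal_re] at h1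
    have h2 := neg_abs_le (z.re - 1)
    simp only [Set.mem_setOf_eq]
    linarith
  have hxb : (x : ℂ) ∈ Metric.ball ((1 : ℝ) : ℂ) (1 + β) := by
    rw [Metric.mem_ball, Complex.dist_eq, ← Complex.ofReal_sub, Complex.norm_real,
      Real.norm_eq_abs, abs_of_neg (by linarith)]
    linarith
  have hs := Complex.hasSum_taylorSeries_on_ball (hF.mono hball) hxb
  have hre := Complex.hasSum_re hs
  refine hre.nonneg ?_
  intro n
  rw [(iteratedDeriv_ofReal F g _ hU hF hmem hFg n).2 1 one_pos]
  have h1 := hg n 1 one_pos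
  have h2 : ((((n.factorial : ℂ)⁻¹ • ((x : ℂ) - ((1 : ℝ) : ℂ)) ^ n •
      ((iteratedDeriv n g 1 : ℝ) : ℂ)) : ℂ)) =
      (((n.factorial : ℝ)⁻¹ * ((1 - x) ^ n * ((-1) ^ n * iteratedDeriv n g 1)) : ℝ) : ℂ) := by
    rw [← mul_assoc ((1 - x) ^ n), ← mul_pow]
    simp only [smul_eq_mul]
    push_cast
    congr 3
    ring
  rw [h2, Complex.ofReal_re]
  have : 0 ≤ 1 - x := by linarith
  positivity

section main

variable {p q : ℕ} (A : Fin p → ℝ) (B : Fin q → ℝ) (a : Fin p → ℝ) (b : Fin q → ℝ)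

/-- Minus the logarithmic derivative of `W`. -/
noncomputable def phiW (x : ℝ) : ℝ :=
  ∑ j, B j * psiR (B j * x + b j) - ∑ i, A i * psiR (A i * x + a i)

lemma logGamma_affine {A a x : ℝ} (hA : 0 < A) (ha : 0 ≤ a) (hx : 0 < x) :
    HasDerivAt (fun y => Real.log (Real.Gamma (A * y + a))) (A * psiR (A * x + a)) x := by
  have h1 : HasDerivAt (fun y : ℝ => A * y + a) A x := by
    simpa using ((hasDerivAt_id x).const_mul A).add_const a
  have h2 := HasDerivAt.comp x (logGamma_hasDerivAt (y := A * x + a) (by positivity)) h1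
  rw [mul_comm]
  exact h2

lemma deriv_logW (hA : ∀ i, 0 < A i) (hB : ∀ j, 0 < B j)
    (ha : ∀ i, 0 ≤ a i) (hb : ∀ j, 0 ≤ b j) {x : ℝ} (hx : 0 < x) :
    -deriv (fun y => Real.log ((∏ i, Real.Gamma (A i * y + a i)) /
      ∏ j, Real.Gamma (B j * y + b j))) x = phiW A B a b x := by
  have h1 : HasDerivAt (fun y => ∑ i, Real.log (Real.Gamma (A i * y + a i)) -
      ∑ j, Real.log (Real.Gamma (B j * y + b j)))
      (∑ i, A i * psiR (A i * x + a i) - ∑ j, B j * psiR (B j * x + b j)) x := by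
    refine HasDerivAt.sub ?_ ?_
    · exact HasDerivAt.fun_sum fun i _ => logGamma_affine (hA i) (ha i) hx
    · exact HasDerivAt.fun_sum fun j _ => logGamma_affine (hB j) (hb j) hx
  have h2 := h1.congr_of_eventuallyEq (f₁ := fun y => Real.log ((∏ i, Real.Gamma (A i * y + a i)) /
      ∏ j, Real.Gamma (B j * y + b j))) (by
    filter_upwards [lt_mem_nhds hx] with y hy
    have p1 : ∀ i, Real.Gamma (A i * y + a i) ≠ 0 := fun i =>
      (Real.Gamma_pos_of_pos (by have := hA i; have := ha i; positivity)).ne'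
    have p2 : ∀ j, Real.Gamma (B j * y + b j) ≠ 0 := fun j =>
      (Real.Gamma_pos_of_pos (by have := hB j; have := hb j; positivity)).ne'
    rw [Real.log_div (Finset.prod_ne_zero_iff.2 fun i _ => p1 i)
      (Finset.prod_ne_zero_iff.2 fun j _ => p2 j), Real.log_prod fun i _ => p1 i,
      Real.log_prod fun j _ => p2 j])
  rw [h2.deriv, phiW]
  ring

lemma phiW_asymp (hA : ∀ i, 0 < A i) (hB : ∀ j, 0 < B j)
    (ha : ∀ i, 0 ≤ a i) (hb : ∀ j, 0 ≤ b j) :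
    Tendsto (fun x => x * (phiW A B a b x - (∑ j, B j - ∑ i, A i) * Real.log x
      - (∑ j, B j * Real.log (B j) - ∑ i, A i * Real.log (A i)))) atTop
      (𝓝 (∑ j, b j - ∑ i, a i + ((p : ℝ) - q) / 2)) := by
  have h1 := (tendsto_finsetSum Finset.univ fun j _ => key_asymp (b j) (hB j) (hb j)).sub
    (tendsto_finsetSum Finset.univ fun i _ => key_asymp (a i) (hA i) (ha i))
  have h2 : (∑ j, (b j - 1 / 2)) - ∑ i, (a i - 1 / 2) =
      ∑ j, b j - ∑ i, a i + ((p : ℝ) - q) / 2 := by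
    simp only [Finset.sum_sub_distrib, Finset.sum_const, Finset.card_univ, Fintype.card_fin,
      nsmul_eq_mul]
    ring
  rw [h2] at h1
  refine h1.congr fun x => ?_
  simp only [phiW, ← Finset.mul_sum, Finset.sum_sub_distrib, ← Finset.sum_mul]
  ring

lemma part_d (hp : 1 ≤ p) (hq : 1 ≤ q) (hA : ∀ i, 0 < A i) (hB : ∀ j, 0 < B j)
    (hb : ∀ j, 0 ≤ b j) (g : ℝ → ℝ) (hgp : ∀ x > 0, g x = phiW A B a b x)
    (hg : ∀ (n : ℕ), ∀ x > (0 : ℝ), 0 ≤ (-1 : ℝ) ^ n * iteratedDeriv n g x) :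
    (⨅ i, a i / A i) ≤ ⨅ j, b j / B j := by
  haveI : Nonempty (Fin p) := ⟨⟨0, hp⟩⟩
  haveI : Nonempty (Fin q) := ⟨⟨0, hq⟩⟩
  by_contra hcon
  push Not at hcon
  obtain ⟨j0, hj0⟩ := Finite.exists_min (fun j => b j / B j)
  set β := b j0 / B j0 with hβdef
  have hβ : 0 ≤ β := div_nonneg (hb j0) (hB j0).le
  have hlt : ∀ i, β < a i / A i := by
    intro i
    calc β ≤ ⨅ j, b j / B j := le_ciInf hj0
      _ < ⨅ i, a i / A i := hcon
      _ ≤ a i / A i := ciInf_le (Set.finite_range _).bddBelow i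
  have posA : ∀ i (r : ℝ), -β ≤ r → 0 < A i * r + a i := by
    intro i r hr
    have h1 := hlt i
    rw [lt_div_iff₀ (hA i)] at h1
    have := mul_le_mul_of_nonneg_left hr (hA i).le
    linarith
  have nonnegB : ∀ j (r : ℝ), -β ≤ r → 0 ≤ B j * r + b j := by
    intro j r hr
    have h1 : β ≤ b j / B j := hj0 j
    rw [le_div_iff₀ (hB j)] at h1
    have := mul_le_mul_of_nonneg_left hr (hB j).le
    linarith
  have posB : ∀ j (r : ℝ), -β < r → 0 < B j * r + b j := by
    intro j r hr
    have h1 := nonnegB j (-β) le_rfl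
    have := mul_lt_mul_of_pos_left hr (hB j)
    linarith
  let F : ℂ → ℂ := fun z => ∑ j, (B j : ℂ) * Complex.digamma (B j * z + b j) -
    ∑ i, (A i : ℂ) * Complex.digamma (A i * z + a i)
  have hdig : ∀ (c d : ℝ) (z : ℂ), 0 < c * z.re + d →
      DifferentiableAt ℂ (fun z : ℂ => (c : ℂ) * Complex.digamma (c * z + d)) z := by
    intro c d z hz
    have h1 : DifferentiableAt ℂ (fun z : ℂ => (c : ℂ) * z + d) z := by fun_prop
    have h2 : DifferentiableAt ℂ Complex.digamma ((c : ℂ) * z + d) :=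
      digamma_diff (by simpa using hz)
    exact (DifferentiableAt.comp z h2 h1).const_mul _
  have hF : DifferentiableOn ℂ F {z : ℂ | -β < z.re} := by
    intro z hz
    apply DifferentiableAt.differentiableWithinAt
    refine DifferentiableAt.sub ?_ ?_
    · exact DifferentiableAt.fun_sum fun j _ => hdig _ _ _ (posB j _ hz)
    · exact DifferentiableAt.fun_sum fun i _ => hdig _ _ _ (posA i _ (le_of_lt hz))
  have hFphi : ∀ x : ℝ, -β < x → F x = (phiW A B a b x : ℂ) := by
    intro x hx
    simp only [F, phiW]
    push_cast
    congr 1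
    · refine Finset.sum_congr rfl fun j _ => ?_
      rw [← digamma_ofReal (posB j x hx)]
      push_cast
      rfl
    · refine Finset.sum_congr rfl fun i _ => ?_
      rw [← digamma_ofReal (posA i x hx.le)]
      push_cast
      rfl
  have hnn : ∀ x : ℝ, -β < x → x < 1 → 0 ≤ phiW A B a b x := by
    intro x hx hx1
    have h := extension_nonneg F g β hβ hF
      (fun x hx => by rw [hFphi x (by linarith), hgp x hx]) hg x hx hx1
    rwa [hFphi x hx, Complex.ofReal_re] at h
  -- the regular part
  let G : ℂ → ℂ := fun z => ∑ j, (B j : ℂ) * Complex.digamma (B j * z + ((b j + 1 : ℝ) : ℂ)) -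
    ∑ i, (A i : ℂ) * Complex.digamma (A i * z + a i)
  have hG : ContinuousAt G ((-β : ℝ) : ℂ) := by
    apply DifferentiableAt.continuousAt (𝕜 := ℂ)
    refine DifferentiableAt.sub ?_ ?_
    · refine DifferentiableAt.fun_sum fun j _ => hdig _ _ _ ?_
      have := nonnegB j (-β) le_rfl
      rw [Complex.ofReal_re]
      linarith
    · refine DifferentiableAt.fun_sum fun i _ => hdig _ _ _ ?_
      rw [Complex.ofReal_re]
      exact posA i (-β) le_rfl
  have hle : ∀ x : ℝ, -β < x → phiW A B a b x ≤ (G x).re - 1 / (x + β) := by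
    intro x hx
    have hGx : (G x).re = ∑ j, B j * psiR (B j * x + b j + 1) -
        ∑ i, A i * psiR (A i * x + a i) := by
      rw [← Complex.ofReal_re (∑ j, B j * psiR (B j * x + b j + 1) -
        ∑ i, A i * psiR (A i * x + a i))]
      congr 1
      simp only [G]
      push_cast
      congr 1
      · refine Finset.sum_congr rfl fun j _ => ?_
        rw [← digamma_ofReal (by have := posB j x hx; linarith)]
        push_cast
        rw [add_assoc]
      · refine Finset.sum_congr rfl fun i _ => ?_
        rw [← digamma_ofReal (posA i x hx.le)]
        push_cast
        rfl
    have h1 : ∑ j, B j * psiR (B j * x + b j + 1) = ∑ j, B j * psiR (B j * x + b j) +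
        ∑ j, B j / (B j * x + b j) := by
      rw [← Finset.sum_add_distrib]
      refine Finset.sum_congr rfl fun j _ => ?_
      rw [psiR_add_one (posB j x hx)]
      ring
    have h2 : 1 / (x + β) ≤ ∑ j, B j / (B j * x + b j) := by
      have h3 : 1 / (x + β) = B j0 / (B j0 * x + b j0) := by
        have e1 : B j0 * x + b j0 = B j0 * (x + β) := by
          rw [hβdef]
          have := (hB j0).ne'
          field_simp
        rw [e1]
        have : x + β ≠ 0 := by linarith
        have := (hB j0).ne'
        field_simp
      rw [h3]
      exact Finset.single_le_sum (f := fun j => B j / (B j * x + b j))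
        (fun j _ => div_nonneg (hB j).le (posB j x hx).le) (Finset.mem_univ j0)
    rw [hGx, h1, phiW]
    linarith
  have hlim : Tendsto (fun x : ℝ => (G x).re) (𝓝[>] (-β)) (𝓝 (G ((-β : ℝ) : ℂ)).re) := by
    have h1 : ContinuousAt (fun x : ℝ => (G x).re) (-β) :=
      Complex.continuous_re.continuousAt.comp
        (ContinuousAt.comp (f := fun x : ℝ => (x : ℂ)) hG Complex.continuous_ofReal.continuousAt)
    exact h1.tendsto.mono_left nhdsWithin_le_nhds
  have hinv : Tendsto (fun x : ℝ => 1 / (x + β)) (𝓝[>] (-β)) atTop := by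
    simp only [one_div]
    apply tendsto_inv_nhdsGT_zero.comp
    rw [tendsto_nhdsWithin_iff]
    constructor
    · have h1 : ContinuousAt (fun x : ℝ => x + β) (-β) := by fun_prop
      have h2 := h1.tendsto.mono_left (nhdsWithin_le_nhds (s := Set.Ioi (-β)))
      simpa using h2
    · filter_upwards [self_mem_nhdsWithin] with x hx
      have : -β < x := hx
      simp only [Set.mem_Ioi]
      linarith
  have e1 : ∀ᶠ x : ℝ in 𝓝[>] (-β), (G x).re < (G ((-β : ℝ) : ℂ)).re + 1 :=
    hlim.eventually (gt_mem_nhds (by linarith))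
  have e2 := hinv.eventually_gt_atTop ((G ((-β : ℝ) : ℂ)).re + 1)
  have e3 : ∀ᶠ x : ℝ in 𝓝[>] (-β), x < 1 :=
    nhdsWithin_le_nhds (gt_mem_nhds (by linarith))
  obtain ⟨x, h1, h2, h3, h4⟩ := (e1.and (e2.and (e3.and self_mem_nhdsWithin))).exists
  have h5 := hnn x h4 h3
  have h6 := hle x h4
  linarith

end main

theorem stmt9 (p q : ℕ) (hp : 1 ≤ p) (hq : 1 ≤ q)
    (A : Fin p → ℝ) (B : Fin q → ℝ) (a : Fin p → ℝ) (b : Fin q → ℝ)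
    (hA : ∀ i, 0 < A i) (hB : ∀ j, 0 < B j)
    (ha : ∀ i, 0 ≤ a i) (hb : ∀ j, 0 ≤ b j)
    (hW : LogCompletelyMonotonic
      (fun x => (∏ i, Real.Gamma (A i * x + a i)) / ∏ j, Real.Gamma (B j * x + b j))) :
    (∑ j, B j = ∑ i, A i) ∧
      ((∏ i, A i ^ A i) * ∏ j, B j ^ (-B j) ≤ 1) ∧
      (0 ≤ (∑ j, b j) - (∑ i, a i) + ((p : ℝ) - (q : ℝ)) / 2) ∧
      ((⨅ i, a i / A i) ≤ ⨅ j, b j / B j) := by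
  obtain ⟨-, hsm, hcm⟩ := hW
  set g : ℝ → ℝ := fun x => -deriv (fun y => Real.log ((fun x =>
    (∏ i, Real.Gamma (A i * x + a i)) / ∏ j, Real.Gamma (B j * x + b j)) y)) x with hgdef
  have hgp : ∀ x > 0, g x = phiW A B a b x := fun x hx => deriv_logW A B a b hA hB ha hb hx
  have hd := part_d A B a b hp hq hA hB hb g hgp hcm
  have hnn : ∀ x > 0, 0 ≤ phiW A B a b x := by
    intro x hx
    have := hcm 0 x hx
    rw [← hgp x hx]
    simpa using this
  have hphid : ∀ x > 0, DifferentiableAt ℝ g x := by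
    intro x hx
    exact (hsm x hx).differentiableAt (by simp)
  have hanti : AntitoneOn g (Set.Ioi 0) := by
    apply antitoneOn_of_deriv_nonpos (convex_Ioi 0)
    · exact fun x hx => (hphid x hx).continuousAt.continuousWithinAt
    · rw [interior_Ioi]
      exact fun x hx => (hphid x hx).differentiableWithinAt
    · rw [interior_Ioi]
      intro x hx
      have := hcm 1 x hx
      simp [iteratedDeriv_one] at this
      linarith
  have hanti' : ∀ x y, 0 < x → x ≤ y → phiW A B a b y ≤ phiW A B a b x := by
    intro x y hx hxy
    rw [← hgp x hx, ← hgp y (by linarith)]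
    exact hanti hx (show 0 < y by linarith) hxy
  have hasy := phiW_asymp A B a b hA hB ha hb
  set φ := phiW A B a b
  set L := ∑ j, B j * Real.log (B j) - ∑ i, A i * Real.log (A i) with hL
  set D := ∑ j, B j - ∑ i, A i with hD
  have h0 : Tendsto (fun x => φ x - D * Real.log x - L) atTop (𝓝 0) := by
    have h := hasy.mul (tendsto_inv_atTop_zero (𝕜 := ℝ))
    rw [mul_zero] at h
    refine h.congr' ?_
    filter_upwards [eventually_gt_atTop 0] with x hx
    field_simp
  have hD0 : D = 0 := by
    rcases lt_trichotomy D 0 with h | h | h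
    · exfalso
      have h1 : Tendsto (fun x => D * Real.log x + L) atTop atBot :=
        tendsto_atBot_add_const_right _ _ (Real.tendsto_log_atTop.const_mul_atTop_of_neg h)
      have e1 := h1.eventually_lt_atBot (-1)
      have e2 := h0.eventually (gt_mem_nhds (zero_lt_one))
      obtain ⟨x, q1, q2, q3⟩ := (e1.and (e2.and (eventually_gt_atTop 0))).exists
      have := hnn x q3
      linarith
    · exact h
    · exfalso
      have h1 : Tendsto (fun x => D * Real.log x + L) atTop atTop :=
        tendsto_atTop_add_const_right _ _ (Real.tendsto_log_atTop.const_mul_atTop h)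
      have e1 := h1.eventually_gt_atTop (φ 1 + 1)
      have e2 := h0.eventually (lt_mem_nhds (show (-1 : ℝ) < 0 by norm_num))
      obtain ⟨x, q1, q2, q3⟩ := (e1.and (e2.and (eventually_gt_atTop 1))).exists
      have := hanti' 1 x one_pos q3.le
      linarith
  rw [hD0] at h0 hasy
  simp only [zero_mul, sub_zero] at h0 hasy
  have hlim : Tendsto φ atTop (𝓝 L) := by
    have := h0.add_const L
    simpa using this
  have hLnn : 0 ≤ L := by
    apply ge_of_tendsto hlim
    filter_upwards [eventually_gt_atTop 0] with x hx using hnn x hx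
  refine ⟨by linarith, ?_, ?_, hd⟩
  · have e1 : ∀ i, A i ^ A i = Real.exp (A i * Real.log (A i)) := fun i => by
      rw [Real.rpow_def_of_pos (hA i), mul_comm]
    have e2 : ∀ j, B j ^ (-B j) = Real.exp (-(B j * Real.log (B j))) := fun j => by
      rw [Real.rpow_def_of_pos (hB j)]
      congr 1
      ring
    simp only [e1, e2]
    rw [← Real.exp_sum, ← Real.exp_sum, ← Real.exp_add, Real.exp_le_one_iff,
      Finset.sum_neg_distrib]
    linarith
  · apply ge_of_tendsto hasy
    filter_upwards [eventually_gt_atTop 0] with x hx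
    apply mul_nonneg hx.le
    have : L ≤ φ x := by
      apply le_of_tendsto hlim
      filter_upwards [eventually_ge_atTop x] with y hy using hanti' x y hx hy
    linarith
end

section
/- Let p, q ≥ 1, let A_1,…,A_p, B_1,…,B_q be strictly positive reals and a_1,…,a_p, b_1,…,b_q be reals with Σ_{i=1}^p A_i = Σ_{j=1}^q B_j and μ = Σ_{j=1}^q b_j − Σ_{k=1}^p a_k + (p−q)/2 > 0. Set ρ = ∏_{k=1}^p A_k^{A_k} · ∏_{j=1}^q B_j^{−B_j} and γ = −min_{1≤k≤p}(a_k/A_k), and fix c > γ. Then for every real x > ρ the limit lim_{R→∞} (1/(2π)) ∫_{−R}^{R} [∏_{k=1}^p Γ(A_k(c+it)+a_k) / ∏_{j=1}^q Γ(B_j(c+it)+b_j)] · x^{−(c+it)} dt exists and equals 0. -/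
open MeasureTheory Filter

lemma clog_sub_aux (z w : ℂ) (hz : 0 < z.re) (hw : 0 < w.re) :
    Complex.log w - Complex.log z = Complex.log (w / z) := by
  have hz0 : z ≠ 0 := by rintro rfl; simp at hz
  have hw0 : w ≠ 0 := by rintro rfl; simp at hw
  have h1 := Complex.abs_arg_lt_pi_div_two_iff.2 (Or.inl hz)
  have h2 := Complex.abs_arg_lt_pi_div_two_iff.2 (Or.inl hw)
  rw [abs_lt] at h1 h2
  have h : w / z = Complex.exp (Complex.log w - Complex.log z) := by
    rw [Complex.exp_sub, Complex.exp_log hw0, Complex.exp_log hz0]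
  rw [h, Complex.log_exp]
  · simp only [Complex.sub_im, Complex.log_im]; linarith [h1.1, h1.2, h2.1, h2.2]
  · simp only [Complex.sub_im, Complex.log_im]; linarith [h1.1, h1.2, h2.1, h2.2]

lemma stirling_step (z : ℂ) (hz : 2 ≤ z.re) :
    ‖1 - (z + 1 / 2) * (Complex.log (z + 1) - Complex.log z)‖ ≤ 2 / ‖z‖ ^ 2 := by
  have hn : 2 ≤ ‖z‖ := hz.trans (Complex.re_le_norm z)
  have hz0 : z ≠ 0 := by rintro rfl; norm_num at hz
  rw [clog_sub_aux z (z + 1) (by linarith) (by simp; linarith)]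
  have hw : (z + 1) / z = 1 + z⁻¹ := by field_simp
  rw [hw]
  have hnw : ‖z⁻¹‖ ≤ 1 / 2 := by
    rw [norm_inv, one_div]; exact inv_anti₀ (by norm_num) hn
  have ht := Complex.norm_log_sub_logTaylor_le 2 (z := z⁻¹) (by linarith)
  have hT : Complex.logTaylor (2 + 1) z⁻¹ = z⁻¹ - z⁻¹ ^ 2 / 2 := by
    simp [Complex.logTaylor_succ, Complex.logTaylor_zero]; ring
  rw [hT] at ht
  set e := Complex.log (1 + z⁻¹) - (z⁻¹ - z⁻¹ ^ 2 / 2) with he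
  have hlog : Complex.log (1 + z⁻¹) = (z⁻¹ - z⁻¹ ^ 2 / 2) + e := by rw [he]; ring
  have hid : 1 - (z + 1 / 2) * Complex.log (1 + z⁻¹) = z⁻¹ ^ 2 / 4 - (z + 1 / 2) * e := by
    rw [hlog]; field_simp; ring
  rw [hid]
  have hinv : (1 - ‖z⁻¹‖)⁻¹ ≤ 2 := by
    rw [inv_le_comm₀ (by linarith) (by norm_num)]; linarith
  have he2 : ‖e‖ ≤ ‖z⁻¹‖ ^ 3 * (2 / 3) := by
    refine ht.trans ?_
    have := mul_le_mul_of_nonneg_left hinv (pow_nonneg (norm_nonneg z⁻¹) 3)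
    norm_num at this ⊢
    linarith
  have h3 : ‖z + 1 / 2‖ ≤ 5 / 4 * ‖z‖ := by
    refine (norm_add_le _ _).trans ?_
    have : ‖(1 / 2 : ℂ)‖ = 1 / 2 := by norm_num
    rw [this]; linarith
  have h4 : ‖(z + 1 / 2) * e‖ ≤ 5 / 6 * ‖z⁻¹‖ ^ 2 := by
    rw [norm_mul]
    calc ‖z + 1 / 2‖ * ‖e‖ ≤ (5 / 4 * ‖z‖) * (‖z⁻¹‖ ^ 3 * (2 / 3)) := by gcongr
      _ = 5 / 6 * ‖z⁻¹‖ ^ 2 := by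
        rw [norm_inv]; have : ‖z‖ ≠ 0 := by linarith
        field_simp; norm_num
  have h5 : ‖z⁻¹ ^ 2 / 4‖ = ‖z⁻¹‖ ^ 2 / 4 := by simp
  calc _ ≤ ‖z⁻¹ ^ 2 / 4‖ + ‖(z + 1 / 2) * e‖ := norm_sub_le _ _
    _ ≤ 2 * ‖z⁻¹‖ ^ 2 := by rw [h5]; nlinarith [sq_nonneg ‖z⁻¹‖]
    _ = _ := by rw [norm_inv]; ring

noncomputable def stirL (z : ℂ) : ℝ :=
  Real.log ‖Complex.Gamma z‖ - ((z - 1 / 2) * Complex.log z - z).re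

lemma stirL_succ (z : ℂ) (hz : 2 ≤ z.re) :
    stirL (z + 1) - stirL z = (1 - (z + 1 / 2) * (Complex.log (z + 1) - Complex.log z)).re := by
  have hz0 : z ≠ 0 := by rintro rfl; norm_num at hz
  have hg : Complex.Gamma z ≠ 0 := Complex.Gamma_ne_zero_of_re_pos (by linarith)
  unfold stirL
  rw [Complex.Gamma_add_one z hz0, norm_mul,
    Real.log_mul (norm_ne_zero_iff.2 hz0) (norm_ne_zero_iff.2 hg), ← Complex.log_re z]
  have : (z.log.re + Real.log ‖Complex.Gamma z‖ - ((z + 1 - 1 / 2) * Complex.log (z + 1) - (z + 1)).re -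
    (Real.log ‖Complex.Gamma z‖ - ((z - 1 / 2) * Complex.log z - z).re))
    = (z.log - ((z + 1 - 1 / 2) * Complex.log (z + 1) - (z + 1)) + ((z - 1 / 2) * Complex.log z - z)).re := by
    rw [Complex.add_re (z.log - _), Complex.sub_re z.log]; ring
  rw [this]; congr 1; ring

lemma stirL_add_nat (z : ℂ) (hz : 2 ≤ z.re) (n : ℕ) :
    |stirL (z + n) - stirL z| ≤ 2 - 2 / (n + 1) := by
  induction n with
  | zero => simp
  | succ n ih =>
    have hre : (z + n).re = z.re + n := by simp
    have hn0 : (0 : ℝ) ≤ n := Nat.cast_nonneg n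
    have h2 : 2 ≤ (z + n).re := by rw [hre]; linarith
    have h1 := stirL_succ (z + n) h2
    have h3 := stirling_step (z + n) h2
    have h4 := (Complex.abs_re_le_norm _).trans h3
    rw [← h1] at h4
    have h5 : (n : ℝ) + 2 ≤ ‖z + n‖ := by
      refine le_trans ?_ (Complex.re_le_norm _); rw [hre]; linarith
    have h6 : 2 / ‖z + n‖ ^ 2 ≤ 2 / (n + 1 : ℝ) - 2 / (n + 1 + 1) := by
      have : 2 / (n + 1 : ℝ) - 2 / (n + 1 + 1) = 2 / ((n + 1) * (n + 2)) := by field_simp; ring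
      rw [this]
      apply div_le_div_of_nonneg_left (by norm_num) (by positivity)
      nlinarith
    push_cast
    rw [← add_assoc]
    calc _ ≤ |stirL (z + n + 1) - stirL (z + n)| + |stirL (z + n) - stirL z| := abs_sub_le _ _ _
      _ ≤ _ := by linarith

lemma gammaSeq_mul (z : ℂ) (hz : 0 < z.re) (n : ℕ) :
    Complex.GammaSeq z n * Complex.Gamma (z + n + 1) =
      Complex.Gamma z * ((n : ℂ) ^ z * (n.factorial : ℂ)) := by
  have hne : ∀ j : ℕ, z + j ≠ 0 := by
    intro j h
    have := congrArg Complex.re h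
    simp at this
    have : (0 : ℝ) ≤ j := Nat.cast_nonneg j
    linarith
  have hG : ∀ m : ℕ, Complex.Gamma (z + m) = Complex.Gamma z * ∏ j ∈ Finset.range m, (z + j) := by
    intro m
    induction m with
    | zero => simp
    | succ m ih =>
      push_cast
      rw [← add_assoc, Complex.Gamma_add_one _ (hne m), ih, Finset.prod_range_succ]; ring
  have := hG (n + 1)
  push_cast at this
  rw [add_assoc, this, Complex.GammaSeq]
  have h0 : ∏ j ∈ Finset.range (n + 1), (z + (j : ℂ)) ≠ 0 := Finset.prod_ne_zero_iff.2 fun j _ => hne j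
  field_simp

lemma log_limit (z : ℂ) (hz : 0 < z.re) :
    Tendsto (fun n : ℕ => (z + n + 1 / 2) * (Complex.log (z + n + 1) - Complex.log n)) atTop
      (nhds (z + 1)) := by
  have hc : Tendsto (fun n : ℕ => (n : ℂ)⁻¹) atTop (nhds 0) := tendsto_inv_atTop_nhds_zero_nat (𝕜 := ℂ)
  have h1 : Tendsto (fun n : ℕ => (n : ℂ) * Complex.log (1 + (z + 1) / n)) atTop (nhds (z + 1)) := by
    apply Complex.tendsto_nat_mul_log_one_add_of_tendsto
    apply tendsto_const_nhds.congr'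
    filter_upwards [eventually_gt_atTop 0] with n hn
    have : (n : ℂ) ≠ 0 := by exact_mod_cast hn.ne'
    field_simp
  have h2 : Tendsto (fun n : ℕ => ((n : ℂ)⁻¹ * (z + 1 / 2) + 1) *
      ((n : ℂ) * Complex.log (1 + (z + 1) / n))) atTop (nhds ((0 * (z + 1 / 2) + 1) * (z + 1))) :=
    ((hc.mul_const _).add_const 1).mul h1
  rw [zero_mul, zero_add, one_mul] at h2
  refine h2.congr' ?_
  filter_upwards [eventually_gt_atTop 0] with n hn
  have hn0 : (n : ℂ) ≠ 0 := by exact_mod_cast hn.ne'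
  have hnr : (0 : ℝ) < n := by exact_mod_cast hn
  rw [clog_sub_aux n (z + n + 1) (by simpa using hnr) (by simp; linarith)]
  have : (z + n + 1) / (n : ℂ) = 1 + (z + 1) / n := by field_simp; ring
  rw [this]; field_simp; ring

lemma stirL_limit (z : ℂ) (hz : 2 ≤ z.re) :
    Tendsto (fun n : ℕ => stirL (z + (n + 1 : ℕ))) atTop
      (nhds (Real.log √Real.pi + 1 / 2 * Real.log 2)) := by
  have hg : Complex.Gamma z ≠ 0 := Complex.Gamma_ne_zero_of_re_pos (by linarith)
  have h1 : Tendsto (fun n => Real.log ‖Complex.GammaSeq z n‖) atTop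
      (nhds (Real.log ‖Complex.Gamma z‖)) :=
    ((Complex.GammaSeq_tendsto_Gamma z).norm).log (norm_ne_zero_iff.2 hg)
  have h2 : Tendsto (fun n => Real.log (Stirling.stirlingSeq n)) atTop (nhds (Real.log √Real.pi)) :=
    Stirling.tendsto_stirlingSeq_sqrt_pi.log (by positivity)
  have h3 := (Complex.continuous_re.tendsto _).comp (log_limit z (by linarith))
  have h4 := (((h1.const_sub (Real.log ‖Complex.Gamma z‖)).add h2).add_const
    (1 / 2 * Real.log 2)).sub (h3.sub_const (z + 1).re)
  rw [sub_self, sub_self, zero_add, sub_zero] at h4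
  refine h4.congr' ?_
  filter_upwards [eventually_gt_atTop 0] with n hn
  have hn0 : (n : ℂ) ≠ 0 := by exact_mod_cast hn.ne'
  have hnr : (0 : ℝ) < n := by exact_mod_cast hn
  have hG1 : Complex.Gamma (z + n + 1) ≠ 0 :=
    Complex.Gamma_ne_zero_of_re_pos (by simp; linarith)
  have hm := gammaSeq_mul z (by linarith) n
  have hfac : (n.factorial : ℂ) ≠ 0 := by exact_mod_cast n.factorial_ne_zero
  have hcp : (n : ℂ) ^ z ≠ 0 := by simp [Complex.cpow_eq_zero_iff, hn0]
  have hseq : Complex.GammaSeq z n ≠ 0 := by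
    intro h; rw [h, zero_mul] at hm
    exact (mul_ne_zero hg (mul_ne_zero hcp hfac)) hm.symm
  have hl := congrArg (fun w => Real.log ‖w‖) hm
  simp only [norm_mul] at hl
  rw [Real.log_mul (norm_ne_zero_iff.2 hseq) (norm_ne_zero_iff.2 hG1),
    Real.log_mul (norm_ne_zero_iff.2 hg) (mul_ne_zero (norm_ne_zero_iff.2 hcp) (norm_ne_zero_iff.2 hfac)),
    Real.log_mul (norm_ne_zero_iff.2 hcp) (norm_ne_zero_iff.2 hfac),
    Complex.norm_natCast_cpow_of_pos hn, Real.log_rpow hnr, Complex.norm_natCast] at hl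
  rw [Stirling.log_stirlingSeq_formula, Real.log_mul (by norm_num) hnr.ne',
    Real.log_div hnr.ne' (by positivity), Real.log_exp]
  unfold stirL
  push_cast
  rw [← add_assoc]
  have hlogn : Complex.log (n : ℂ) = ((Real.log n : ℝ) : ℂ) := by
    rw [← Complex.ofReal_natCast, Complex.ofReal_log hnr.le]
  have he : ((z + n + 1 - 1 / 2) * Complex.log (z + n + 1) - (z + n + 1)).re =
     ((z + n + 1 / 2) * (Complex.log (z + n + 1) - Complex.log n)).re +
     (z.re + n + 1 / 2) * Real.log n - (z.re + n + 1) := by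
    have e1 : ((z.re + n + 1 / 2) * Real.log n : ℝ) = ((z + n + 1 / 2) * Complex.log n).re := by
      rw [hlogn, Complex.re_mul_ofReal]; simp
    have e2 : (z.re + n + 1 : ℝ) = (z + n + 1).re := by simp
    rw [e1, e2, ← Complex.add_re, ← Complex.sub_re]; congr 1; ring
  rw [he]
  simp only [Function.comp_apply, Complex.add_re, Complex.one_re]
  linarith

lemma stirL_bound : ∃ C : ℝ, ∀ z : ℂ, 2 ≤ z.re → |stirL z| ≤ C := by
  refine ⟨2 + |Real.log √Real.pi + 1 / 2 * Real.log 2|, fun z hz => ?_⟩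
  have h := (stirL_limit z hz).abs
  have : |stirL z| - 2 ≤ |Real.log √Real.pi + 1 / 2 * Real.log 2| := by
    refine ge_of_tendsto' h fun n => ?_
    have h1 := stirL_add_nat z hz (n + 1)
    have h2 : (0 : ℝ) ≤ 2 / (((n + 1 : ℕ) : ℝ) + 1) := by positivity
    have h3 := abs_sub_abs_le_abs_sub (stirL z) (stirL (z + (n + 1 : ℕ)))
    rw [abs_sub_comm] at h3
    linarith
  linarith

noncomputable def gref (A a : ℝ) (u : ℂ) : ℝ :=
  A * (u * Complex.log u).re + (a - 1 / 2) * Real.log ‖u‖ + (A * Real.log A - A) * u.re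

lemma gamma_ref_base (A a : ℝ) (hA : 0 < A) (ha : 2 ≤ a) :
    ∃ C T : ℝ, ∀ u : ℂ, 1 ≤ u.re → T ≤ ‖u‖ →
      Complex.Gamma (A * u + a) ≠ 0 ∧
        |Real.log ‖Complex.Gamma (A * u + a)‖ - gref A a u| ≤ C := by
  obtain ⟨C, hC⟩ := stirL_bound
  refine ⟨C + (|(a - 1 / 2) * Real.log A - a| + (A + |a - 1 / 2|) * (3 / 2 * (a / A))), 2 * a / A,
    fun u hu hT => ?_⟩
  have hu0 : u ≠ 0 := by rintro rfl; norm_num at hu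
  have hun : 1 ≤ ‖u‖ := hu.trans (Complex.re_le_norm u)
  have hA0 : (A : ℂ) ≠ 0 := by exact_mod_cast hA.ne'
  have hAu : 0 < ((A : ℂ) * u).re := by rw [Complex.re_ofReal_mul]; positivity
  have hre : ((A : ℂ) * u + a).re = ((A : ℂ) * u).re + a := by simp
  have hz2 : 2 ≤ ((A : ℂ) * u + a).re := by rw [hre]; linarith
  refine ⟨Complex.Gamma_ne_zero_of_re_pos (by linarith), ?_⟩
  have h1 := hC _ hz2
  set w : ℂ := a / (A * u) with hw
  have hwn : ‖w‖ = a / A / ‖u‖ := by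
    rw [hw, norm_div, norm_mul, Complex.norm_real, Complex.norm_real, Real.norm_of_nonneg (by linarith),
      Real.norm_of_nonneg hA.le, div_div]
  have hw2 : ‖w‖ ≤ 1 / 2 := by
    rw [hwn, div_div, div_le_iff₀ (by positivity)]
    rw [div_le_iff₀ hA] at hT; linarith
  have hlog : Complex.log (A * u + a) = Real.log A + Complex.log u + Complex.log (1 + w) := by
    have := clog_sub_aux (A * u) (A * u + a) hAu (by linarith)
    have e : ((A : ℂ) * u + a) / (A * u) = 1 + w := by rw [hw]; field_simp
    rw [e, Complex.log_ofReal_mul hA hu0] at this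
    rw [← this]; ring
  have hlw := Complex.norm_log_one_add_half_le_self hw2
  set ε := Complex.log (1 + w) with hε
  have key : ((A * u + a - 1 / 2) * Complex.log (A * u + a) - (A * u + a)).re - gref A a u =
      ((a - 1 / 2) * Real.log A - a) + ((A * u + (a - 1 / 2 : ℝ)) * ε).re := by
    have e1 : gref A a u = (A * (u * Complex.log u) + (a - 1 / 2 : ℝ) * Complex.log u +
        (A * Real.log A - A : ℝ) * u).re := by
      simp only [gref, Complex.add_re, Complex.re_ofReal_mul, Complex.log_re]
    have e2 : ((a - 1 / 2) * Real.log A - a : ℝ) = (((a - 1 / 2) * Real.log A - a : ℝ) : ℂ).re := by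
      rw [Complex.ofReal_re]
    rw [e1, e2, hlog, ← Complex.sub_re, ← Complex.add_re]
    congr 1; push_cast; ring
  have hb : |((A * u + (a - 1 / 2 : ℝ)) * ε).re| ≤ (A + |a - 1 / 2|) * (3 / 2 * (a / A)) := by
    refine (Complex.abs_re_le_norm _).trans ?_
    rw [norm_mul]
    have n1 : ‖(A * u + (a - 1 / 2 : ℝ) : ℂ)‖ ≤ (A + |a - 1 / 2|) * ‖u‖ := by
      refine (norm_add_le _ _).trans ?_
      rw [norm_mul, Complex.norm_real, Complex.norm_real, Real.norm_of_nonneg hA.le, Real.norm_eq_abs]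
      nlinarith [abs_nonneg (a - 1 / 2)]
    calc _ ≤ ((A + |a - 1 / 2|) * ‖u‖) * (3 / 2 * ‖w‖) := by gcongr
      _ = _ := by rw [hwn]; field_simp
  have hfin : Real.log ‖Complex.Gamma (A * u + a)‖ - gref A a u =
      stirL (A * u + a) + (((a - 1 / 2) * Real.log A - a) + ((A * u + (a - 1 / 2 : ℝ)) * ε).re) := by
    rw [← key]; unfold stirL; ring
  rw [hfin]
  refine (abs_add_le _ _).trans (add_le_add h1 ((abs_add_le _ _).trans (add_le_add le_rfl hb)))

lemma gamma_ref_step (A a : ℝ) (hA : 0 < A)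
    (h : ∃ C T : ℝ, ∀ u : ℂ, 1 ≤ u.re → T ≤ ‖u‖ →
      Complex.Gamma (A * u + (a + 1 : ℝ)) ≠ 0 ∧
        |Real.log ‖Complex.Gamma (A * u + (a + 1 : ℝ))‖ - gref A (a + 1) u| ≤ C) :
    ∃ C T : ℝ, ∀ u : ℂ, 1 ≤ u.re → T ≤ ‖u‖ →
      Complex.Gamma (A * u + a) ≠ 0 ∧
        |Real.log ‖Complex.Gamma (A * u + a)‖ - gref A a u| ≤ C := by
  obtain ⟨C, T, h⟩ := h
  refine ⟨C + (|Real.log (A / 2)| + |Real.log (2 * A)|), max T (2 * |a| / A), fun u hu hT => ?_⟩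
  obtain ⟨g0, g1⟩ := h u hu ((le_max_left _ _).trans hT)
  have hT2 := (le_max_right _ _).trans hT
  rw [div_le_iff₀ hA] at hT2
  have hun : 1 ≤ ‖u‖ := hu.trans (Complex.re_le_norm u)
  have hna : ‖(A : ℂ) * u‖ = A * ‖u‖ := by
    rw [norm_mul, Complex.norm_real, Real.norm_of_nonneg hA.le]
  have hnb : ‖(a : ℂ)‖ = |a| := by simp
  have up : ‖(A : ℂ) * u + a‖ ≤ 2 * A * ‖u‖ := by
    refine (norm_add_le _ _).trans ?_
    rw [hna, hnb]; nlinarith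
  have lo : A / 2 * ‖u‖ ≤ ‖(A : ℂ) * u + a‖ := by
    have := norm_sub_le_norm_add ((A : ℂ) * u) a
    rw [hna, hnb] at this; linarith
  have hpos : 0 < ‖(A : ℂ) * u + a‖ := lt_of_lt_of_le (by positivity) lo
  have hz : (A : ℂ) * u + a ≠ 0 := norm_pos_iff.1 hpos
  have hG : Complex.Gamma (A * u + (a + 1 : ℝ)) = (A * u + a) * Complex.Gamma (A * u + a) := by
    rw [← Complex.Gamma_add_one _ hz]; congr 1; push_cast; ring
  rw [hG] at g0 g1
  have g2 := right_ne_zero_of_mul g0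
  refine ⟨g2, ?_⟩
  rw [norm_mul, Real.log_mul hpos.ne' (norm_ne_zero_iff.2 g2)] at g1
  have l1 := Real.log_le_log (by positivity) lo
  have l2 := Real.log_le_log hpos up
  rw [Real.log_mul (by positivity) (by positivity)] at l1 l2
  have hr : gref A (a + 1) u = gref A a u + Real.log ‖u‖ := by unfold gref; ring
  rw [hr] at g1
  rw [abs_le] at g1 ⊢
  have := neg_abs_le (Real.log (A / 2))
  have := le_abs_self (Real.log (2 * A))
  have := abs_nonneg (Real.log (A / 2))
  have := abs_nonneg (Real.log (2 * A))
  constructor <;> linarith [g1.1, g1.2]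

lemma gamma_ref (A a : ℝ) (hA : 0 < A) :
    ∃ C T : ℝ, ∀ u : ℂ, 1 ≤ u.re → T ≤ ‖u‖ →
      Complex.Gamma (A * u + a) ≠ 0 ∧
        |Real.log ‖Complex.Gamma (A * u + a)‖ - gref A a u| ≤ C := by
  have key : ∀ n : ℕ, ∀ a : ℝ, 2 - n ≤ a → ∃ C T : ℝ, ∀ u : ℂ, 1 ≤ u.re → T ≤ ‖u‖ →
      Complex.Gamma (A * u + a) ≠ 0 ∧
        |Real.log ‖Complex.Gamma (A * u + a)‖ - gref A a u| ≤ C := by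
    intro n
    induction n with
    | zero => intro a ha; exact gamma_ref_base A a hA (by simpa using ha)
    | succ n ih =>
      intro a ha
      push_cast at ha
      exact gamma_ref_step A a hA (ih (a + 1) (by linarith))
  obtain ⟨n, hn⟩ := exists_nat_ge (2 - a)
  exact key n a (by linarith)

lemma prod_gamma_ref {p : ℕ} (A a : Fin p → ℝ) (hA : ∀ k, 0 < A k) :
    ∃ C T : ℝ, ∀ u : ℂ, 1 ≤ u.re → T ≤ ‖u‖ →
      (∏ k, Complex.Gamma (A k * u + a k)) ≠ 0 ∧
        |Real.log ‖∏ k, Complex.Gamma (A k * u + a k)‖ - ∑ k, gref (A k) (a k) u| ≤ C := by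
  choose C T h using fun k => gamma_ref (A k) (a k) (hA k)
  refine ⟨∑ k, C k, ∑ k, |T k|, fun u hu hT => ?_⟩
  have hk : ∀ k, T k ≤ ‖u‖ := fun k =>
    ((le_abs_self _).trans (Finset.single_le_sum (f := fun k => |T k|)
      (fun i _ => abs_nonneg _) (Finset.mem_univ k))).trans hT
  have h1 := fun k => (h k u hu (hk k)).1
  refine ⟨Finset.prod_ne_zero_iff.2 fun k _ => h1 k, ?_⟩
  rw [norm_prod, Real.log_prod (fun k _ => norm_ne_zero_iff.2 (h1 k)), ← Finset.sum_sub_distrib]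
  exact (Finset.abs_sum_le_sum_abs _ _).trans (Finset.sum_le_sum fun k _ => (h k u hu (hk k)).2)

lemma ratio_bound {p q : ℕ} (A a : Fin p → ℝ) (B b : Fin q → ℝ) (hA : ∀ k, 0 < A k)
    (hB : ∀ j, 0 < B j) (hsum : ∑ i, A i = ∑ j, B j) (μ ρ : ℝ)
    (hμ : μ = (∑ j, b j) - (∑ k, a k) + ((p : ℝ) - (q : ℝ)) / 2)
    (hρ : ρ = (∏ k, A k ^ A k) * ∏ j, B j ^ (-B j)) :
    ∃ C T : ℝ, ∀ u : ℂ, 1 ≤ u.re → T ≤ ‖u‖ →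
      ‖(∏ k, Complex.Gamma (A k * u + a k)) / ∏ j, Complex.Gamma (B j * u + b j)‖ ≤
        Real.exp C * (ρ ^ u.re * ‖u‖ ^ (-μ)) := by
  obtain ⟨C1, T1, h1⟩ := prod_gamma_ref A a hA
  obtain ⟨C2, T2, h2⟩ := prod_gamma_ref B b hB
  refine ⟨C1 + C2, max T1 T2, fun u hu hT => ?_⟩
  obtain ⟨g1, g2⟩ := h1 u hu ((le_max_left _ _).trans hT)
  obtain ⟨g3, g4⟩ := h2 u hu ((le_max_right _ _).trans hT)
  have hun : 0 < ‖u‖ := lt_of_lt_of_le one_pos (hu.trans (Complex.re_le_norm u))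
  have hp1 : ∀ k, 0 < A k ^ A k := fun k => Real.rpow_pos_of_pos (hA k) _
  have hp2 : ∀ j, 0 < B j ^ (-B j) := fun j => Real.rpow_pos_of_pos (hB j) _
  have hρ0 : 0 < ρ := by
    rw [hρ]; exact mul_pos (Finset.prod_pos fun k _ => hp1 k) (Finset.prod_pos fun k _ => hp2 k)
  have hlρ : Real.log ρ = ∑ k, A k * Real.log (A k) - ∑ j, B j * Real.log (B j) := by
    rw [hρ, Real.log_mul (Finset.prod_pos fun k _ => hp1 k).ne' (Finset.prod_pos fun k _ => hp2 k).ne',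
      Real.log_prod (fun k _ => (hp1 k).ne'), Real.log_prod (fun k _ => (hp2 k).ne'), sub_eq_add_neg,
      ← Finset.sum_neg_distrib]
    congr 1
    · exact Finset.sum_congr rfl fun k _ => Real.log_rpow (hA k) _
    · refine Finset.sum_congr rfl fun k _ => ?_
      rw [Real.log_rpow (hB k)]; ring
  have hg : ∀ (m : ℕ) (D d : Fin m → ℝ), ∑ k, gref (D k) (d k) u =
      (∑ k, D k) * (u * Complex.log u).re + (∑ k, d k - m / 2) * Real.log ‖u‖ +
      (∑ k, D k * Real.log (D k) - ∑ k, D k) * u.re := by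
    intro m D d
    simp only [gref, Finset.sum_add_distrib, ← Finset.sum_mul, Finset.sum_sub_distrib,
      Finset.sum_const, Finset.card_univ, Fintype.card_fin, nsmul_eq_mul]
    ring
  have hdiff : ∑ k, gref (A k) (a k) u - ∑ k, gref (B k) (b k) u =
      Real.log ρ * u.re + Real.log ‖u‖ * (-μ) := by
    rw [hg, hg, hlρ, hsum, hμ]; ring
  rw [Real.rpow_def_of_pos hρ0, Real.rpow_def_of_pos hun, ← Real.exp_add, ← Real.exp_add,
    ← Real.log_le_iff_le_exp (norm_pos_iff.2 (div_ne_zero g1 g3)), norm_div,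
    Real.log_div (norm_ne_zero_iff.2 g1) (norm_ne_zero_iff.2 g3), ← hdiff]
  rw [abs_le] at g2 g4
  linarith [g2.2, g4.1]

lemma contour_aux (F : ℂ → ℂ) (c T D r μ : ℝ) (hF : ∀ s : ℂ, c ≤ s.re → DifferentiableAt ℂ F s)
    (hD : 0 ≤ D) (hr0 : 0 < r) (hr1 : r < 1) (hμ : 0 < μ)
    (h1 : ∀ s : ℂ, c ≤ s.re → T ≤ |s.im| → ‖F s‖ ≤ D * r ^ s.re * |s.im| ^ (-μ))
    (h2 : ∀ s : ℂ, c ≤ s.re → T ≤ s.re → ‖F s‖ ≤ D * r ^ s.re) :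
    Tendsto (fun R : ℝ => ∫ t in -R..R, F (c + t * Complex.I)) atTop (nhds 0) := by
  have hlr : Real.log r < 0 := Real.log_neg hr0 hr1
  have hderiv : ∀ y : ℝ, HasDerivAt (fun y => r ^ y / Real.log r) (r ^ y) y := by
    intro y
    have := (Real.hasStrictDerivAt_const_rpow hr0 y).hasDerivAt.div_const (Real.log r)
    rwa [mul_div_cancel_right₀ _ hlr.ne] at this
  have hcont : Continuous (fun y : ℝ => r ^ y) := Real.continuous_const_rpow hr0.ne'
  have hint : ∀ X : ℝ, ∫ y in c..X, r ^ y ≤ r ^ c / (-Real.log r) := by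
    intro X
    rw [intervalIntegral.integral_eq_sub_of_hasDerivAt (fun y _ => hderiv y)
      (hcont.intervalIntegrable _ _)]
    have : r ^ X / Real.log r ≤ 0 := div_nonpos_of_nonneg_of_nonpos (by positivity) hlr.le
    rw [div_neg]; linarith
  have hlim : Tendsto (fun R : ℝ => 2 * D * (r ^ c / (-Real.log r)) * R ^ (-μ)) atTop (nhds 0) := by
    simpa using (tendsto_rpow_neg_atTop hμ).const_mul (2 * D * (r ^ c / (-Real.log r)))
  refine squeeze_zero_norm' ?_ hlim
  filter_upwards [eventually_ge_atTop T, eventually_gt_atTop 0] with R hRT hR0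
  -- horizontal bound
  have hhor : ∀ (X y : ℝ), c ≤ X → |y| = R →
      ‖∫ t in c..X, F (t + y * Complex.I)‖ ≤ D * (r ^ c / (-Real.log r)) * R ^ (-μ) := by
    intro X y hX hy
    have : ‖∫ t in c..X, F (t + y * Complex.I)‖ ≤ ∫ t in c..X, D * R ^ (-μ) * r ^ t := by
      apply intervalIntegral.norm_integral_le_of_norm_le hX
      · refine Filter.Eventually.of_forall fun t ht => ?_
        have hb := h1 (t + y * Complex.I) (by simpa using ht.1.le) (by simpa [hy] using hRT)
        simp only [Complex.add_re, Complex.ofReal_re, Complex.mul_re, Complex.I_re, mul_zero,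
          Complex.ofReal_im, Complex.I_im, mul_one, sub_self, add_zero, Complex.add_im,
          Complex.mul_im, zero_add, hy] at hb
        calc _ ≤ _ := hb
          _ = _ := by ring
      · exact (continuous_const.mul hcont).intervalIntegrable _ _
    refine this.trans ?_
    rw [intervalIntegral.integral_const_mul]
    have := mul_le_mul_of_nonneg_left (hint X) (mul_nonneg hD (Real.rpow_nonneg hR0.le (-μ)))
    calc _ ≤ _ := this
      _ = _ := by ring
  -- vertical limit
  have hver : Tendsto (fun X : ℝ => D * r ^ X * (2 * R)) atTop (nhds 0) := by
    simpa using ((tendsto_rpow_atTop_of_base_lt_one r (by linarith) hr1).const_mul D).mul_const (2 * R)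
  have hmain : ∀ X : ℝ, c ≤ X → T ≤ X → ‖∫ t in -R..R, F (c + t * Complex.I)‖ ≤
      2 * D * (r ^ c / (-Real.log r)) * R ^ (-μ) + D * r ^ X * (2 * R) := by
    intro X hX hTX
    have hc := Complex.integral_boundary_rect_eq_zero_of_differentiableOn F
      ⟨c, -R⟩ ⟨X, R⟩ (by
        intro s hs
        rw [Complex.mem_reProdIm] at hs
        have := hs.1
        simp only [Set.uIcc_of_le hX] at this
        exact (hF s this.1).differentiableWithinAt)
    simp only [smul_eq_mul] at hc
    have hv : ‖∫ t in -R..R, F (X + t * Complex.I)‖ ≤ D * r ^ X * (2 * R) := by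
      have := intervalIntegral.norm_integral_le_of_norm_le_const (a := -R) (b := R)
        (f := fun t : ℝ => F (X + t * Complex.I)) (C := D * r ^ X) (by
          intro t _
          have := h2 (X + t * Complex.I) (by simpa using hX) (by simpa using hTX)
          simpa using this)
      rwa [show R - -R = 2 * R by ring, abs_of_pos (by linarith)] at this
    have ha := hhor X (-R) hX (by rw [abs_neg, abs_of_pos hR0])
    have hb := hhor X R hX (abs_of_pos hR0)
    have heq : Complex.I * ∫ t in -R..R, F (c + t * Complex.I) =
        (∫ t in c..X, F (t + (-R : ℝ) * Complex.I)) - (∫ t in c..X, F (t + R * Complex.I)) +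
        Complex.I * ∫ t in -R..R, F (X + t * Complex.I) := by
      linear_combination -hc
    have hn := congrArg norm heq
    rw [norm_mul, Complex.norm_I, one_mul] at hn
    rw [hn]
    refine (norm_add_le _ _).trans ?_
    rw [norm_mul, Complex.norm_I, one_mul]
    have := norm_sub_le (∫ t in c..X, F (t + (-R : ℝ) * Complex.I)) (∫ t in c..X, F (t + R * Complex.I))
    linarith
  have := ge_of_tendsto (b := ‖∫ t in -R..R, F (c + t * Complex.I)‖)
    (hver.const_add (2 * D * (r ^ c / (-Real.log r)) * R ^ (-μ)))
    (by filter_upwards [eventually_ge_atTop c, eventually_ge_atTop T] with X h h' using hmain X h h')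
  rwa [add_zero] at this

theorem stmt14 (p q : ℕ) (hp : 1 ≤ p) (hq : 1 ≤ q)
    (A : Fin p → ℝ) (B : Fin q → ℝ) (a : Fin p → ℝ) (b : Fin q → ℝ)
    (hA : ∀ k, 0 < A k) (hB : ∀ j, 0 < B j)
    (hsum : ∑ i, A i = ∑ j, B j)
    (hμ : 0 < (∑ j, b j) - (∑ k, a k) + ((p : ℝ) - (q : ℝ)) / 2)
    (ρ : ℝ) (hρ : ρ = (∏ k, A k ^ A k) * ∏ j, B j ^ (-B j))
    (c : ℝ) (hc : -(⨅ k, a k / A k) < c)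
    (x : ℝ) (hx : ρ < x) :
    Tendsto (fun R : ℝ => (((2 * Real.pi)⁻¹ : ℝ) : ℂ) *
      ∫ t in -R..R,
        (∏ k, Complex.Gamma ((A k : ℂ) * ((c : ℂ) + (t : ℂ) * Complex.I) + (a k : ℂ))) /
          (∏ j, Complex.Gamma ((B j : ℂ) * ((c : ℂ) + (t : ℂ) * Complex.I) + (b j : ℂ))) *
          (x : ℂ) ^ (-((c : ℂ) + (t : ℂ) * Complex.I)))
      atTop (nhds 0) := by
  have hρ0 : 0 < ρ := by
    rw [hρ]
    exact mul_pos (Finset.prod_pos fun k _ => Real.rpow_pos_of_pos (hA k) _)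
      (Finset.prod_pos fun k _ => Real.rpow_pos_of_pos (hB k) _)
  have hx0 : 0 < x := hρ0.trans hx
  have hxc : (x : ℂ) ≠ 0 := by exact_mod_cast hx0.ne'
  have hcA : ∀ k, 0 < A k * c + a k := by
    intro k
    have h1 : (⨅ k, a k / A k) ≤ a k / A k := ciInf_le (Set.finite_range _).bddBelow k
    have h2 : -c < a k / A k := by linarith
    rw [lt_div_iff₀ (hA k)] at h2
    linarith
  set μ := (∑ j, b j) - (∑ k, a k) + ((p : ℝ) - (q : ℝ)) / 2 with hμd
  have hμ' : μ = (∑ j, (b j + B j * (c - 1))) - (∑ k, (a k + A k * (c - 1))) +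
      ((p : ℝ) - (q : ℝ)) / 2 := by
    rw [Finset.sum_add_distrib, Finset.sum_add_distrib, ← Finset.sum_mul, ← Finset.sum_mul, hsum]; ring
  obtain ⟨C, T, hCT⟩ := ratio_bound A (fun k => a k + A k * (c - 1)) B
    (fun j => b j + B j * (c - 1)) hA hB hsum μ ρ hμ' hρ
  let F : ℂ → ℂ := fun s => (∏ k, Complex.Gamma ((A k : ℂ) * s + (a k : ℂ))) /
          (∏ j, Complex.Gamma ((B j : ℂ) * s + (b j : ℂ))) * (x : ℂ) ^ (-s)
  have hFd : ∀ s : ℂ, c ≤ s.re → DifferentiableAt ℂ F s := by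
    intro s hs
    have hd1 : DifferentiableAt ℂ (fun s : ℂ => ∏ k, Complex.Gamma ((A k : ℂ) * s + (a k : ℂ))) s := by
      refine DifferentiableAt.fun_finsetProd fun k _ => ?_
      refine DifferentiableAt.comp s (Complex.differentiableAt_Gamma _ ?_) (by fun_prop)
      intro m hm
      have h1 := congrArg Complex.re hm
      simp at h1
      have h2 := hcA k
      have h3 := mul_le_mul_of_nonneg_left hs (hA k).le
      have : (0 : ℝ) ≤ m := Nat.cast_nonneg m
      linarith
    have hd2 : DifferentiableAt ℂ
        (fun s : ℂ => ∏ j, (Complex.Gamma ((B j : ℂ) * s + (b j : ℂ)))⁻¹) s := by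
      refine DifferentiableAt.fun_finsetProd fun k _ => ?_
      exact DifferentiableAt.comp (g := fun w : ℂ => (Complex.Gamma w)⁻¹)
        (f := fun s : ℂ => (B k : ℂ) * s + (b k : ℂ)) s
        (Complex.differentiable_one_div_Gamma _) (by fun_prop)
    have hd3 : DifferentiableAt ℂ (fun s : ℂ => (x : ℂ) ^ (-s)) s :=
      (differentiableAt_id.neg).const_cpow (Or.inl hxc)
    have := (hd1.mul hd2).mul hd3
    refine this.congr_of_eventuallyEq (Eventually.of_forall fun w => ?_)
    simp [F, div_eq_mul_inv]
  have hb : ∀ s : ℂ, c ≤ s.re → T ≤ ‖s - (c - 1 : ℝ)‖ →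
      ‖F s‖ ≤ Real.exp C * ρ ^ (1 - c) * (ρ / x) ^ s.re * ‖s - (c - 1 : ℝ)‖ ^ (-μ) := by
    intro s hs hT
    have h := hCT (s - (c - 1 : ℝ)) (by simp; linarith) hT
    have e1 : ∀ k, (A k : ℂ) * (s - (c - 1 : ℝ)) + ((a k + A k * (c - 1) : ℝ) : ℂ) = A k * s + a k := by
      intro k; push_cast; ring
    have e2 : ∀ k, (B k : ℂ) * (s - (c - 1 : ℝ)) + ((b k + B k * (c - 1) : ℝ) : ℂ) = B k * s + b k := by
      intro k; push_cast; ring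
    simp only [e1, e2] at h
    have hre : (s - ((c - 1 : ℝ) : ℂ)).re = s.re + (1 - c) := by simp; ring
    rw [hre, Real.rpow_add hρ0] at h
    have hxn : ‖(x : ℂ) ^ (-s)‖ = (x ^ s.re)⁻¹ := by
      rw [Complex.norm_cpow_eq_rpow_re_of_pos hx0, Complex.neg_re, Real.rpow_neg hx0.le]
    simp only [F]
    rw [norm_mul, hxn, Real.div_rpow hρ0.le hx0.le]
    calc _ ≤ (Real.exp C * (ρ ^ s.re * ρ ^ (1 - c) * ‖s - ((c - 1 : ℝ) : ℂ)‖ ^ (-μ))) * (x ^ s.re)⁻¹ :=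
          mul_le_mul_of_nonneg_right h (by positivity)
      _ = _ := by ring
  have hlim := contour_aux F c (max (max T 1) (T + (c - 1))) (Real.exp C * ρ ^ (1 - c)) (ρ / x) μ hFd
    (by positivity) (by positivity) ((div_lt_one hx0).2 hx) hμ ?_ ?_
  · simpa [F] using hlim.const_mul ((((2 * Real.pi)⁻¹ : ℝ) : ℂ))
  · intro s hs hT
    have him : |s.im| ≤ ‖s - (c - 1 : ℝ)‖ := by
      have := Complex.abs_im_le_norm (s - (c - 1 : ℝ))
      simpa using this
    have hT1 : T ≤ |s.im| := ((le_max_left _ _).trans (le_max_left _ _)).trans hT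
    have hT2 : 1 ≤ |s.im| := ((le_max_right _ _).trans (le_max_left _ _)).trans hT
    refine (hb s hs (hT1.trans him)).trans ?_
    refine mul_le_mul_of_nonneg_left ?_ (by positivity)
    exact Real.rpow_le_rpow_of_nonpos (by linarith) him (by linarith)
  · intro s hs hT
    have hre : s.re - (c - 1) ≤ ‖s - (c - 1 : ℝ)‖ := by
      have := Complex.re_le_norm (s - (c - 1 : ℝ))
      simpa using this
    have hT1 : T + (c - 1) ≤ s.re := (le_max_right _ _).trans hT
    refine (hb s hs (by linarith)).trans ?_
    refine mul_le_of_le_one_right (by positivity) ?_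
    exact Real.rpow_le_one_of_one_le_of_nonpos (by linarith) (by linarith)
end

section
/- Let p, q ≥ 1, let A_1,…,A_p, B_1,…,B_q be strictly positive reals and a_1,…,a_p, b_1,…,b_q be reals with Σ_{i=1}^p A_i = Σ_{j=1}^q B_j and μ = Σ_{j=1}^q b_j − Σ_{k=1}^p a_k + (p−q)/2 > 0. Set ρ = ∏_{k=1}^p A_k^{A_k} · ∏_{j=1}^q B_j^{−B_j} and γ = −min_{1≤k≤p}(a_k/A_k). For c > γ and x > 0, x ≠ ρ, define H(x) = lim_{R→∞} (1/(2π)) ∫_{−R}^{R} [∏_{k=1}^p Γ(A_k(c+it)+a_k) / ∏_{j=1}^q Γ(B_j(c+it)+b_j)] · x^{−(c+it)} dt (a real number independent of c). Then for every complex s with Re s > γ, ∫_0^ρ H(x) x^{s−1} dx = ∏_{k=1}^p Γ(A_k s + a_k) / ∏_{j=1}^q Γ(B_j s + b_j). -/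
open MeasureTheory Filter

noncomputable def stGterm (z : ℂ) : ℂ := (z + 1 / 2) * (Complex.log (z + 1) - Complex.log z) - 1

noncomputable def stT (z : ℂ) : ℂ := (z - 1 / 2) * Complex.log z - z

/-- logarithm of a quotient in the right half plane -/
lemma st_log_sub {z w : ℂ} (hz : 0 < z.re) (hw : 0 < w.re) :
    Complex.log z - Complex.log w = Complex.log (z / w) := by
  have hz0 : z ≠ 0 := by rintro rfl; simp at hz
  have hw0 : w ≠ 0 := by rintro rfl; simp at hw
  have h1 := Complex.abs_arg_lt_pi_div_two_iff.2 (Or.inl hz)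
  have h2 := Complex.abs_arg_lt_pi_div_two_iff.2 (Or.inl hw)
  rw [abs_lt] at h1 h2
  have h3 : z / w = Complex.exp (Complex.log z - Complex.log w) := by
    rw [Complex.exp_sub, Complex.exp_log hz0, Complex.exp_log hw0]
  rw [h3, Complex.log_exp]
  · simp [Complex.log_im]; linarith
  · simp [Complex.log_im]; linarith

lemma stGterm_bound {z : ℂ} (hz : 0 < z.re) (h2 : 2 ≤ ‖z‖) : ‖stGterm z‖ ≤ 2 * (‖z‖ ^ 2)⁻¹ := by
  have hz0 : z ≠ 0 := by rintro rfl; simp at hz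
  have hl : Complex.log (z + 1) - Complex.log z = Complex.log (1 + z⁻¹) := by
    rw [st_log_sub (by simp; linarith) hz]
    congr 1; field_simp
  set v := z⁻¹ with hv
  have hvn : ‖v‖ = ‖z‖⁻¹ := norm_inv z
  have hv2 : ‖v‖ ≤ 1 / 2 := by
    rw [hvn, inv_le_comm₀ (by linarith) (by norm_num)]; norm_num; exact h2
  have hR := Complex.norm_log_sub_logTaylor_le 2 (z := v) (by linarith)
  have hT : Complex.logTaylor (2 + 1) v = v - v ^ 2 / 2 := by
    rw [Complex.logTaylor_succ, Complex.logTaylor_succ, Complex.logTaylor_succ,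
      Complex.logTaylor_zero]
    simp
    ring
  rw [hT] at hR
  set R := Complex.log (1 + v) - (v - v ^ 2 / 2) with hRd
  have key : stGterm z = - v ^ 2 / 4 + (z + 1 / 2) * R := by
    rw [stGterm, hl, hRd]
    have : z * v = 1 := by rw [hv]; field_simp
    linear_combination (1 - v / 2) * this
  have hinv : (1 - ‖v‖)⁻¹ ≤ 2 := by
    rw [inv_le_comm₀ (by linarith) (by norm_num)]; linarith
  have hR2 : ‖R‖ ≤ ‖v‖ ^ 3 * (2 / 3) := by
    refine hR.trans ?_
    norm_num
    have : 0 ≤ ‖v‖ ^ 3 := by positivity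
    nlinarith
  have hz12 : ‖z + 1 / 2‖ ≤ ‖z‖ + 1 / 2 := by
    refine (norm_add_le _ _).trans ?_
    norm_num
  have hzv : ‖z‖ * ‖v‖ = 1 := by rw [hvn]; field_simp
  calc ‖stGterm z‖ ≤ ‖v‖ ^ 2 / 4 + (‖z‖ + 1 / 2) * (‖v‖ ^ 3 * (2 / 3)) := by
        rw [key]
        refine (norm_add_le _ _).trans ?_
        rw [norm_mul]
        gcongr
        simp
    _ = ‖v‖ ^ 2 * (1 / 4 + 2 / 3 + ‖v‖ / 3) := by
        linear_combination (‖v‖ ^ 2 * (2 / 3)) * hzv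
    _ ≤ ‖v‖ ^ 2 * 2 := by
        gcongr
        linarith
    _ = 2 * (‖z‖ ^ 2)⁻¹ := by rw [hvn]; ring

lemma st_norm_add_nat {z : ℂ} (hz : 0 < z.re) (n : ℕ) : (‖z‖ + n) ^ 2 ≤ 2 * ‖z + n‖ ^ 2 := by
  have h1 : ‖z + n‖ ^ 2 = (z.re + n) ^ 2 + z.im ^ 2 := by
    rw [Complex.sq_norm, Complex.normSq_apply]; simp; ring
  have h2 : ‖z‖ ^ 2 = z.re ^ 2 + z.im ^ 2 := by
    rw [Complex.sq_norm, Complex.normSq_apply]; ring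
  have hn : (0 : ℝ) ≤ n := n.cast_nonneg
  nlinarith [sq_nonneg (‖z‖ - n), mul_nonneg hz.le hn]

lemma st_norm_add_nat' {z : ℂ} (hz : 0 < z.re) (n : ℕ) : ‖z‖ ≤ ‖z + n‖ := by
  have h1 : ‖z + n‖ ^ 2 = (z.re + n) ^ 2 + z.im ^ 2 := by
    rw [Complex.sq_norm, Complex.normSq_apply]; simp; ring
  have h2 : ‖z‖ ^ 2 = z.re ^ 2 + z.im ^ 2 := by
    rw [Complex.sq_norm, Complex.normSq_apply]; ring
  have hn : (0 : ℝ) ≤ n := n.cast_nonneg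
  apply le_of_sq_le_sq _ (norm_nonneg _)
  nlinarith [mul_nonneg hz.le hn]

lemma stGterm_bound' {z : ℂ} (hz : 0 < z.re) (h2 : 2 ≤ ‖z‖) (n : ℕ) :
    ‖stGterm (z + n)‖ ≤ 4 * (1 / (‖z‖ + n - 1) - 1 / (‖z‖ + (n + 1 : ℕ) - 1)) := by
  have hn : (0 : ℝ) ≤ n := n.cast_nonneg
  have h := stGterm_bound (z := z + n) (by simp; positivity) (h2.trans (st_norm_add_nat' hz n))
  refine h.trans ?_
  have h3 := st_norm_add_nat hz n
  have h4 : (‖z + n‖ ^ 2)⁻¹ ≤ 2 * ((‖z‖ + n) ^ 2)⁻¹ := by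
    rw [← div_eq_mul_inv, le_div_iff₀ (by positivity), inv_mul_le_iff₀]
    · linarith
    · have := h2.trans (st_norm_add_nat' hz n)
      positivity
  have h5 : ((‖z‖ + n) ^ 2)⁻¹ ≤ 1 / (‖z‖ + n - 1) - 1 / (‖z‖ + (n + 1 : ℕ) - 1) := by
    push_cast
    rw [show ‖z‖ + (n + 1) - 1 = ‖z‖ + n by ring]
    set r := ‖z‖ + n
    have hr : 2 ≤ r := by simp only [r]; linarith
    rw [div_sub_div _ _ (by linarith) (by linarith), ← one_div,
      div_le_div_iff₀ (by positivity) (by apply mul_pos <;> linarith)]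
    nlinarith
  linarith

lemma stGterm_hasSum {r : ℝ} (hr : 2 ≤ r) :
    HasSum (fun n : ℕ => 4 * (1 / (r + n - 1) - 1 / (r + (n + 1 : ℕ) - 1))) (4 * (1 / (r - 1))) := by
  apply HasSum.mul_left
  have : Tendsto (fun n : ℕ => 1 / (r + n - 1)) atTop (nhds 0) := by
    have h : Tendsto (fun n : ℕ => r + (n : ℝ) - 1) atTop atTop := by
      apply tendsto_atTop_mono (f := fun n : ℕ => (n : ℝ)) _ tendsto_natCast_atTop_atTop
      intro n; show (n : ℝ) ≤ r + n - 1; linarith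
    simpa [one_div] using! h.inv_tendsto_atTop
  rw [hasSum_iff_tendsto_nat_of_nonneg]
  · simp_rw [Finset.sum_range_sub']
    simpa using tendsto_const_nhds.sub this
  · intro n
    have hn : (0 : ℝ) ≤ n := n.cast_nonneg
    rw [sub_nonneg]
    push_cast
    apply one_div_le_one_div_of_le <;> linarith

lemma stJ_summable {z : ℂ} (hz : 0 < z.re) (h2 : 2 ≤ ‖z‖) :
    Summable (fun n : ℕ => stGterm (z + n)) :=
  Summable.of_norm_bounded (stGterm_hasSum h2).summable (stGterm_bound' hz h2)

lemma stJ_bound {z : ℂ} (hz : 0 < z.re) (h2 : 2 ≤ ‖z‖) :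
    ‖∑' n : ℕ, stGterm (z + n)‖ ≤ 8 / ‖z‖ := by
  refine (tsum_of_norm_bounded (stGterm_hasSum h2) (stGterm_bound' hz h2)).trans ?_
  rw [mul_one_div, div_le_div_iff₀ (by linarith) (by linarith)]
  linarith

lemma st_prod {z : ℂ} (hz : 0 < z.re) (N : ℕ) :
    ∏ n ∈ Finset.range N, (z + n) =
      Complex.exp (stT (z + N) - stT z - ∑ n ∈ Finset.range N, stGterm (z + n)) := by
  induction N with
  | zero => simp
  | succ N ih =>
    rw [Finset.prod_range_succ, Finset.sum_range_succ, ih]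
    have hN : z + N ≠ 0 := by
      intro h
      have := congrArg Complex.re h
      simp at this
      have hn : (0 : ℝ) ≤ N := N.cast_nonneg
      linarith
    nth_rewrite 2 [← Complex.exp_log hN]
    rw [← Complex.exp_add]
    congr 1
    simp only [stT, stGterm]
    push_cast
    ring

lemma st_bracket {z : ℂ} (hz : 0 < z.re) :
    Tendsto (fun N : ℕ => (N : ℂ) ^ z * (N.factorial : ℂ) * Complex.exp (-stT (z + (N + 1 : ℕ))))
      atTop (nhds ((Real.sqrt Real.pi * Real.sqrt 2 : ℝ) : ℂ)) := by
  have h1 : Tendsto (fun N : ℕ => ((Stirling.stirlingSeq N : ℝ) : ℂ)) atTop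
      (nhds ((Real.sqrt Real.pi : ℝ) : ℂ)) :=
    (Complex.continuous_ofReal.tendsto _).comp Stirling.tendsto_stirlingSeq_sqrt_pi
  have h2 : Tendsto (fun N : ℕ => (N : ℂ) * Complex.log (1 + (z + 1) / N)) atTop (nhds (z + 1)) := by
    apply Complex.tendsto_nat_mul_log_one_add_of_tendsto
    apply tendsto_nhds_of_eventually_eq
    filter_upwards [eventually_ne_atTop 0] with N hN
    field_simp
  have h3 : Tendsto (fun N : ℕ => Complex.log (1 + (z + 1) / N)) atTop (nhds 0) := by
    have : Tendsto (fun N : ℕ => 1 + (z + 1) / (N : ℂ)) atTop (nhds (1 + 0)) :=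
      tendsto_const_nhds.add (tendsto_const_div_atTop_nhds_zero_nat _)
    rw [add_zero] at this
    have h := this.clog (by simp)
    simpa using h
  have h4 : Tendsto (fun N : ℕ => Complex.exp (-((N : ℂ) * Complex.log (1 + (z + 1) / N) +
      (z + 1 / 2) * Complex.log (1 + (z + 1) / N)) + (z + 1))) atTop (nhds 1) := by
    have := ((h2.add (h3.const_mul (z + 1 / 2))).neg.add_const (z + 1)).cexp
    simpa using this
  have h5 := (h1.mul_const ((Real.sqrt 2 : ℝ) : ℂ)).mul h4
  rw [mul_one, ← Complex.ofReal_mul] at h5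
  refine h5.congr' ?_
  filter_upwards [eventually_gt_atTop 0] with N hN
  have hNr : (0 : ℝ) < N := by exact_mod_cast hN
  have hN0 : (N : ℂ) ≠ 0 := by exact_mod_cast hN.ne'
  have hl : Complex.log (1 + (z + 1) / N) = Complex.log (z + (N + 1 : ℕ)) - Complex.log N := by
    rw [st_log_sub (by simp; positivity) (by simpa using hN)]
    congr 1; push_cast; field_simp; ring
  have hst : (N.factorial : ℂ) = ((Stirling.stirlingSeq N : ℝ) : ℂ) * (Real.sqrt 2 : ℝ) *
      Complex.exp (1 / 2 * Complex.log N + N * Complex.log N - N) := by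
    have : (N.factorial : ℝ) = Stirling.stirlingSeq N * Real.sqrt 2 *
      Real.exp (1 / 2 * Real.log N + N * Real.log N - N) := by
      rw [Stirling.stirlingSeq, Real.exp_sub, Real.exp_add, mul_comm (N : ℝ) (Real.log N),
        mul_comm (1 / 2) (Real.log (N : ℝ)), Real.exp_mul, Real.exp_mul, Real.exp_log hNr,
        ← Real.sqrt_eq_rpow, Real.sqrt_mul (by norm_num), Real.rpow_natCast, div_pow, ← Real.exp_nat_mul, mul_one]
      field_simp
    have h := congrArg (fun x : ℝ => (x : ℂ)) this
    simpa [Complex.ofReal_exp, Complex.ofReal_log hNr.le] using h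
  rw [hst, Complex.cpow_def_of_ne_zero hN0, hl]
  have e : ∀ a b c d e : ℂ, Complex.exp a * (b * c * Complex.exp d) * Complex.exp e =
      b * c * Complex.exp (a + d + e) := by
    intro a b c d e; rw [Complex.exp_add, Complex.exp_add]; ring
  rw [e]
  congr 2
  simp only [stT]
  push_cast
  ring

/-- Stirling's formula in the right half plane. -/
lemma st_main {z : ℂ} (hz : 0 < z.re) (h2 : 2 ≤ ‖z‖) :
    Complex.Gamma z = ((Real.sqrt Real.pi * Real.sqrt 2 : ℝ) : ℂ) *
      Complex.exp (stT z + ∑' n : ℕ, stGterm (z + n)) := by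
  refine tendsto_nhds_unique (Complex.GammaSeq_tendsto_Gamma z) ?_
  have h1 := (stJ_summable hz h2).hasSum.tendsto_sum_nat.comp (tendsto_add_atTop_nat 1)
  have h3 := (st_bracket hz).mul (h1.const_add (stT z)).cexp
  refine h3.congr ?_
  intro N
  rw [Complex.GammaSeq, st_prod hz]
  simp only [Function.comp]
  rw [Complex.exp_sub, Complex.exp_sub, Complex.exp_neg, Complex.exp_add]
  field_simp


/-- `f w = κ exp (L w + O(1/w))` in the right half plane -/
def stAsy (κ : ℂ) (L f : ℂ → ℂ) : Prop :=
  ∃ C W : ℝ, 0 ≤ C ∧ 0 < W ∧ ∀ w : ℂ, 0 < w.re → W ≤ ‖w‖ →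
    ∃ E : ℂ, ‖E‖ ≤ C / ‖w‖ ∧ f w = κ * Complex.exp (L w + E)

lemma stAsy_mul {κ₁ κ₂ : ℂ} {L₁ L₂ f₁ f₂ : ℂ → ℂ} (h₁ : stAsy κ₁ L₁ f₁) (h₂ : stAsy κ₂ L₂ f₂) :
    stAsy (κ₁ * κ₂) (fun w => L₁ w + L₂ w) (fun w => f₁ w * f₂ w) := by
  obtain ⟨C₁, W₁, hC₁, hW₁, h₁⟩ := h₁
  obtain ⟨C₂, W₂, hC₂, hW₂, h₂⟩ := h₂
  refine ⟨C₁ + C₂, max W₁ W₂, by positivity, by positivity, fun w hw hww => ?_⟩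
  obtain ⟨E₁, hE₁, e₁⟩ := h₁ w hw ((le_max_left _ _).trans hww)
  obtain ⟨E₂, hE₂, e₂⟩ := h₂ w hw ((le_max_right _ _).trans hww)
  refine ⟨E₁ + E₂, ?_, ?_⟩
  · rw [add_div]; exact (norm_add_le _ _).trans (add_le_add hE₁ hE₂)
  · simp only [e₁, e₂, Complex.exp_add]; ring

lemma stAsy_div {κ₁ κ₂ : ℂ} {L₁ L₂ f₁ f₂ : ℂ → ℂ} (h₁ : stAsy κ₁ L₁ f₁) (h₂ : stAsy κ₂ L₂ f₂) :
    stAsy (κ₁ / κ₂) (fun w => L₁ w - L₂ w) (fun w => f₁ w / f₂ w) := by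
  obtain ⟨C₁, W₁, hC₁, hW₁, h₁⟩ := h₁
  obtain ⟨C₂, W₂, hC₂, hW₂, h₂⟩ := h₂
  refine ⟨C₁ + C₂, max W₁ W₂, by positivity, by positivity, fun w hw hww => ?_⟩
  obtain ⟨E₁, hE₁, e₁⟩ := h₁ w hw ((le_max_left _ _).trans hww)
  obtain ⟨E₂, hE₂, e₂⟩ := h₂ w hw ((le_max_right _ _).trans hww)
  refine ⟨E₁ - E₂, ?_, ?_⟩
  · rw [add_div]; exact (norm_sub_le _ _).trans (add_le_add hE₁ hE₂)
  · simp only [e₁, e₂]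
    rw [show L₁ w - L₂ w + (E₁ - E₂) = (L₁ w + E₁) - (L₂ w + E₂) by ring, Complex.exp_sub]
    rw [mul_div_mul_comm]

lemma stAsy_prod {ι : Type*} (s : Finset ι) (κ : ι → ℂ) (L f : ι → ℂ → ℂ)
    (h : ∀ i, stAsy (κ i) (L i) (f i)) :
    stAsy (∏ i ∈ s, κ i) (fun w => ∑ i ∈ s, L i w) (fun w => ∏ i ∈ s, f i w) := by
  classical
  induction s using Finset.induction_on with
  | empty => exact ⟨0, 1, le_rfl, one_pos, fun w _ _ => ⟨0, by simp, by simp⟩⟩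
  | insert i s hi ih =>
    simp only [Finset.prod_insert hi, Finset.sum_insert hi]
    exact stAsy_mul (h i) ih

noncomputable def stK : ℂ := ((Real.sqrt Real.pi * Real.sqrt 2 : ℝ) : ℂ)

lemma stAsy_Gamma_nonneg {A a : ℝ} (hA : 0 < A) (ha : 0 ≤ a) :
    stAsy stK (fun w => (A * w + a - 1 / 2) * ((Real.log A : ℝ) + Complex.log w) - A * w)
      (fun w => Complex.Gamma (A * w + a)) := by
  refine ⟨|a - 1 / 2| * (a / A) + a * (a / A) + |a - 1 / 2| * (a / A) + 8 / A, (2 + 2 * a) / A,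
    by positivity, by positivity, fun w hw hww => ?_⟩
  have hw0 : w ≠ 0 := by rintro rfl; simp at hw
  have hwn : 0 < ‖w‖ := norm_pos_iff.2 hw0
  have hA0 : (A : ℂ) ≠ 0 := by exact_mod_cast hA.ne'
  rw [div_le_iff₀ hA] at hww
  set u : ℂ := a / (A * w) with hu
  have hun : ‖u‖ = (a / A) / ‖w‖ := by
    rw [hu, norm_div, norm_mul, Complex.norm_real, Complex.norm_real, Real.norm_of_nonneg ha,
      Real.norm_of_nonneg hA.le, div_div]
  have hu2 : ‖u‖ ≤ 1 / 2 := by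
    rw [hun, div_div, div_le_div_iff₀ (by positivity) (by norm_num)]; linarith
  set z : ℂ := A * w + a with hz
  have hzre : 0 < z.re := by simp [hz]; positivity
  have hzn : A * ‖w‖ ≤ ‖z‖ := by
    have h1 : ‖z‖ ^ 2 = (A * w.re + a) ^ 2 + (A * w.im) ^ 2 := by
      rw [Complex.sq_norm, Complex.normSq_apply]; simp [hz]; ring
    have h2 : ‖w‖ ^ 2 = w.re ^ 2 + w.im ^ 2 := by
      rw [Complex.sq_norm, Complex.normSq_apply]; ring
    apply le_of_sq_le_sq _ (norm_nonneg _)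
    rw [mul_pow, h2, h1]
    nlinarith [mul_nonneg (mul_nonneg hA.le hw.le) ha]
  have hz2 : 2 ≤ ‖z‖ := by nlinarith
  have hlogAw : Complex.log (A * w) = (Real.log A : ℝ) + Complex.log w :=
    Complex.log_ofReal_mul hA hw0
  have hlog : Complex.log z = (Real.log A : ℝ) + Complex.log w + Complex.log (1 + u) := by
    have : Complex.log z - Complex.log (A * w) = Complex.log (1 + u) := by
      rw [st_log_sub hzre (by simp; positivity)]
      congr 1; rw [hz, hu]; field_simp
    rw [← hlogAw, ← this]; ring
  have hR := Complex.norm_log_one_add_sub_self_le (z := u) (by linarith)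
  set R := Complex.log (1 + u) - u with hRd
  have hR' : ‖R‖ ≤ ‖u‖ ^ 2 := by
    refine hR.trans ?_
    have hinv : (1 - ‖u‖)⁻¹ ≤ 2 := by
      rw [inv_le_comm₀ (by linarith) (by norm_num)]; linarith
    have : 0 ≤ ‖u‖ ^ 2 := by positivity
    nlinarith
  have hR'' : ‖R‖ ≤ ‖u‖ := by
    refine hR'.trans ?_
    nlinarith [norm_nonneg u]
  refine ⟨(z - 1 / 2) * Complex.log (1 + u) - a + ∑' n : ℕ, stGterm (z + n), ?_, ?_⟩
  · have e : (z - 1 / 2) * Complex.log (1 + u) - a = (a - 1 / 2 : ℝ) * u + A * w * R +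
        (a - 1 / 2 : ℝ) * R := by
      have : A * w * u = a := by rw [hu]; field_simp
      rw [show Complex.log (1 + u) = u + R by rw [hRd]; ring, hz]
      push_cast
      linear_combination this
    rw [e, add_div, add_div, add_div]
    refine (norm_add_le _ _).trans (add_le_add ((norm_add_le _ _).trans (add_le_add
      ((norm_add_le _ _).trans (add_le_add ?_ ?_)) ?_)) ?_)
    · rw [norm_mul, Complex.norm_real, hun, mul_div_assoc]; rfl
    · rw [norm_mul, norm_mul, Complex.norm_real, Real.norm_of_nonneg hA.le]
      calc A * ‖w‖ * ‖R‖ ≤ A * ‖w‖ * ‖u‖ ^ 2 := by gcongr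
        _ = a * (a / A) / ‖w‖ := by rw [hun]; field_simp
    · rw [norm_mul, Complex.norm_real]
      calc ‖a - 1 / 2‖ * ‖R‖ ≤ ‖a - 1 / 2‖ * ‖u‖ := by gcongr
        _ = _ := by rw [hun, mul_div_assoc]; rfl
    · refine (stJ_bound hzre hz2).trans ?_
      rw [div_div]
      gcongr
  · show Complex.Gamma z = _
    rw [st_main hzre hz2, stT, hlog, stK]
    congr 2
    rw [hz]; ring

lemma stAsy_Gamma_step {A a : ℝ} (hA : 0 < A)
    (h : stAsy stK (fun w => (A * w + (a + 1 : ℝ) - 1 / 2) * ((Real.log A : ℝ) + Complex.log w) - A * w)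
      (fun w => Complex.Gamma (A * w + (a + 1 : ℝ)))) :
    stAsy stK (fun w => (A * w + a - 1 / 2) * ((Real.log A : ℝ) + Complex.log w) - A * w)
      (fun w => Complex.Gamma (A * w + a)) := by
  obtain ⟨C, W, hC, hW, h⟩ := h
  refine ⟨C + 3 / 2 * (|a| / A), max W (2 * |a| / A), by positivity, by positivity, fun w hw hww => ?_⟩
  obtain ⟨E, hE, e⟩ := h w hw ((le_max_left _ _).trans hww)
  beta_reduce at e
  have hww := (le_max_right _ _).trans hww
  have hw0 : w ≠ 0 := by rintro rfl; simp at hw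
  have hwn : 0 < ‖w‖ := norm_pos_iff.2 hw0
  have hA0 : (A : ℂ) ≠ 0 := by exact_mod_cast hA.ne'
  rw [div_le_iff₀ hA] at hww
  set u : ℂ := a / (A * w) with hu
  have hun : ‖u‖ = (|a| / A) / ‖w‖ := by
    rw [hu, norm_div, norm_mul, Complex.norm_real, Complex.norm_real,
      Real.norm_of_nonneg hA.le, div_div]; rfl
  have hu2 : ‖u‖ ≤ 1 / 2 := by
    rw [hun, div_div, div_le_div_iff₀ (by positivity) (by norm_num)]; linarith
  have hu0 : 1 + u ≠ 0 := by
    intro h0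
    have : u = -1 := by linear_combination h0
    rw [this] at hu2
    norm_num at hu2
  have hz : (A : ℂ) * w + a = Complex.exp ((Real.log A : ℝ) + Complex.log w + Complex.log (1 + u)) := by
    rw [← Complex.log_ofReal_mul hA hw0, Complex.exp_add, Complex.exp_log (mul_ne_zero hA0 hw0),
      Complex.exp_log hu0, hu]
    field_simp
  have hz0 : (A : ℂ) * w + a ≠ 0 := by rw [hz]; exact Complex.exp_ne_zero _
  refine ⟨E - Complex.log (1 + u), ?_, ?_⟩
  · rw [add_div]
    refine (norm_sub_le _ _).trans (add_le_add hE ?_)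
    refine (Complex.norm_log_one_add_half_le_self hu2).trans ?_
    rw [hun, mul_div_assoc]
  · have h1 := Complex.Gamma_add_one _ hz0
    rw [show (A : ℂ) * w + a + 1 = A * w + (a + 1 : ℝ) by push_cast; ring, e] at h1
    show Complex.Gamma (A * w + a) = _
    rw [eq_div_of_mul_eq hz0 ((mul_comm _ _).trans h1.symm)]
    nth_rewrite 1 [hz]
    rw [mul_div_assoc, ← Complex.exp_sub]
    congr 2
    push_cast
    ring

lemma stAsy_Gamma {A : ℝ} (hA : 0 < A) (a : ℝ) :
    stAsy stK (fun w => (A * w + a - 1 / 2) * ((Real.log A : ℝ) + Complex.log w) - A * w)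
      (fun w => Complex.Gamma (A * w + a)) := by
  obtain ⟨n, hn⟩ := exists_nat_ge (-a)
  induction n generalizing a with
  | zero => exact stAsy_Gamma_nonneg hA (by simpa using hn)
  | succ n ih =>
    apply stAsy_Gamma_step hA
    apply ih
    push_cast at hn
    linarith


lemma stAsy_sub_bound {κ L₀ : ℂ} {μ : ℝ} {f : ℂ → ℂ}
    (h : stAsy κ (fun w => -μ * Complex.log w + L₀) f) :
    ∃ C₁ : ℂ, ∃ C W : ℝ, 0 ≤ C ∧ 0 < W ∧ ∀ w : ℂ, 0 < w.re → W ≤ ‖w‖ →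
      ‖f w - C₁ * w ^ (-(μ : ℂ))‖ ≤ C * ‖w‖ ^ (-(1 + μ)) := by
  obtain ⟨C, W, hC, hW, h⟩ := h
  refine ⟨κ * Complex.exp L₀, ‖κ * Complex.exp L₀‖ * (2 * C), max W C, by positivity, by positivity,
    fun w hw hww => ?_⟩
  obtain ⟨E, hE, e⟩ := h w hw ((le_max_left _ _).trans hww)
  have hw0 : w ≠ 0 := by rintro rfl; simp at hw
  have hwn : 0 < ‖w‖ := norm_pos_iff.2 hw0
  have hCw := (le_max_right _ _).trans hww
  have hE1 : ‖E‖ ≤ 1 := hE.trans (by rw [div_le_one hwn]; exact hCw)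
  have h2 := Complex.norm_exp_sub_one_le hE1
  have h3 : ‖w ^ (-(μ : ℂ))‖ = ‖w‖ ^ (-μ) := by
    have := Complex.norm_cpow_eq_rpow_re_of_pos hwn
    rw [Complex.norm_cpow_of_ne_zero hw0]
    simp
  have h4 : f w - κ * Complex.exp L₀ * w ^ (-(μ : ℂ)) =
      κ * Complex.exp L₀ * w ^ (-(μ : ℂ)) * (Complex.exp E - 1) := by
    rw [e, Complex.cpow_def_of_ne_zero hw0, Complex.exp_add, Complex.exp_add,
      mul_comm (Complex.log w)]
    ring
  rw [h4, norm_mul, norm_mul, h3, neg_add, Real.rpow_add hwn, Real.rpow_neg_one, mul_assoc, mul_assoc]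
  refine mul_le_mul_of_nonneg_left ?_ (norm_nonneg _)
  calc ‖w‖ ^ (-μ) * ‖Complex.exp E - 1‖ ≤ ‖w‖ ^ (-μ) * (2 * (C / ‖w‖)) := by
        gcongr; linarith
    _ = _ := by ring

/-- The quotient of Gamma functions, in the shifted variable, normalized. -/
lemma st_F_asymp (p q : ℕ) 
    (A : Fin p → ℝ) (B : Fin q → ℝ) (a : Fin p → ℝ) (b : Fin q → ℝ)
    (hA : ∀ k, 0 < A k) (hB : ∀ j, 0 < B j)
    (hsum : ∑ i, A i = ∑ j, B j) (ρ : ℝ) (hρ : ρ = (∏ k, A k ^ A k) * ∏ j, B j ^ (-B j))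
    (γ μ : ℝ) (hμ : μ = (∑ j, b j) - (∑ k, a k) + ((p : ℝ) - (q : ℝ)) / 2) :
    ∃ C₁ : ℂ, ∃ C W : ℝ, 0 ≤ C ∧ 0 < W ∧ ∀ w : ℂ, 0 < w.re → W ≤ ‖w‖ →
      ‖(∏ k, Complex.Gamma ((A k : ℂ) * (w + γ) + (a k : ℂ))) /
          (∏ j, Complex.Gamma ((B j : ℂ) * (w + γ) + (b j : ℂ))) *
          Complex.exp (-(w + γ) * (Real.log ρ : ℝ)) - C₁ * w ^ (-(μ : ℂ))‖ ≤
        C * ‖w‖ ^ (-(1 + μ)) := by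
  have hlogρ : Real.log ρ = ∑ k, A k * Real.log (A k) - ∑ j, B j * Real.log (B j) := by
    rw [hρ, Real.log_mul, Real.log_prod, Real.log_prod]
    · simp_rw [Real.log_rpow (hA _), Real.log_rpow (hB _), neg_mul, Finset.sum_neg_distrib]
      ring
    · intro j _; exact (Real.rpow_pos_of_pos (hB j) _).ne'
    · intro j _; exact (Real.rpow_pos_of_pos (hA j) _).ne'
    · exact Finset.prod_ne_zero_iff.2 fun j _ => (Real.rpow_pos_of_pos (hA j) _).ne'
    · exact Finset.prod_ne_zero_iff.2 fun j _ => (Real.rpow_pos_of_pos (hB j) _).ne'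
  have h1 := stAsy_prod Finset.univ _ _ _ (fun k => stAsy_Gamma (hA k) (a k + A k * γ))
  have h2 := stAsy_prod Finset.univ _ _ _ (fun k => stAsy_Gamma (hB k) (b k + B k * γ))
  have h0 : stAsy 1 (fun w => -(w + γ) * (Real.log ρ : ℝ))
      (fun w => Complex.exp (-(w + γ) * (Real.log ρ : ℝ))) :=
    ⟨0, 1, le_rfl, one_pos, fun w _ _ => ⟨0, by simp, by simp⟩⟩
  have h3 := stAsy_mul (stAsy_div h1 h2) h0
  set κ := (∏ i : Fin p, stK) / (∏ i : Fin q, stK) * 1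
  have hsum' : (∑ i, (A i : ℂ)) = ∑ j, (B j : ℂ) := by exact_mod_cast hsum
  have hμ' : (μ : ℂ) = (∑ j, (b j : ℂ)) - (∑ k, (a k : ℂ)) + ((p : ℂ) - q) / 2 := by
    rw [hμ]; push_cast; ring
  have hlogρ' : ((Real.log ρ : ℝ) : ℂ) = ∑ k, (A k : ℂ) * (Real.log (A k) : ℝ)
      - ∑ j, (B j : ℂ) * (Real.log (B j) : ℝ) := by
    rw [hlogρ]; push_cast; ring
  have key : ∀ (n : ℕ) (A a : Fin n → ℝ) (w : ℂ),
      ∑ i, (((A i : ℂ) * w + (a i + A i * γ : ℝ) - 1 / 2) * ((Real.log (A i) : ℝ) + Complex.log w)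
        - A i * w) = (w + γ) * (∑ k, (A k : ℂ) * (Real.log (A k) : ℝ)) +
        (w + γ) * Complex.log w * (∑ k, (A k : ℂ)) + Complex.log w * (∑ k, (a k : ℂ)) -
        n / 2 * Complex.log w - w * (∑ k, (A k : ℂ)) +
        ∑ i, (a i - 1 / 2 : ℂ) * (Real.log (A i) : ℝ) := by
    intro n A a w
    have : ∀ x : ℂ, (n : ℂ) / 2 * x = ∑ i : Fin n, x / 2 := by
      intro x; simp; ring
    rw [this]
    simp only [Finset.mul_sum, ← Finset.sum_add_distrib, ← Finset.sum_sub_distrib]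
    refine Finset.sum_congr rfl fun i _ => ?_
    push_cast
    ring
  have h4 := stAsy_sub_bound (κ := κ) (L₀ := ∑ i, (a i - 1 / 2 : ℂ) * (Real.log (A i) : ℝ) -
    ∑ i, (b i - 1 / 2 : ℂ) * (Real.log (B i) : ℝ)) (μ := μ) (by
      convert h3 using 2 with w
      rw [key, key, hlogρ', hμ', hsum']
      ring)
  obtain ⟨C₁, C, W, hC, hW, h5⟩ := h4
  refine ⟨C₁, C, W, hC, hW, fun w hw hww => ?_⟩
  have e : ∀ A a : ℝ, (A : ℂ) * (w + γ) + a = A * w + (a + A * γ : ℝ) := by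
    intro A a; push_cast; ring
  simp only [e]
  exact h5 w hw hww


lemma lp_bound {f : ℂ → ℂ} {μ C W : ℝ} (hμ : 0 < μ) (hf : DifferentiableOn ℂ f {w | 0 < w.re})
    (hC : 0 ≤ C) (hb : ∀ w : ℂ, 0 < w.re → W ≤ ‖w‖ → ‖f w‖ ≤ C * ‖w‖ ^ (-(1 + μ)))
    {σ₀ : ℝ} (hσ₀ : 0 < σ₀) :
    ∃ M : ℝ, 0 ≤ M ∧ ∀ w : ℂ, σ₀ ≤ w.re → ‖f w‖ ≤ M * (1 + ‖w.im‖ ^ 2) ^ (-(1 + μ) / 2) := by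
  have hcomp : IsCompact ({w : ℂ | σ₀ ≤ w.re} ∩ Metric.closedBall 0 W) :=
    (isCompact_closedBall _ _).inter_left (isClosed_le continuous_const Complex.continuous_re)
  have hcont : ContinuousOn f ({w : ℂ | σ₀ ≤ w.re} ∩ Metric.closedBall 0 W) :=
    hf.continuousOn.mono fun w hw => hσ₀.trans_le hw.1
  obtain ⟨D, hD⟩ := hcomp.exists_bound_of_continuousOn hcont
  set m : ℝ := min (σ₀ ^ 2) 1 with hm
  have hm0 : 0 < m := by positivity
  refine ⟨|D| * (1 + W ^ 2) ^ ((1 + μ) / 2) + C * m ^ (-(1 + μ) / 2), by positivity, fun w hw => ?_⟩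
  have hsq : ‖w‖ ^ 2 = w.re ^ 2 + w.im ^ 2 := by
    rw [Complex.sq_norm, Complex.normSq_apply]; ring
  have him : ‖w.im‖ ^ 2 = w.im ^ 2 := by simp
  rw [him]
  have hpos : 0 < (1 + w.im ^ 2) ^ (-(1 + μ) / 2) := by positivity
  rw [add_mul]
  rcases le_total ‖w‖ W with h | h
  · have h1 := hD w ⟨hw, by simpa using h⟩
    have h2 : 1 ≤ (1 + W ^ 2) ^ ((1 + μ) / 2) * (1 + w.im ^ 2) ^ (-(1 + μ) / 2) := by
      rw [neg_div, Real.rpow_neg (by positivity), ← div_eq_mul_inv, one_le_div (by positivity)]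
      apply Real.rpow_le_rpow (by positivity) _ (by positivity)
      nlinarith [norm_nonneg w]
    calc ‖f w‖ ≤ |D| * 1 := by rw [mul_one]; exact h1.trans (le_abs_self _)
      _ ≤ |D| * ((1 + W ^ 2) ^ ((1 + μ) / 2) * (1 + w.im ^ 2) ^ (-(1 + μ) / 2)) := by gcongr
      _ ≤ _ := by
        rw [← mul_assoc]
        have : 0 ≤ C * m ^ (-(1 + μ) / 2) * (1 + w.im ^ 2) ^ (-(1 + μ) / 2) := by positivity
        linarith
  · have h1 := hb w (hσ₀.trans_le hw) h
    have h2 : ‖w‖ ^ (-(1 + μ)) ≤ m ^ (-(1 + μ) / 2) * (1 + w.im ^ 2) ^ (-(1 + μ) / 2) := by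
      rw [← Real.mul_rpow (by positivity) (by positivity)]
      have : ‖w‖ ^ (-(1 + μ)) = (‖w‖ ^ 2) ^ (-(1 + μ) / 2) := by
        rw [← Real.rpow_natCast, ← Real.rpow_mul (norm_nonneg _)]
        congr 1; push_cast; ring
      rw [this]
      apply Real.rpow_le_rpow_of_nonpos (by positivity)
      · rw [hsq]
        have h3 : m ≤ σ₀ ^ 2 := min_le_left _ _
        have h4 : m ≤ 1 := min_le_right _ _
        nlinarith [sq_nonneg w.im]
      · linarith
    calc ‖f w‖ ≤ C * (m ^ (-(1 + μ) / 2) * (1 + w.im ^ 2) ^ (-(1 + μ) / 2)) := by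
          refine h1.trans ?_; gcongr
      _ ≤ _ := by
        rw [← mul_assoc]
        have : 0 ≤ |D| * (1 + W ^ 2) ^ ((1 + μ) / 2) * (1 + w.im ^ 2) ^ (-(1 + μ) / 2) := by positivity
        linarith

lemma lp_int_bracket {μ : ℝ} (hμ : 0 < μ) :
    Integrable (fun t : ℝ => (1 + ‖t‖ ^ 2) ^ (-(1 + μ) / 2)) :=
  integrable_rpow_neg_one_add_norm_sq (by simp; exact hμ)

/-- Integrals over vertical lines. -/
noncomputable def lpI (f : ℂ → ℂ) (σ u : ℝ) : ℂ :=
  ∫ t : ℝ, f (σ + t * Complex.I) * Complex.exp ((σ + t * Complex.I) * u)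

lemma lp_cont {f : ℂ → ℂ} (hf : DifferentiableOn ℂ f {w | 0 < w.re}) {σ : ℝ} (hσ : 0 < σ) :
    Continuous (fun t : ℝ => f (σ + t * Complex.I)) := by
  apply hf.continuousOn.comp_continuous (by fun_prop)
  intro t; simpa using hσ

lemma lp_norm_exp (σ t u : ℝ) :
    ‖Complex.exp ((σ + t * Complex.I) * u)‖ = Real.exp (σ * u) := by
  rw [Complex.norm_exp]; simp

lemma lp_integrable {f : ℂ → ℂ} {μ σ M : ℝ} (hμ : 0 < μ) (hf : DifferentiableOn ℂ f {w | 0 < w.re})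
    (hσ : 0 < σ) (hM : ∀ w : ℂ, σ ≤ w.re → ‖f w‖ ≤ M * (1 + ‖w.im‖ ^ 2) ^ (-(1 + μ) / 2)) :
    Integrable (fun t : ℝ => f (σ + t * Complex.I)) := by
  refine ((lp_int_bracket hμ).const_mul M).mono' (lp_cont hf hσ).aestronglyMeasurable ?_
  filter_upwards with t
  simpa using hM (σ + t * Complex.I) (by simp)

lemma lp_integrable' {f : ℂ → ℂ} {μ σ M : ℝ} (hμ : 0 < μ) (hf : DifferentiableOn ℂ f {w | 0 < w.re})
    (hσ : 0 < σ) (hM : ∀ w : ℂ, σ ≤ w.re → ‖f w‖ ≤ M * (1 + ‖w.im‖ ^ 2) ^ (-(1 + μ) / 2)) (u : ℝ) :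
    Integrable (fun t : ℝ => f (σ + t * Complex.I) * Complex.exp ((σ + t * Complex.I) * u)) := by
  refine (lp_integrable hμ hf hσ hM).mul_bdd (c := Real.exp (σ * u)) ?_ ?_
  · exact Continuous.aestronglyMeasurable (by fun_prop)
  · filter_upwards with t
    rw [lp_norm_exp]

lemma lpI_bound {f : ℂ → ℂ} {μ σ σ₀ M : ℝ} (hμ : 0 < μ)
    (hσ : σ₀ ≤ σ) (hM : ∀ w : ℂ, σ₀ ≤ w.re → ‖f w‖ ≤ M * (1 + ‖w.im‖ ^ 2) ^ (-(1 + μ) / 2)) (u : ℝ) :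
    ‖lpI f σ u‖ ≤ (M * ∫ t : ℝ, (1 + ‖t‖ ^ 2) ^ (-(1 + μ) / 2)) * Real.exp (σ * u) := by
  rw [lpI, ← integral_const_mul, ← integral_mul_const]
  apply norm_integral_le_of_norm_le (((lp_int_bracket hμ).const_mul M).mul_const _)
  filter_upwards with t
  rw [norm_mul, lp_norm_exp]
  gcongr
  simpa using hM (σ + t * Complex.I) (by simpa using hσ)

lemma lp_shift {f : ℂ → ℂ} {μ σ₁ σ₂ M : ℝ} (hμ : 0 < μ) (hf : DifferentiableOn ℂ f {w | 0 < w.re})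
    (hσ : 0 < σ₁) (h12 : σ₁ ≤ σ₂) (hM0 : 0 ≤ M)
    (hM : ∀ w : ℂ, σ₁ ≤ w.re → ‖f w‖ ≤ M * (1 + ‖w.im‖ ^ 2) ^ (-(1 + μ) / 2)) (u : ℝ) :
    lpI f σ₁ u = lpI f σ₂ u := by
  set G : ℂ → ℂ := fun w => f w * Complex.exp (w * u) with hG
  have hGd : DifferentiableOn ℂ G {w | 0 < w.re} := hf.mul (by fun_prop)
  have hrect : ∀ T : ℝ, (∫ x in σ₁..σ₂, G (x + (-T : ℝ) * Complex.I)) -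
      (∫ x in σ₁..σ₂, G (x + T * Complex.I)) + Complex.I • (∫ y in (-T)..T, G (σ₂ + y * Complex.I)) -
      Complex.I • (∫ y in (-T)..T, G (σ₁ + y * Complex.I)) = 0 := by
    intro T
    have := Complex.integral_boundary_rect_eq_zero_of_differentiableOn G ⟨σ₁, -T⟩ ⟨σ₂, T⟩
      (hGd.mono (by
        intro w hw
        rw [Complex.mem_reProdIm, Set.uIcc_of_le h12] at hw
        exact hσ.trans_le hw.1.1))
    simpa using! this
  set K := Real.exp (|σ₁ * u| + |σ₂ * u|)
  have hhor : ∀ ε : ℝ, (ε = 1 ∨ ε = -1) →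
      Tendsto (fun T : ℝ => ∫ x in σ₁..σ₂, G (x + (ε * T : ℝ) * Complex.I)) atTop (nhds 0) := by
    intro ε hε
    have hlim : Tendsto (fun T : ℝ => M * (1 + T ^ 2) ^ (-(1 + μ) / 2) * K * |σ₂ - σ₁|) atTop (nhds 0) := by
      have h1 : Tendsto (fun T : ℝ => 1 + T ^ 2) atTop atTop :=
        tendsto_atTop_add_const_left _ _ (tendsto_pow_atTop (by norm_num))
      have h2 := (tendsto_rpow_neg_atTop (y := (1 + μ) / 2) (by positivity)).comp h1
      have h3 := ((h2.const_mul M).mul_const K).mul_const |σ₂ - σ₁|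
      rw [show -(1 + μ) / 2 = -((1 + μ) / 2) by ring]
      simpa only [mul_zero, zero_mul] using! h3
    refine squeeze_zero_norm (fun T => ?_) hlim
    apply intervalIntegral.norm_integral_le_of_norm_le_const
    intro x hx
    rw [Set.uIoc_of_le h12] at hx
    simp only [hG, norm_mul]
    have h1 := hM (x + (ε * T : ℝ) * Complex.I) (by simpa using hx.1.le)
    have h2 : ‖((x + (ε * T : ℝ) * Complex.I : ℂ)).im‖ ^ 2 = T ^ 2 := by
      rcases hε with rfl | rfl <;> simp
    rw [h2] at h1
    refine mul_le_mul h1 ?_ (norm_nonneg _) (by positivity)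
    rw [lp_norm_exp]
    apply Real.exp_le_exp.2
    rcases le_total 0 u with h | h
    · have : x * u ≤ σ₂ * u := mul_le_mul_of_nonneg_right hx.2 h
      linarith [le_abs_self (σ₂ * u), abs_nonneg (σ₁ * u)]
    · have : x * u ≤ σ₁ * u := mul_le_mul_of_nonpos_right hx.1.le h
      linarith [le_abs_self (σ₁ * u), abs_nonneg (σ₂ * u)]
  have hv1 := intervalIntegral_tendsto_integral (lp_integrable' hμ hf hσ hM u)
    tendsto_neg_atTop_atBot tendsto_id
  have hv2 := intervalIntegral_tendsto_integral (lp_integrable' hμ hf (hσ.trans_le h12)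
    (fun w hw => hM w (h12.trans hw)) u) tendsto_neg_atTop_atBot tendsto_id
  have hlim := (((hhor (-1) (Or.inr rfl)).sub (hhor 1 (Or.inl rfl))).add (hv2.const_smul Complex.I)).sub
    (hv1.const_smul Complex.I)
  have hzero := tendsto_nhds_unique hlim ((tendsto_const_nhds (x := (0 : ℂ))).congr (fun T => by
    rw [← hrect T]; simp [hG]))
  have h3 : Complex.I * lpI f σ₂ u - Complex.I * lpI f σ₁ u = 0 := by
    simpa [lpI] using hzero
  have h4 : Complex.I * (lpI f σ₂ u - lpI f σ₁ u) = 0 := by rw [mul_sub]; exact h3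
  rcases mul_eq_zero.1 h4 with h | h
  · exact absurd h Complex.I_ne_zero
  · exact (sub_eq_zero.1 h).symm


lemma lp_shift' {f : ℂ → ℂ} {μ C W : ℝ} (hμ : 0 < μ) (hf : DifferentiableOn ℂ f {w | 0 < w.re})
    (hC : 0 ≤ C) (hb : ∀ w : ℂ, 0 < w.re → W ≤ ‖w‖ → ‖f w‖ ≤ C * ‖w‖ ^ (-(1 + μ)))
    {σ₁ σ₂ : ℝ} (h1 : 0 < σ₁) (h2 : 0 < σ₂) (u : ℝ) : lpI f σ₁ u = lpI f σ₂ u := by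
  rcases le_total σ₁ σ₂ with h | h
  · obtain ⟨M, hM0, hM⟩ := lp_bound hμ hf hC hb h1
    exact lp_shift hμ hf h1 h hM0 hM u
  · obtain ⟨M, hM0, hM⟩ := lp_bound hμ hf hC hb h2
    exact (lp_shift hμ hf h2 h hM0 hM u).symm

lemma lpI_cont {f : ℂ → ℂ} {μ C W : ℝ} (hμ : 0 < μ) (hf : DifferentiableOn ℂ f {w | 0 < w.re})
    (hC : 0 ≤ C) (hb : ∀ w : ℂ, 0 < w.re → W ≤ ‖w‖ → ‖f w‖ ≤ C * ‖w‖ ^ (-(1 + μ)))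
    {σ : ℝ} (h1 : 0 < σ) : Continuous (lpI f σ) := by
  obtain ⟨M, hM0, hM⟩ := lp_bound hμ hf hC hb h1
  have hfac : lpI f σ = fun u : ℝ => Complex.exp (σ * u) *
      ∫ t : ℝ, f (σ + t * Complex.I) * Complex.exp (t * u * Complex.I) := by
    ext u
    rw [lpI, ← integral_const_mul]
    congr 1; ext t
    rw [show ((σ : ℂ) + t * Complex.I) * u = σ * u + t * u * Complex.I by ring, Complex.exp_add]
    ring
  rw [hfac]
  refine Continuous.mul (by fun_prop) ?_
  refine continuous_of_dominated (bound := fun t : ℝ => ‖f (σ + t * Complex.I)‖) ?_ ?_ ?_ ?_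
  · intro u
    exact ((lp_cont hf h1).mul (by fun_prop)).aestronglyMeasurable
  · intro u
    filter_upwards with t
    rw [norm_mul, Complex.norm_exp]; simp
  · exact (lp_integrable hμ hf h1 hM).norm
  · filter_upwards with t
    fun_prop

lemma lp_main {f : ℂ → ℂ} {μ C W : ℝ} (hμ : 0 < μ) (hf : DifferentiableOn ℂ f {w | 0 < w.re})
    (hC : 0 ≤ C) (hb : ∀ w : ℂ, 0 < w.re → W ≤ ‖w‖ → ‖f w‖ ≤ C * ‖w‖ ^ (-(1 + μ))) :
    ∃ g : ℝ → ℂ, Continuous g ∧ (∀ u < 0, g u = 0) ∧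
      (∀ σ : ℝ, 0 < σ → Integrable (fun u : ℝ => g u * Complex.exp (-σ * u))) ∧
      ∀ w : ℂ, 0 < w.re → ∫ u : ℝ, g u * Complex.exp (-w * u) = f w := by
  set J : ℝ := ∫ t : ℝ, (1 + ‖t‖ ^ 2) ^ (-(1 + μ) / 2) with hJ
  have hgc : Continuous (lpI f 1) := lpI_cont hμ hf hC hb one_pos
  have hneg : ∀ u < 0, lpI f 1 u = 0 := by
    intro u hu
    obtain ⟨M, hM0, hM⟩ := lp_bound hμ hf hC hb one_pos
    have h1 : ∀ᶠ σ : ℝ in atTop, ‖lpI f 1 u‖ ≤ (M * J) * Real.exp (σ * u) := by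
      filter_upwards [eventually_ge_atTop 1] with σ hσ
      rw [lp_shift' hμ hf hC hb one_pos (one_pos.trans_le hσ)]
      exact lpI_bound hμ hσ hM u
    have h2 : Tendsto (fun σ : ℝ => (M * J) * Real.exp (σ * u)) atTop (nhds 0) := by
      have := (Real.tendsto_exp_atBot.comp (tendsto_id.atTop_mul_const_of_neg hu)).const_mul (M * J)
      simpa using! this
    have := ge_of_tendsto h2 h1
    simpa using this
  have hbd : ∀ σ : ℝ, 0 < σ → ∃ N : ℝ, ∀ u, ‖lpI f 1 u‖ ≤ N * Real.exp (σ * u) := by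
    intro σ hσ
    obtain ⟨M, hM0, hM⟩ := lp_bound hμ hf hC hb hσ
    refine ⟨M * J, fun u => ?_⟩
    rw [lp_shift' hμ hf hC hb one_pos hσ]
    exact lpI_bound hμ le_rfl hM u
  have hint : ∀ σ : ℝ, 0 < σ → Integrable (fun u : ℝ => lpI f 1 u * Complex.exp (-σ * u)) := by
    intro σ hσ
    obtain ⟨N, hN⟩ := hbd (σ / 2) (by positivity)
    have hi : Integrable ((Set.Ioi (0:ℝ)).indicator (fun u : ℝ => N * Real.exp (-(σ / 2) * u))) := by
      rw [integrable_indicator_iff measurableSet_Ioi]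
      exact (exp_neg_integrableOn_Ioi 0 (by positivity)).const_mul N
    refine hi.mono' (Continuous.aestronglyMeasurable (by fun_prop)) ?_
    filter_upwards [compl_mem_ae_iff.2 (measure_singleton (0:ℝ))] with u hu
    have hu : u ≠ 0 := hu
    rcases lt_or_gt_of_ne hu with h | h
    · rw [hneg u h]; simp [h.le]
    · rw [Set.indicator_of_mem (by exact h), norm_mul, Complex.norm_exp]
      have : ((-σ * u : ℂ)).re = -σ * u := by simp
      rw [this]
      calc _ ≤ N * Real.exp (σ / 2 * u) * Real.exp (-σ * u) := by gcongr; exact hN u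
        _ = _ := by rw [mul_assoc, ← Real.exp_add]; congr 2; ring
  refine ⟨fun u => ((2 * Real.pi)⁻¹ : ℝ) * lpI f 1 u, by fun_prop, fun u hu => by simp [hneg u hu], 
    fun σ hσ => by simpa [mul_assoc] using (hint σ hσ).const_mul (((2 * Real.pi)⁻¹ : ℝ) : ℂ), ?_⟩
  intro w hw
  set σ := w.re with hσ
  obtain ⟨M, hM0, hM⟩ := lp_bound hμ hf hC hb hw
  set φ : ℝ → ℂ := fun t => f (σ + (2 * Real.pi * t : ℝ) * Complex.I) with hφ
  have hφc : Continuous φ := (lp_cont hf hw).comp (by fun_prop : Continuous fun t : ℝ => 2 * Real.pi * t)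
  have hφi : Integrable φ := by
    have := (lp_integrable hμ hf hw hM).comp_mul_left' (R := 2 * Real.pi) (by positivity)
    exact this
  have hinv : ∀ u, FourierTransformInv.fourierInv φ u =
      ((2 * Real.pi)⁻¹ : ℝ) * lpI f 1 u * Complex.exp (-σ * u) := by
    intro u
    rw [Real.fourierInv_eq', lp_shift' hμ hf hC hb one_pos hw, lpI]
    have := Measure.integral_comp_mul_left (fun t : ℝ => f (σ + t * Complex.I) * Complex.exp ((σ + t * Complex.I) * u)) (2 * Real.pi)
    rw [abs_of_pos (by positivity)] at this
    rw [← Complex.real_smul, ← this, ← integral_mul_const]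
    congr 1; ext t
    rw [mul_assoc (f _), ← Complex.exp_add, smul_eq_mul, mul_comm]
    congr 2
    simp
    ring
  have hinvi : Integrable (FourierTransformInv.fourierInv φ) := by
    rw [show FourierTransformInv.fourierInv φ = _ from funext hinv]
    simpa [mul_assoc] using (hint σ hw).const_mul (((2 * Real.pi)⁻¹ : ℝ) : ℂ)
  have hfi : Integrable (FourierTransform.fourier φ) := by
    have := hinvi.comp_neg
    refine this.congr ?_
    filter_upwards with u
    rw [Real.fourierInv_eq_fourier_neg]; simp
  have key := congrFun (hφc.fourier_fourierInv_eq hφi hfi) (w.im / (2 * Real.pi))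
  rw [Real.fourier_real_eq_integral_exp_smul] at key
  have e1 : φ (w.im / (2 * Real.pi)) = f w := by
    simp only [hφ]
    congr 1
    rw [mul_div_cancel₀ _ (by positivity)]
    exact Complex.re_add_im w
  rw [e1] at key
  rw [← key]
  congr 1; ext u
  rw [hinv, smul_eq_mul, mul_comm (Complex.exp _), mul_assoc _ (Complex.exp _) (Complex.exp _), ← Complex.exp_add]
  congr 2
  have hp : (Real.pi : ℂ) ≠ 0 := by exact_mod_cast Real.pi_ne_zero
  nth_rw 1 [← Complex.re_add_im w]
  push_cast
  field_simp
  ring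


lemma pw_integrable {μ σ : ℝ} (hμ : 0 < μ) (hσ : 0 < σ) :
    IntegrableOn (fun u : ℝ => u ^ (μ - 1) * Real.exp (-(σ * u))) (Set.Ioi 0) := by
  have := integrableOn_rpow_mul_exp_neg_mul_rpow (s := μ - 1) (p := 1) (b := σ) (by linarith) zero_lt_one hσ
  refine this.congr_fun ?_ measurableSet_Ioi
  intro u hu
  simp

lemma pw_laplace {μ : ℝ} (hμ : 0 < μ) {w : ℂ} (hw : 0 < w.re) :
    ∫ u in Set.Ioi (0:ℝ), ((u ^ (μ - 1) : ℝ) : ℂ) * Complex.exp (-w * u) =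
      Complex.Gamma μ * w ^ (-(μ : ℂ)) := by
  set ν : Measure ℝ := (volume.restrict (Set.Ioi (0:ℝ))).withDensity
    (fun u => ENNReal.ofReal (u ^ (μ - 1))) with hν
  have hmeas : Measurable (fun u : ℝ => ENNReal.ofReal (u ^ (μ - 1))) := by fun_prop
  have hmgf : ∀ w : ℂ, ProbabilityTheory.complexMGF (fun u : ℝ => -u) ν w =
      ∫ u in Set.Ioi (0:ℝ), ((u ^ (μ - 1) : ℝ) : ℂ) * Complex.exp (-w * u) := by
    intro w
    rw [ProbabilityTheory.complexMGF, hν, integral_withDensity_eq_integral_toReal_smul hmeas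
      (by filter_upwards with u using ENNReal.ofReal_lt_top)]
    apply setIntegral_congr_fun measurableSet_Ioi
    intro u hu
    have hu : 0 < u := hu
    simp only
    rw [ENNReal.toReal_ofReal (by positivity), Complex.real_smul]
    congr 2; push_cast; ring
  have hset : Set.Ioi (0:ℝ) ⊆ ProbabilityTheory.integrableExpSet (fun u : ℝ => -u) ν := by
    intro σ hσ
    have hσ : 0 < σ := hσ
    show Integrable _ _
    rw [hν, integrable_withDensity_iff_integrable_smul' hmeas
      (by filter_upwards with u using ENNReal.ofReal_lt_top)]
    refine (pw_integrable hμ hσ).congr_fun ?_ measurableSet_Ioi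
    intro u hu
    have hu : 0 < u := hu
    simp only
    rw [ENNReal.toReal_ofReal (by positivity), smul_eq_mul]
    congr 2; ring
  have hset' := interior_maximal hset isOpen_Ioi
  have ha : AnalyticOnNhd ℂ (ProbabilityTheory.complexMGF (fun u : ℝ => -u) ν) {w | 0 < w.re} :=
    ProbabilityTheory.analyticOnNhd_complexMGF.mono (fun w hw => hset' hw)
  have hopen : IsOpen {w : ℂ | 0 < w.re} := isOpen_lt continuous_const Complex.continuous_re
  have hb : AnalyticOnNhd ℂ (fun w : ℂ => Complex.Gamma μ * w ^ (-(μ : ℂ))) {w | 0 < w.re} := by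
    apply DifferentiableOn.analyticOnNhd _ hopen
    intro w hw
    refine DifferentiableAt.differentiableWithinAt ?_
    refine DifferentiableAt.const_mul ?_ _
    exact differentiableAt_id.cpow_const (Or.inl hw)
  rw [← hmgf]
  have hconv : Convex ℝ {w : ℂ | 0 < w.re} := convex_halfSpace_re_gt 0
  refine ha.eqOn_of_preconnected_of_frequently_eq hb hconv.isPreconnected (z₀ := 1) (by simp) ?_ hw
  have h1 : Tendsto (fun n : ℕ => (((1 : ℝ) + 1 / ((n : ℝ) + 1) : ℝ) : ℂ)) atTop (nhdsWithin 1 {1}ᶜ) := by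
    apply tendsto_nhdsWithin_iff.2
    constructor
    · have := (tendsto_const_nhds (x := (1:ℝ))).add (tendsto_one_div_add_atTop_nhds_zero_nat (𝕜 := ℝ))
      have := (Complex.continuous_ofReal.tendsto _).comp this
      rw [add_zero, Complex.ofReal_one] at this
      exact this
    · filter_upwards with n
      simp only [Set.mem_compl_iff, Set.mem_singleton_iff]
      intro h
      have h : (1 : ℝ) + 1 / ((n : ℝ) + 1) = 1 := by exact_mod_cast h
      have : 0 < 1 / ((n : ℝ) + 1) := by positivity
      linarith
  refine h1.frequently (Frequently.of_forall fun n => ?_)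
  set r : ℝ := 1 + 1 / ((n : ℝ) + 1)
  have hr : 0 < r := by positivity
  rw [hmgf]
  have := Complex.integral_cpow_mul_exp_neg_mul_Ioi (a := μ) (r := r) (by simpa using hμ) hr
  rw [mul_comm, one_div, Complex.inv_cpow _ _ (by rw [Complex.arg_ofReal_of_nonneg hr.le]; exact Real.pi_pos.ne), ← Complex.cpow_neg] at this
  rw [← this]
  apply setIntegral_congr_fun measurableSet_Ioi
  intro u hu
  have hu : 0 < u := hu
  simp only
  rw [Complex.ofReal_cpow hu.le]
  push_cast
  rw [neg_mul]


open FourierTransform in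
lemma pv_gauss {f : ℝ → ℂ} (hf : Integrable f) {v : ℝ} (hv : ContinuousAt f v) :
    Tendsto (fun c : ℝ => ∫ w : ℝ, Complex.exp (-(c⁻¹ : ℝ) * (w:ℂ) ^ 2) *
      (Complex.exp (2 * Real.pi * v * w * Complex.I) * 𝓕 f w)) atTop (nhds (f v)) := by
  refine (Real.tendsto_integral_gaussian_smul' hf hv).congr' ?_
  filter_upwards [Ioi_mem_atTop 0] with c (hc : 0 < c)
  have J : Integrable (fun w : ℝ ↦ Complex.exp (- (c⁻¹ : ℂ) * ‖w‖ ^ 2 + 2 * Real.pi * Complex.I * (inner ℝ v w : ℝ))) :=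
      GaussianFourier.integrable_cexp_neg_mul_sq_norm_add (by simpa) _ _
  have h2 : (∫ w : ℝ, 𝓕 (fun w : ℝ ↦ Complex.exp (- (c⁻¹ : ℂ) * ‖w‖ ^ 2 + 2 * Real.pi * Complex.I * (inner ℝ v w : ℝ))) w • f w)
    = ∫ w : ℝ, Complex.exp (- (c⁻¹ : ℂ) * ‖w‖ ^ 2 + 2 * Real.pi * Complex.I * (inner ℝ v w : ℝ)) • 𝓕 f w := by
    simpa using! (VectorFourier.integral_fourierIntegral_smul_eq_flip (L := innerₗ ℝ)
      Real.continuous_fourierChar continuous_inner J hf)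
  have h3 : (∫ w : ℝ, Complex.exp (-(c⁻¹ : ℝ) * (w:ℂ) ^ 2) *
      (Complex.exp (2 * Real.pi * v * w * Complex.I) * 𝓕 f w)) = 
      ∫ w : ℝ, Complex.exp (- (c⁻¹ : ℂ) * ‖w‖ ^ 2 + 2 * Real.pi * Complex.I * (inner ℝ v w : ℝ)) • 𝓕 f w := by
    congr 1; ext w
    rw [smul_eq_mul, ← mul_assoc, ← Complex.exp_add]
    congr 2
    have : ((‖w‖ : ℝ) : ℂ) ^ 2 = (w : ℂ) ^ 2 := by
      rw [← Complex.ofReal_pow]; simp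
    rw [this]
    simp
    ring
  rw [h3, ← h2]
  congr with w
  rw [fourier_gaussian_innerProductSpace' (by simpa)]
  congr 2
  · simp
  · congr 1
    have hc' : (c : ℂ) ≠ 0 := by exact_mod_cast hc.ne'
    field_simp

/-- Abel summation: principal value limits are Gaussian limits. -/
lemma pv_abel {φ : ℝ → ℂ} (hφ : Continuous φ) {D : ℝ} (hD : ∀ t, ‖φ t‖ ≤ D) {L : ℂ}
    (hL : Tendsto (fun R : ℝ => ∫ t in -R..R, φ t) atTop (nhds L)) :
    Tendsto (fun n : ℝ => ∫ t : ℝ, Complex.exp (-(n⁻¹ : ℝ) * (t:ℂ) ^ 2) * φ t) atTop (nhds L) := by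
  set Φ : ℝ → ℂ := fun R => ∫ t in -R..R, φ t with hΦ
  have hderiv : ∀ R, HasDerivAt Φ (φ R + φ (-R)) R := by
    intro R
    have h1 : ∀ R, HasDerivAt (fun R => ∫ t in (0:ℝ)..R, φ t) (φ R) R := fun R =>
      intervalIntegral.integral_hasDerivAt_right (hφ.intervalIntegrable _ _)
        (hφ.stronglyMeasurableAtFilter _ _) hφ.continuousAt
    have h2 : HasDerivAt (fun R => ∫ t in (0:ℝ)..(-R), φ t) (-φ (-R)) R := by
      simpa using! (h1 (-R)).scomp R (hasDerivAt_neg R)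
    have h3 := (h1 R).sub h2
    rw [sub_neg_eq_add] at h3
    refine h3.congr_of_eventuallyEq ?_
    filter_upwards with x
    simp only [hΦ, Pi.sub_apply]
    rw [intervalIntegral.integral_interval_sub_left (hφ.intervalIntegrable _ _) (hφ.intervalIntegrable _ _)]
  have hΦc : Continuous Φ := continuous_iff_continuousAt.2 fun R => (hderiv R).continuousAt
  have hΦ0 : Φ 0 = 0 := by simp [hΦ]
  obtain ⟨N, hN⟩ : ∃ N, ∀ R, 0 ≤ R → ‖Φ R‖ ≤ N := by
    have h1 : ∀ᶠ R in atTop, ‖Φ R‖ < ‖L‖ + 1 := hL.norm.eventually_lt_const (by linarith)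
    obtain ⟨R₀, hR₀⟩ := eventually_atTop.1 h1
    obtain ⟨N₁, hN₁⟩ := isCompact_Icc.exists_bound_of_continuousOn (s := Set.Icc 0 R₀) hΦc.continuousOn
    refine ⟨max N₁ (‖L‖ + 1), fun R hR => ?_⟩
    rcases le_total R R₀ with h | h
    · exact (hN₁ R ⟨hR, h⟩).trans (le_max_left _ _)
    · exact (hR₀ R h).le.trans (le_max_right _ _)
  have hE : ∀ v : ℝ, Complex.exp (-(1:ℂ) * (v:ℂ) ^ 2) = ((Real.exp (-1 * v ^ 2) : ℝ) : ℂ) := by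
    intro v; push_cast; rfl
  have hmain : ∀ n : ℝ, 0 < n → ∫ t : ℝ, Complex.exp (-(n⁻¹ : ℝ) * (t:ℂ) ^ 2) * φ t =
      ∫ v in Set.Ioi (0:ℝ), (2 * (v * Complex.exp (-(1:ℂ) * (v:ℂ) ^ 2))) * Φ (√n * v) := by
    intro n hn
    have hni : 0 < n⁻¹ := by positivity
    have hEi : Integrable (fun t : ℝ => Complex.exp (-(n⁻¹ : ℝ) * (t:ℂ) ^ 2)) :=
      integrable_cexp_neg_mul_sq (by simpa using hn)
    have hi : Integrable (fun t : ℝ => Complex.exp (-(n⁻¹ : ℝ) * (t:ℂ) ^ 2) * φ t) :=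
      hEi.mul_bdd (c := D) hφ.aestronglyMeasurable (by filter_upwards with t using hD t)
    have hi' : Integrable (fun t : ℝ => Complex.exp (-(n⁻¹ : ℝ) * (t:ℂ) ^ 2) * φ (-t)) :=
      hEi.mul_bdd (c := D) (hφ.comp continuous_neg).aestronglyMeasurable
        (by filter_upwards with t using hD _)
    have hEn : ∀ t : ℝ, ‖Complex.exp (-(n⁻¹ : ℝ) * (t:ℂ) ^ 2)‖ = Real.exp (-n⁻¹ * t ^ 2) := by
      intro t
      rw [← Complex.ofReal_neg, ← Complex.ofReal_pow, ← Complex.ofReal_mul, ← Complex.ofReal_exp,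
        Complex.norm_real, Real.norm_of_nonneg (Real.exp_pos _).le]
    have hsplit : ∫ t : ℝ, Complex.exp (-(n⁻¹ : ℝ) * (t:ℂ) ^ 2) * φ t =
        ∫ t in Set.Ioi (0:ℝ), Complex.exp (-(n⁻¹ : ℝ) * (t:ℂ) ^ 2) * (φ t + φ (-t)) := by
      rw [← intervalIntegral.integral_Iic_add_Ioi (b := 0) hi.integrableOn hi.integrableOn]
      have h1 := integral_comp_neg_Ioi 0 (fun t : ℝ => Complex.exp (-(n⁻¹ : ℝ) * (t:ℂ) ^ 2) * φ t)
      rw [neg_zero] at h1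
      rw [← h1, ← integral_add (by simpa using! hi'.integrableOn (s := Set.Ioi 0)) hi.integrableOn]
      congr 1; ext t
      push_cast
      ring
    have hud : ∀ t : ℝ, HasDerivAt (fun t : ℝ => Complex.exp (-(n⁻¹ : ℝ) * (t:ℂ) ^ 2))
        (-(2 * (n⁻¹ : ℝ) * (t * Complex.exp (-(n⁻¹ : ℝ) * (t:ℂ) ^ 2)))) t := by
      intro t
      have h1 : HasDerivAt (fun z : ℂ => Complex.exp (-(n⁻¹ : ℝ) * z ^ 2))
          (Complex.exp (-(n⁻¹ : ℝ) * (t:ℂ) ^ 2) * (-(n⁻¹ : ℝ) * (2 * t))) t := by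
        have h0 := ((hasDerivAt_pow 2 (t:ℂ)).const_mul (-((n⁻¹ : ℝ):ℂ))).cexp
        simpa using! h0
      have h2 := h1.comp_ofReal
      convert! h2 using 1
      ring
    have hu'v : IntegrableOn (fun t : ℝ => (-(2 * ((n⁻¹ : ℝ) : ℂ) * (t * Complex.exp (-(n⁻¹ : ℝ) * (t:ℂ) ^ 2)))) * Φ t) (Set.Ioi 0) := by
      have h1 : IntegrableOn (fun t : ℝ => (-(2 * ((n⁻¹ : ℝ) : ℂ) * (t * Complex.exp (-(n⁻¹ : ℝ) * (t:ℂ) ^ 2))))) (Set.Ioi 0) :=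
        ((integrable_mul_cexp_neg_mul_sq (b := ((n⁻¹ : ℝ) : ℂ)) (by simpa using hn)).integrableOn.const_mul _).neg
      refine h1.mul_bdd (c := N) hΦc.aestronglyMeasurable ?_
      filter_upwards [ae_restrict_mem measurableSet_Ioi] with t ht
      exact hN t (le_of_lt ht)
    have huv' : IntegrableOn (fun t : ℝ => Complex.exp (-(n⁻¹ : ℝ) * (t:ℂ) ^ 2) * (φ t + φ (-t))) (Set.Ioi 0) := by
      refine (hi.add hi').integrableOn.congr_fun (fun t _ => ?_) measurableSet_Ioi
      simp [mul_add]
    have hz : Tendsto (fun t : ℝ => Complex.exp (-(n⁻¹ : ℝ) * (t:ℂ) ^ 2) * Φ t)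
        (nhdsWithin 0 (Set.Ioi 0)) (nhds 0) := by
      have : Continuous (fun t : ℝ => Complex.exp (-(n⁻¹ : ℝ) * (t:ℂ) ^ 2) * Φ t) := by fun_prop
      have h2 := (this.tendsto 0).mono_left (nhdsWithin_le_nhds (s := Set.Ioi 0))
      simpa [hΦ0] using h2
    have hinf : Tendsto (fun t : ℝ => Complex.exp (-(n⁻¹ : ℝ) * (t:ℂ) ^ 2) * Φ t) atTop (nhds 0) := by
      have h1 : Tendsto (fun t : ℝ => Complex.exp (-(n⁻¹ : ℝ) * (t:ℂ) ^ 2)) atTop (nhds 0) := by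
        rw [tendsto_zero_iff_norm_tendsto_zero]
        simp only [hEn]
        refine Real.tendsto_exp_atBot.comp ?_
        exact (tendsto_pow_atTop (by norm_num)).const_mul_atTop_of_neg (by linarith)
      simpa using h1.mul hL
    rw [hsplit, integral_Ioi_mul_deriv_eq_deriv_mul (fun t _ => hud t) (fun t _ => hderiv t)
      huv' hu'v hz hinf]
    have hsq : 0 < √n := Real.sqrt_pos.2 hn
    have hs := integral_comp_mul_left_Ioi' (fun t : ℝ => (-(2 * ((n⁻¹ : ℝ) : ℂ) * (t * Complex.exp (-(n⁻¹ : ℝ) * (t:ℂ) ^ 2)))) * Φ t) 0 hsq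
    rw [mul_zero] at hs
    rw [← hs, ← integral_smul, sub_zero, zero_sub, ← integral_neg]
    congr 1; ext v
    have hss : ((√n : ℝ) : ℂ) ^ 2 = n := by
      rw [← Complex.ofReal_pow, Real.sq_sqrt hn.le]
    have hn' : (n : ℂ) ≠ 0 := by exact_mod_cast hn.ne'
    have e1 : -((n⁻¹ : ℝ) : ℂ) * ((√n * v : ℝ) : ℂ) ^ 2 = -1 * (v:ℂ) ^ 2 := by
      push_cast
      rw [mul_pow, hss]
      field_simp
    rw [e1, Complex.real_smul]
    push_cast
    have e2 : ((√n : ℝ) : ℂ) * (n:ℂ)⁻¹ * (√n : ℝ) = 1 := by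
      rw [mul_right_comm, ← sq, hss, mul_inv_cancel₀ hn']
    linear_combination (2 * v * Complex.exp (-1 * (v:ℂ) ^ 2) * Φ (√n * v)) * e2
  have hlim : Tendsto (fun n : ℝ => ∫ v in Set.Ioi (0:ℝ), (2 * (v * Complex.exp (-(1:ℂ) * (v:ℂ) ^ 2))) * Φ (√n * v))
      atTop (nhds (∫ v in Set.Ioi (0:ℝ), (2 * (v * Complex.exp (-(1:ℂ) * (v:ℂ) ^ 2))) * L)) := by
    refine tendsto_integral_filter_of_dominated_convergence
      (fun v => 2 * (v * Real.exp (-1 * v ^ 2)) * N) ?_ ?_ ?_ ?_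
    · filter_upwards with n
      exact Continuous.aestronglyMeasurable (by fun_prop)
    · filter_upwards with n
      filter_upwards [ae_restrict_mem measurableSet_Ioi] with v hv
      have hv : 0 < v := hv
      rw [hE, norm_mul, norm_mul, norm_mul, Complex.norm_real, Complex.norm_real, Real.norm_of_nonneg hv.le,
        Real.norm_of_nonneg (Real.exp_pos _).le]
      have := hN (√n * v) (by positivity)
      simp only [Complex.norm_ofNat]
      gcongr
    · have := (integrable_mul_exp_neg_mul_sq (b := 1) one_pos).integrableOn (s := Set.Ioi 0)
      exact (this.const_mul 2).mul_const N
    · filter_upwards [ae_restrict_mem measurableSet_Ioi] with v hv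
      have hv : 0 < v := hv
      refine Tendsto.const_mul _ ?_
      exact hL.comp (Real.tendsto_sqrt_atTop.atTop_mul_const hv)
  have hval : (∫ v in Set.Ioi (0:ℝ), (2 * (v * Complex.exp (-(1:ℂ) * (v:ℂ) ^ 2))) * L) = L := by
    rw [integral_mul_const, integral_const_mul, integral_mul_cexp_neg_mul_sq (by simp)]
    norm_num
  rw [hval] at hlim
  refine hlim.congr' ?_
  filter_upwards [Ioi_mem_atTop 0] with n hn
  exact (hmain n hn).symm

/-- Principal value Fourier inversion (the limit, when it exists, is the value). -/
lemma pv_inversion {f : ℝ → ℂ} (hf : Integrable f) {v : ℝ} (hv : ContinuousAt f v) {L : ℂ}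
    (hL : Tendsto (fun R : ℝ => (((2 * Real.pi)⁻¹ : ℝ) : ℂ) * ∫ t in -R..R,
      (∫ u : ℝ, f u * Complex.exp (-(t * u * Complex.I))) * Complex.exp (t * v * Complex.I))
      atTop (nhds L)) : L = f v := by
  set φ : ℝ → ℂ := fun w => Complex.exp (2 * Real.pi * v * w * Complex.I) * FourierTransform.fourier f w with hφ
  have hg := pv_gauss hf hv
  have hfc : Continuous (FourierTransform.fourier f) := 
    VectorFourier.fourierIntegral_continuous Real.continuous_fourierChar continuous_inner hf
  have hφc : Continuous φ := by
    simp only [hφ]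
    fun_prop
  have hφb : ∀ t, ‖φ t‖ ≤ ∫ u, ‖f u‖ := by
    intro t
    rw [hφ, norm_mul, Complex.norm_exp]
    have := VectorFourier.norm_fourierIntegral_le_integral_norm Real.fourierChar volume (innerₗ ℝ) f t
    simpa using! this
  have hfou : ∀ t : ℝ, (∫ u : ℝ, f u * Complex.exp (-(t * u * Complex.I))) * Complex.exp (t * v * Complex.I) =
      φ (t / (2 * Real.pi)) := by
    intro t
    have hp : (Real.pi : ℂ) ≠ 0 := by exact_mod_cast Real.pi_ne_zero
    simp only [hφ]
    rw [Real.fourier_real_eq_integral_exp_smul, mul_comm]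
    congr 1
    · congr 1
      push_cast
      field_simp
    · congr 1; ext u
      rw [smul_eq_mul, mul_comm]
      congr 2
      push_cast
      field_simp
  have hL' : Tendsto (fun R : ℝ => ∫ t in -R..R, φ t) atTop (nhds L) := by
    have h1 := hL.comp (tendsto_id.const_mul_atTop (show (0:ℝ) < 2 * Real.pi by positivity))
    refine h1.congr fun R => ?_
    simp only [Function.comp, hfou, id]
    rw [intervalIntegral.integral_comp_div _ (by positivity), Complex.real_smul, ← mul_assoc,
      ← Complex.ofReal_mul, inv_mul_cancel₀ (by positivity), Complex.ofReal_one, one_mul, neg_div,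
      mul_div_cancel_left₀ _ (by positivity)]
  exact tendsto_nhds_unique (pv_abel hφc hφb hL') hg


lemma fin_kernel {F : ℂ → ℂ} {C₁ : ℂ} {μ C W : ℝ} (hμ : 0 < μ)
    (hF : DifferentiableOn ℂ F {w | 0 < w.re}) (hC : 0 ≤ C)
    (hb : ∀ w : ℂ, 0 < w.re → W ≤ ‖w‖ → ‖F w - C₁ * w ^ (-(μ : ℂ))‖ ≤ C * ‖w‖ ^ (-(1 + μ))) :
    ∃ K : ℝ → ℂ, (∀ u, 0 < u → ContinuousAt K u) ∧ (∀ u < 0, K u = 0) ∧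
      (∀ σ : ℝ, 0 < σ → Integrable (fun u : ℝ => K u * Complex.exp (-σ * u))) ∧
      ∀ w : ℂ, 0 < w.re → ∫ u : ℝ, K u * Complex.exp (-w * u) = F w := by
  have hfd : DifferentiableOn ℂ (fun w => F w - C₁ * w ^ (-(μ : ℂ))) {w | 0 < w.re} := by
    refine hF.sub ?_
    intro w hw
    refine DifferentiableAt.differentiableWithinAt ?_
    refine DifferentiableAt.const_mul ?_ _
    exact differentiableAt_id.cpow_const (Or.inl hw)
  obtain ⟨g, hgc, hg0, hgi, hgl⟩ := lp_main hμ hfd hC hb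
  have hΓ : Complex.Gamma μ ≠ 0 := by
    rw [Complex.Gamma_ofReal]; exact_mod_cast (Real.Gamma_pos_of_pos hμ).ne'
  set P : ℝ → ℂ := (Set.Ioi (0:ℝ)).indicator (fun u => (C₁ / Complex.Gamma μ) * ((u ^ (μ - 1) : ℝ) : ℂ)) with hP
  have hPm : ∀ w : ℂ, (fun u : ℝ => P u * Complex.exp (-w * u)) = (Set.Ioi (0:ℝ)).indicator
      (fun u : ℝ => (C₁ / Complex.Gamma μ) * (((u ^ (μ - 1) : ℝ) : ℂ) * Complex.exp (-w * u))) := by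
    intro w; ext u
    by_cases hu : u ∈ Set.Ioi (0:ℝ)
    · simp only [hP, Set.indicator_of_mem hu]; ring
    · simp only [hP, Set.indicator_of_notMem hu]; ring
  have hmeas : Measurable P := by
    refine Measurable.indicator ?_ measurableSet_Ioi
    fun_prop
  have hPi : ∀ w : ℂ, 0 < w.re → Integrable (fun u : ℝ => P u * Complex.exp (-w * u)) := by
    intro w hw
    rw [hPm, integrable_indicator_iff measurableSet_Ioi]
    refine Integrable.const_mul ?_ _
    refine Integrable.mono' (pw_integrable hμ hw) (Measurable.aestronglyMeasurable (by fun_prop)) ?_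
    filter_upwards [ae_restrict_mem measurableSet_Ioi] with u hu
    have hu : 0 < u := hu
    rw [norm_mul, Complex.norm_real, Real.norm_of_nonneg (by positivity), Complex.norm_exp]
    simp
  have hgi' : ∀ w : ℂ, 0 < w.re → Integrable (fun u : ℝ => g u * Complex.exp (-w * u)) := by
    intro w hw
    refine (hgi w.re hw).norm.mono' (Continuous.aestronglyMeasurable (by fun_prop)) ?_
    filter_upwards with u
    rw [norm_mul, norm_mul, Complex.norm_exp, Complex.norm_exp]
    simp
  refine ⟨fun u => P u + g u, ?_, ?_, ?_, ?_⟩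
  · intro u hu
    refine ContinuousAt.add ?_ hgc.continuousAt
    have h1 : ContinuousAt (fun u : ℝ => (C₁ / Complex.Gamma μ) * ((u ^ (μ - 1) : ℝ) : ℂ)) u := by
      refine continuousAt_const.mul ?_
      exact Complex.continuous_ofReal.continuousAt.comp (Real.continuousAt_rpow_const _ _ (Or.inl hu.ne'))
    refine h1.congr ?_
    filter_upwards [Ioi_mem_nhds hu] with v hv
    rw [hP, Set.indicator_of_mem hv]
  · intro u hu
    simp only [hg0 u hu, hP, add_zero]
    rw [Set.indicator_of_notMem]
    simp [hu.le]
  · intro σ hσ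
    have := (hPi σ (by simpa using hσ)).add (hgi σ hσ)
    refine this.congr ?_
    filter_upwards with u
    simp [add_mul]
  · intro w hw
    simp only [add_mul]
    rw [integral_add (hPi w hw) (hgi' w hw), hgl w hw, hPm, integral_indicator measurableSet_Ioi,
      integral_const_mul, pw_laplace hμ hw]
    field_simp
    ring

lemma fin_final {F : ℂ → ℂ} {C₁ : ℂ} {μ C W ρ γ c : ℝ} (hμ : 0 < μ) (hρ : 0 < ρ) (hc : γ < c)
    (hF : DifferentiableOn ℂ F {s | γ < s.re}) (hC : 0 ≤ C)
    (hb : ∀ w : ℂ, 0 < w.re → W ≤ ‖w‖ →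
      ‖F (w + γ) * Complex.exp (-(w + γ) * (Real.log ρ : ℝ)) - C₁ * w ^ (-(μ : ℂ))‖ ≤ C * ‖w‖ ^ (-(1 + μ)))
    (H : ℝ → ℂ)
    (hH : ∀ x, 0 < x → x ≠ ρ →
      Tendsto (fun R : ℝ => (((2 * Real.pi)⁻¹ : ℝ) : ℂ) *
        ∫ t in -R..R, F ((c : ℂ) + (t : ℂ) * Complex.I) * (x : ℂ) ^ (-((c : ℂ) + (t : ℂ) * Complex.I)))
        atTop (nhds (H x))) (s : ℂ) (hs : γ < s.re) :
    ∫ x in Set.Ioo (0 : ℝ) ρ, H x * (x : ℂ) ^ (s - 1) = F s := by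
  have hGd : DifferentiableOn ℂ (fun w => F (w + γ) * Complex.exp (-(w + γ) * (Real.log ρ : ℝ))) {w | 0 < w.re} := by
    refine DifferentiableOn.mul ?_ (by fun_prop)
    refine hF.comp (by fun_prop) ?_
    intro w hw
    have hw : 0 < w.re := hw
    simpa using hw
  obtain ⟨K, hKc, hK0, hKi, hKl⟩ := fin_kernel hμ hGd hC hb
  have hxlog : ∀ u : ℝ, ∀ z : ℂ, ((ρ * Real.exp (-u) : ℝ) : ℂ) ^ z = Complex.exp (z * (Real.log ρ - u)) := by
    intro u z
    rw [Complex.cpow_def_of_ne_zero (by exact_mod_cast (by positivity : ρ * Real.exp (-u) ≠ 0)),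
      ← Complex.ofReal_log (by positivity), Real.log_mul hρ.ne' (Real.exp_pos _).ne', Real.log_exp]
    congr 1; push_cast; ring
  have hHK : ∀ u : ℝ, 0 < u → H (ρ * Real.exp (-u)) = K u * Complex.exp (γ * u) := by
    intro v hv
    have h1 := hH (ρ * Real.exp (-v)) (by positivity) (by
      have : Real.exp (-v) < 1 := by simpa using hv
      have : ρ * Real.exp (-v) < ρ * 1 := by gcongr
      linarith)
    have hσ : 0 < c - γ := by linarith
    have h2 : ContinuousAt (fun u : ℝ => K u * Complex.exp (-(c - γ : ℝ) * u)) v :=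
      (hKc v hv).mul (Continuous.continuousAt (by fun_prop))
    have h3 := pv_inversion (hKi (c - γ) hσ) h2 (L := H (ρ * Real.exp (-v)) * Complex.exp (-(c * v))) ?_
    · have h4 : H (ρ * Real.exp (-v)) = (H (ρ * Real.exp (-v)) * Complex.exp (-(c * v))) * Complex.exp (c * v) := by
        rw [mul_assoc, ← Complex.exp_add]; simp
      rw [h4, h3]
      rw [mul_assoc, ← Complex.exp_add]
      congr 2; push_cast; ring
    · refine (h1.mul_const (Complex.exp (-(c * v)))).congr fun R => ?_
      rw [mul_assoc, ← intervalIntegral.integral_mul_const]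
      congr 2
      ext t
      have h5 := hKl ((c - γ : ℝ) + t * Complex.I) (by simpa using hσ)
      have h6 : (∫ u : ℝ, K u * Complex.exp (-(c - γ : ℝ) * u) * Complex.exp (-(t * u * Complex.I))) =
          F (c + t * Complex.I) * Complex.exp (-(c + t * Complex.I) * (Real.log ρ : ℝ)) := by
        have e : ((c - γ : ℝ) : ℂ) + t * Complex.I + γ = c + t * Complex.I := by push_cast; ring
        rw [e] at h5
        rw [← h5]
        congr 1; ext u
        rw [mul_assoc, ← Complex.exp_add]
        congr 2; ring
      rw [h6, hxlog, mul_assoc, mul_assoc, ← Complex.exp_add, ← Complex.exp_add]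
      congr 2; ring
  have himg : (fun u : ℝ => ρ * Real.exp (-u)) '' Set.Ioi 0 = Set.Ioo 0 ρ := by
    ext x
    constructor
    · rintro ⟨u, hu, rfl⟩
      have hu : 0 < u := hu
      have : Real.exp (-u) < 1 := by simpa using hu
      have : ρ * Real.exp (-u) < ρ * 1 := by gcongr
      exact ⟨by positivity, by linarith⟩
    · rintro ⟨h0, h1⟩
      refine ⟨-Real.log (x / ρ), ?_, ?_⟩
      · have : Real.log (x / ρ) < 0 := Real.log_neg (by positivity) ((div_lt_one hρ).2 h1)
        simpa using this
      · simp only [neg_neg]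
        rw [Real.exp_log (by positivity)]
        field_simp
  have hcv := integral_image_eq_integral_abs_deriv_smul (s := Set.Ioi (0:ℝ)) (f := fun u : ℝ => ρ * Real.exp (-u))
    (f' := fun u => -(ρ * Real.exp (-u))) measurableSet_Ioi (by
      intro u _
      refine HasDerivAt.hasDerivWithinAt ?_
      have := ((hasDerivAt_neg u).exp).const_mul ρ
      convert! this using 1
      ring) (by
      intro u _ v _ huv
      have := mul_left_cancel₀ hρ.ne' huv
      simpa using this) (fun x : ℝ => H x * (x : ℂ) ^ (s - 1))
  rw [himg] at hcv
  rw [hcv]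
  have hlap := hKl (s - γ) (by simpa using hs)
  rw [sub_add_cancel] at hlap
  have hsub : ∫ u : ℝ, K u * Complex.exp (-(s - γ) * u) = ∫ u in Set.Ioi (0:ℝ), K u * Complex.exp (-(s - γ) * u) := by
    rw [← integral_Ici_eq_integral_Ioi]
    symm
    apply setIntegral_eq_integral_of_forall_compl_eq_zero
    intro u hu
    rw [hK0 u (by simpa using hu), zero_mul]
  rw [hsub] at hlap
  have hfin : F s = Complex.exp (s * (Real.log ρ : ℝ)) * ∫ u in Set.Ioi (0:ℝ), K u * Complex.exp (-(s - γ) * u) := by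
    rw [hlap, mul_left_comm, ← Complex.exp_add]
    simp
  rw [hfin, ← integral_const_mul]
  refine setIntegral_congr_fun measurableSet_Ioi ?_
  intro u hu
  have hu : 0 < u := hu
  simp only
  have h1 : ((ρ * Real.exp (-u) : ℝ) : ℂ) = Complex.exp (Real.log ρ - u) := by
    have := hxlog u 1
    simpa using this
  rw [hHK u hu, hxlog, abs_neg, abs_of_pos (by positivity), Complex.real_smul, h1]
  rw [show Complex.exp (Real.log ρ - u) * (K u * Complex.exp (γ * u) * Complex.exp ((s - 1) * (Real.log ρ - u))) =
    K u * (Complex.exp (Real.log ρ - u) * Complex.exp (γ * u) * Complex.exp ((s - 1) * (Real.log ρ - u))) by ring,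
    mul_left_comm (Complex.exp (s * _)), ← Complex.exp_add, ← Complex.exp_add, ← Complex.exp_add]
  congr 2; ring


theorem stmt15 (p q : ℕ) (hp : 1 ≤ p) (hq : 1 ≤ q)
    (A : Fin p → ℝ) (B : Fin q → ℝ) (a : Fin p → ℝ) (b : Fin q → ℝ)
    (hA : ∀ k, 0 < A k) (hB : ∀ j, 0 < B j)
    (hsum : ∑ i, A i = ∑ j, B j)
    (hμ : 0 < (∑ j, b j) - (∑ k, a k) + ((p : ℝ) - (q : ℝ)) / 2)
    (ρ : ℝ) (hρ : ρ = (∏ k, A k ^ A k) * ∏ j, B j ^ (-B j))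
    (γ : ℝ) (hγ : γ = -(⨅ k, a k / A k))
    (c : ℝ) (hc : γ < c)
    (H : ℝ → ℝ)
    (hH : ∀ x, 0 < x → x ≠ ρ →
      Tendsto (fun R : ℝ => (((2 * Real.pi)⁻¹ : ℝ) : ℂ) *
        ∫ t in -R..R,
          (∏ k, Complex.Gamma ((A k : ℂ) * ((c : ℂ) + (t : ℂ) * Complex.I) + (a k : ℂ))) /
            (∏ j, Complex.Gamma ((B j : ℂ) * ((c : ℂ) + (t : ℂ) * Complex.I) + (b j : ℂ))) *
            (x : ℂ) ^ (-((c : ℂ) + (t : ℂ) * Complex.I)))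
        atTop (nhds ((H x : ℂ)))) :
    ∀ s : ℂ, γ < s.re →
      ∫ x in Set.Ioo (0 : ℝ) ρ, (H x : ℂ) * (x : ℂ) ^ (s - 1) =
        (∏ k, Complex.Gamma ((A k : ℂ) * s + (a k : ℂ))) /
          ∏ j, Complex.Gamma ((B j : ℂ) * s + (b j : ℂ)) := by
  have hne : Nonempty (Fin p) := ⟨⟨0, hp⟩⟩
  have hρ0 : 0 < ρ := by
    rw [hρ]
    refine mul_pos (Finset.prod_pos fun k _ => ?_) (Finset.prod_pos fun j _ => ?_)
    · exact Real.rpow_pos_of_pos (hA k) _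
    · exact Real.rpow_pos_of_pos (hB j) _
  obtain ⟨C₁, C, W, hC, hW, hb⟩ := st_F_asymp p q A B a b hA hB hsum ρ hρ γ _ rfl
  intro s hs
  refine fin_final (F := fun s => (∏ k, Complex.Gamma ((A k : ℂ) * s + (a k : ℂ))) /
          ∏ j, Complex.Gamma ((B j : ℂ) * s + (b j : ℂ))) (C₁ := C₁) hμ hρ0 hc ?_ hC hb
    (fun x => (H x : ℂ)) hH s hs
  have hnum : DifferentiableOn ℂ (fun s : ℂ => ∏ k, Complex.Gamma ((A k : ℂ) * s + (a k : ℂ))) {s | γ < s.re} := by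
    refine DifferentiableOn.fun_finsetProd fun k _ => ?_
    intro z hz
    have hz : γ < z.re := hz
    refine DifferentiableAt.differentiableWithinAt ?_
    have hpos : 0 < ((A k : ℂ) * z + (a k : ℂ)).re := by
      have h1 : (⨅ k, a k / A k) ≤ a k / A k := ciInf_le (Set.finite_range _).bddBelow k
      have h2 : -z.re < a k / A k := by linarith
      rw [lt_div_iff₀ (hA k)] at h2
      simp
      linarith
    have hG : DifferentiableAt ℂ Complex.Gamma ((A k : ℂ) * z + (a k : ℂ)) := by
      refine Complex.differentiableAt_Gamma _ fun m h => ?_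
      rw [h] at hpos
      simp at hpos
      linarith [(Nat.cast_nonneg m : (0:ℝ) ≤ m)]
    exact DifferentiableAt.comp z hG (by fun_prop)
  have hden : Differentiable ℂ (fun s : ℂ => ∏ j, (Complex.Gamma ((B j : ℂ) * s + (b j : ℂ)))⁻¹) := by
    refine Differentiable.fun_finsetProd fun j _ => ?_
    exact Complex.differentiable_one_div_Gamma.comp (by fun_prop)
  refine (hnum.mul hden.differentiableOn).congr fun z _ => ?_
  simp only [Pi.mul_apply, div_eq_mul_inv, Finset.prod_inv_distrib]
end
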